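/- Let J : (0,1) → ℝ be nonconstant and continuously differentiable, satisfying condition V_α for some 0 < α < 1/s, where s ∈ ℕ and s ≥ 3. Let n₁(J) = sup{n ∈ ℕ : Σ_{j=1}^{n}(J(j/(n+1)) − J̄_n)² = 0}, where J̄_n = (1/n)Σ_{j=1}^{n} J(j/(n+1)). Fix positive constants e, E and reals r, k with k > 2 and 0 < r < k. Then there exists a constant ℰ₅ > 0 depending only on e, E, r, k and J, α, s such that: for every n > n₁(J) and all reals e₁,…,e_n with Σ_{i=1}^{n}|e_i − ē|^r ≥ e·n and Σ_{i=1}^{n}|e_i − ē|^k ≤ E·n, the matrix A with entries a_{ij} = e_i·J(j/(n+1)) satisfies ‖ℱ_A − e_{1,A}‖ ≤ ℰ₅·(log n)²·n^{−1+((4/k)−1)⁺+((4/s)−1)⁺}. -/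

import Mathlib

open Finset MeasureTheory

/-- Density of the standard normal distribution. -/
noncomputable def gaussD (x : ℝ) : ℝ := (Real.sqrt (2 * Real.pi))⁻¹ * Real.exp (-(x ^ 2) / 2)

/-- Distribution function of the standard normal distribution. -/
noncomputable def gaussCDF (x : ℝ) : ℝ := ∫ t in Set.Iic x, gaussD t

section RankDefs

variable {m : ℕ}

/-- Row mean `a_{i·}`. -/
noncomputable def rowMean (A : Matrix (Fin m) (Fin m) ℝ) (i : Fin m) : ℝ := (∑ j, A i j) / (m : ℝ)

/-- Column mean `a_{·j}`. -/
noncomputable def colMean (A : Matrix (Fin m) (Fin m) ℝ) (j : Fin m) : ℝ := (∑ i, A i j) / (m : ℝ)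

/-- Grand mean `a_{··}`. -/
noncomputable def totMean (A : Matrix (Fin m) (Fin m) ℝ) : ℝ := (∑ i, ∑ j, A i j) / (m : ℝ) ^ 2

/-- Centered entries `a_{ij} − a_{i·} − a_{·j} + a_{··}`. -/
noncomputable def ctr (A : Matrix (Fin m) (Fin m) ℝ) (i j : Fin m) : ℝ :=
  A i j - rowMean A i - colMean A j + totMean A

/-- `σ_A²`. -/
noncomputable def sigma2 (A : Matrix (Fin m) (Fin m) ℝ) : ℝ :=
  (∑ i, ∑ j, ctr A i j ^ 2) / ((m : ℝ) - 1)

/-- `σ_A`. -/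
noncomputable def sdev (A : Matrix (Fin m) (Fin m) ℝ) : ℝ := Real.sqrt (sigma2 A)

/-- Standardized matrix `Â = (â_{ij})`. -/
noncomputable def hatM (A : Matrix (Fin m) (Fin m) ℝ) : Matrix (Fin m) (Fin m) ℝ :=
  fun i j => ctr A i j / sdev A

/-- `μ_A = n·a_{··}`. -/
noncomputable def muM (A : Matrix (Fin m) (Fin m) ℝ) : ℝ := (m : ℝ) * totMean A

/-- The linear rank statistic `T_A(π) = Σ_i a_{iπ(i)}`. -/
noncomputable def rankT (A : Matrix (Fin m) (Fin m) ℝ) (π : Equiv.Perm (Fin m)) : ℝ :=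
  ∑ i, A i (π i)

/-- Expectation with respect to the uniform distribution on permutations. -/
noncomputable def permExp (f : Equiv.Perm (Fin m) → ℝ) : ℝ :=
  (∑ π : Equiv.Perm (Fin m), f π) / (Nat.factorial m : ℝ)

/-- The standardized rank statistic `𝒯_A = (T_A − μ_A)/σ_A`. -/
noncomputable def rankTstd (A : Matrix (Fin m) (Fin m) ℝ) (π : Equiv.Perm (Fin m)) : ℝ :=
  (rankT A π - muM A) / sdev A

/-- `F_A`, the distribution function of `T_A`. -/
noncomputable def Fr (A : Matrix (Fin m) (Fin m) ℝ) (z : ℝ) : ℝ :=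
  permExp (fun π => if rankT A π ≤ z then (1 : ℝ) else 0)

/-- `ℱ_A`, the distribution function of `𝒯_A`. -/
noncomputable def Fstd (A : Matrix (Fin m) (Fin m) ℝ) (z : ℝ) : ℝ :=
  permExp (fun π => if rankTstd A π ≤ z then (1 : ℝ) else 0)

/-- `β_A = Σ_{i,j} |â_{ij}|³`. -/
noncomputable def betaM (A : Matrix (Fin m) (Fin m) ℝ) : ℝ := ∑ i, ∑ j, |hatM A i j| ^ 3

/-- `δ_A = Σ_{i,j} |â_{ij}|⁴`. -/
noncomputable def deltaM (A : Matrix (Fin m) (Fin m) ℝ) : ℝ := ∑ i, ∑ j, |hatM A i j| ^ 4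

/-- `η_A = Σ_{i,j} |â_{ij}|⁵`. -/
noncomputable def etaM (A : Matrix (Fin m) (Fin m) ℝ) : ℝ := ∑ i, ∑ j, |hatM A i j| ^ 5

/-- `D_A = (δ_A/n)^{1/2}`. -/
noncomputable def DM (A : Matrix (Fin m) (Fin m) ℝ) : ℝ := Real.sqrt (deltaM A / (m : ℝ))

/-- `E_A = (η_A/n)^{1/3}`. -/
noncomputable def EM (A : Matrix (Fin m) (Fin m) ℝ) : ℝ := (etaM A / (m : ℝ)) ^ ((1 : ℝ) / 3)

/-- `λ_{1,A} = (1/n)Σ_{i,j} â_{ij}³`. -/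
noncomputable def lam1 (A : Matrix (Fin m) (Fin m) ℝ) : ℝ := (∑ i, ∑ j, hatM A i j ^ 3) / (m : ℝ)

/-- `λ_{2,A}`. -/
noncomputable def lam2 (A : Matrix (Fin m) (Fin m) ℝ) : ℝ :=
  (∑ i, ∑ j, hatM A i j ^ 4) / (m : ℝ) + 3 / (m : ℝ)
    - 3 / (m : ℝ) ^ 2 *
        ∑ i, ∑ j, ∑ k, (hatM A i j ^ 2 * hatM A i k ^ 2 + hatM A i j ^ 2 * hatM A k j ^ 2)

/-- First-order Edgeworth expansion `e_{1,A}`. -/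
noncomputable def edge1 (A : Matrix (Fin m) (Fin m) ℝ) (x : ℝ) : ℝ :=
  gaussCDF x - gaussD x * (lam1 A / 6) * (x ^ 2 - 1)

/-- Second-order Edgeworth expansion `e_{2,A}`. -/
noncomputable def edge2 (A : Matrix (Fin m) (Fin m) ℝ) (x : ℝ) : ℝ :=
  gaussCDF x - gaussD x *
    (lam1 A / 6 * (x ^ 2 - 1) + lam2 A / 24 * (x ^ 3 - 3 * x)
      + lam1 A ^ 2 / 72 * (x ^ 5 - 10 * x ^ 3 + 15 * x))

/-- `k`-th iterated difference `Δ_y^k G`. -/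
noncomputable def Δiter (y : ℝ) (k : ℕ) (G : ℝ → ℝ) : ℝ → ℝ :=
  (fun (G : ℝ → ℝ) (z : ℝ) => G (z + y) - G z)^[k] G

/-- The interpolating polynomial `P_y^k(x; z, F)` of `F` at the points `z, z+y, …, z+ky`. -/
noncomputable def interp (y : ℝ) (k : ℕ) (z : ℝ) (F : ℝ → ℝ) (x : ℝ) : ℝ :=
  F z + ∑ s ∈ Finset.Icc 1 k,
    Δiter y s F z * ∏ i ∈ Finset.Icc 1 s, (x - z - ((i : ℝ) - 1) * y) / ((i : ℝ) * y)

end RankDefs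

/-- Condition `V_α`: `|J'(t)| ≤ Γ (t(1−t))^{−1−α}` on `(0,1)` for some `Γ > 0`. -/
def condV (J : ℝ → ℝ) (α : ℝ) : Prop :=
  ∃ Γ : ℝ, 0 < Γ ∧ ∀ t ∈ Set.Ioo (0 : ℝ) 1, |deriv J t| ≤ Γ * (t * (1 - t)) ^ (-1 - α)

/-- `n₁(J)`, the largest `n` for which the approximating scores
`J(j/(n+1))`, `j = 1, …, n`, are all equal. -/
noncomputable def nOne (J : ℝ → ℝ) : ℕ :=
  sSup {n : ℕ | ∑ j ∈ Finset.Icc 1 n,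
    (J ((j : ℝ) / ((n : ℝ) + 1))
      - (∑ j' ∈ Finset.Icc 1 n, J ((j' : ℝ) / ((n : ℝ) + 1))) / (n : ℝ)) ^ 2 = 0}

/-!
The characteristic function `f` of the standardized statistic is compared with the Fourier transform
of its Edgeworth expansion by Esseen's smoothing method, with a Gaussian kernel.

At low frequencies, exchanging the images of two random indices shows that `f` solves
`f' + t f + i l t² f / 2 = 0` up to an error governed by the fourth moments, and so does the
transform of the expansion; a Gronwall argument compares them. At frequencies up to `n`, many
disjoint pairs of indices with distinct coefficients can have their images exchanged independently.
This bounds `f` by the mean of a product of cosines, each of which loses a fixed factor because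
`J` is nonconstant, so that `f` is at most `exp (-γ min (t²) n)`.

Finally, integrating `V_α` gives `J = O(t^(-α) + (1 - t)^(-α))`, so the scores have bounded `s`-th
moments. Their fourth moments, and those of the coefficients, then grow at most like the powers of
`n` in the bound.
-/

/-! ### The standard normal distribution -/

section StandardGaussian

open ProbabilityTheory

lemma gaussD_eq_gaussianPDFReal : gaussD = gaussianPDFReal 0 1 := by
  ext x
  simp [gaussD, gaussianPDFReal]

lemma continuous_gaussD : Continuous gaussD := by
  unfold gaussD
  fun_prop

lemma gaussD_pos (x : ℝ) : 0 < gaussD x := by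
  unfold gaussD
  positivity

lemma gaussD_neg (x : ℝ) : gaussD (-x) = gaussD x := by
  simp [gaussD]

lemma integrable_gaussD : Integrable gaussD :=
  gaussD_eq_gaussianPDFReal ▸ integrable_gaussianPDFReal 0 1

lemma hasDerivAt_gaussD (x : ℝ) : HasDerivAt gaussD (-(x * gaussD x)) x := by
  have h : HasDerivAt (fun x : ℝ => -(x ^ 2) / 2) (-x) x :=
    (((hasDerivAt_pow 2 x).neg).div_const 2).congr_deriv (by simp; ring)
  exact ((h.exp).const_mul _).congr_deriv (by unfold gaussD; ring)

lemma gaussCDF_eq_cdf : gaussCDF = cdf (gaussianReal 0 1) := by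
  ext x
  have hnonneg : 0 ≤ ∫ t in Set.Iic x, gaussD t := integral_nonneg fun t => (gaussD_pos t).le
  rw [cdf_eq_real, measureReal_def, gaussianReal_apply_eq_integral 0 one_ne_zero,
    ← gaussD_eq_gaussianPDFReal, ENNReal.toReal_ofReal hnonneg, gaussCDF]

lemma monotone_gaussCDF : Monotone gaussCDF :=
  gaussCDF_eq_cdf ▸ monotone_cdf _

lemma gaussCDF_nonneg (x : ℝ) : 0 ≤ gaussCDF x :=
  gaussCDF_eq_cdf ▸ cdf_nonneg _ x

lemma gaussCDF_le_one (x : ℝ) : gaussCDF x ≤ 1 :=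
  gaussCDF_eq_cdf ▸ cdf_le_one _ x

lemma gaussCDF_neg (x : ℝ) : gaussCDF (-x) = 1 - gaussCDF x := by
  have hreflect : gaussCDF (-x) = ∫ t in Set.Ioi x, gaussD t := by
    simpa [gaussCDF, gaussD_neg] using integral_comp_neg_Iic (-x) gaussD
  have htotal : gaussCDF x + ∫ t in Set.Ioi x, gaussD t = 1 := by
    rw [gaussCDF, intervalIntegral.integral_Iic_add_Ioi integrable_gaussD.integrableOn
      integrable_gaussD.integrableOn, gaussD_eq_gaussianPDFReal,
      integral_gaussianPDFReal_eq_one 0 one_ne_zero]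
  linarith

lemma gaussCDF_zero : gaussCDF 0 = 1 / 2 := by
  have h := gaussCDF_neg 0
  rw [neg_zero] at h
  linarith

lemma hasDerivAt_gaussCDF (x : ℝ) : HasDerivAt gaussCDF (gaussD x) x := by
  have h : gaussCDF = fun b => gaussCDF 0 + ∫ t in (0 : ℝ)..b, gaussD t := by
    funext b
    rw [← intervalIntegral.integral_Iic_sub_Iic integrable_gaussD.integrableOn
      integrable_gaussD.integrableOn]
    simp only [gaussCDF]
    ring
  rw [h]
  exact (intervalIntegral.integral_hasDerivAt_right (continuous_gaussD.intervalIntegrable _ _)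
    (continuous_gaussD.stronglyMeasurableAtFilter _ _) continuous_gaussD.continuousAt).const_add _

lemma continuous_gaussCDF : Continuous gaussCDF :=
  continuous_iff_continuousAt.2 fun x => (hasDerivAt_gaussCDF x).continuousAt

lemma one_sub_gaussCDF_le {a : ℝ} (ha : 0 ≤ a) : 1 - gaussCDF a ≤ Real.exp (-a ^ 2 / 2) := by
  have hchernoff := measure_ge_le_exp_mul_mgf (μ := gaussianReal 0 1) (X := id) a ha
    (integrable_exp_mul_gaussianReal a)
  have htail : 1 - gaussCDF a ≤ (gaussianReal 0 1).real {x | a ≤ id x} := by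
    rw [gaussCDF_eq_cdf, cdf_eq_real, ← probReal_compl_eq_one_sub measurableSet_Iic,
      Set.compl_Iic]
    exact measureReal_mono fun x (hx : a < x) => hx.le
  refine htail.trans (hchernoff.trans_eq ?_)
  rw [mgf_id_gaussianReal, ← Real.exp_add]
  congr 1
  push_cast
  ring

lemma gaussD_mul_le {x B c : ℝ} (hB : B ≤ c * (1 + x ^ 2 / 2 + x ^ 4 / 8)) (hc : 0 ≤ c) :
    gaussD x * B ≤ c := by
  have hnorm : (Real.sqrt (2 * Real.pi))⁻¹ ≤ 1 :=
    inv_le_one_of_one_le₀ (Real.one_le_sqrt.2 (by nlinarith [Real.pi_gt_three]))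
  have htaylor : 1 + x ^ 2 / 2 + x ^ 4 / 8 ≤ Real.exp (x ^ 2 / 2) := by
    have h := Real.quadratic_le_exp_of_nonneg (show (0 : ℝ) ≤ x ^ 2 / 2 by positivity)
    linarith
  calc gaussD x * B ≤ gaussD x * (c * Real.exp (x ^ 2 / 2)) := by
        have := (gaussD_pos x).le
        gcongr
        exact hB.trans (by gcongr)
    _ = (Real.sqrt (2 * Real.pi))⁻¹ * c := by
        have h : Real.exp (-(x ^ 2) / 2) * Real.exp (x ^ 2 / 2) = 1 := by
          rw [← Real.exp_add, ← Real.exp_zero]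
          congr 1
          ring
        rw [gaussD]
        linear_combination (Real.sqrt (2 * Real.pi))⁻¹ * c * h
    _ ≤ c := mul_le_of_le_one_left hc hnorm

end StandardGaussian

section GaussianFourier

open ProbabilityTheory

lemma hasDerivAt_integral_mul_comp_mul {g k k' : ℝ → ℝ} {C : ℝ}
    (hk : ∀ x, HasDerivAt k (k' x) x) (hk' : ∀ x, |k' x| ≤ C)
    (hg : ∀ x, Integrable fun t => g t * k (t * x)) (htg : Integrable fun t => t * g t) (x₀ : ℝ) :
    HasDerivAt (fun x => ∫ t, g t * k (t * x)) (∫ t, t * g t * k' (t * x₀)) x₀ := by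
  have hmeas : Measurable k' := by
    rw [← funext fun x => (hk x).deriv]
    exact measurable_deriv k
  refine (hasDerivAt_integral_of_dominated_loc_of_deriv_le (s := Set.univ) Filter.univ_mem
    (bound := fun t => ‖t * g t‖ * C) (F' := fun x t => t * g t * k' (t * x))
    (Filter.Eventually.of_forall fun x => (hg x).aestronglyMeasurable) (hg x₀)
    (htg.aestronglyMeasurable.mul (hmeas.comp (by fun_prop)).aestronglyMeasurable)
    (Filter.Eventually.of_forall fun t x _ => ?_) (htg.norm.mul_const C)
    (Filter.Eventually.of_forall fun t x _ => ?_)).2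
  · rw [norm_mul]
    exact mul_le_mul_of_nonneg_left (hk' _) (norm_nonneg _)
  · have hlin : HasDerivAt (fun x : ℝ => t * x) t x := by
      simpa using (hasDerivAt_id x).const_mul t
    exact (((hk (t * x)).comp x hlin).const_mul (g t)).congr_deriv (by ring)

lemma integrable_mul_of_abs_le {g h : ℝ → ℝ} {C : ℝ} (hg : Integrable g) (hh : Measurable h)
    (hC : ∀ t, |h t| ≤ C) : Integrable fun t => g t * h t :=
  hg.mul_bdd hh.aestronglyMeasurable (Filter.Eventually.of_forall hC)

variable {τ : ℝ}

lemma exp_neg_sq_half_eq (τ : ℝ) :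
    (fun t : ℝ => Real.exp (-(τ * t) ^ 2 / 2)) = fun t => Real.exp (-(τ ^ 2 / 2) * t ^ 2) := by
  ext t
  congr 1
  ring

lemma integrable_exp_neg_sq_half (hτ : 0 < τ) :
    Integrable fun t : ℝ => Real.exp (-(τ * t) ^ 2 / 2) := by
  rw [exp_neg_sq_half_eq]
  exact integrable_exp_neg_mul_sq (by positivity)

lemma integrable_mul_exp_neg_sq_half (hτ : 0 < τ) :
    Integrable fun t : ℝ => t * Real.exp (-(τ * t) ^ 2 / 2) := by
  simp only [congrFun (exp_neg_sq_half_eq τ)]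
  exact integrable_mul_exp_neg_mul_sq (by positivity)

lemma integrable_sq_mul_exp_neg_sq_half (hτ : 0 < τ) :
    Integrable fun t : ℝ => t * (t * Real.exp (-(τ * t) ^ 2 / 2)) := by
  have h := integrable_rpow_mul_exp_neg_mul_sq (b := τ ^ 2 / 2) (s := 2) (by positivity)
    (by norm_num)
  simp only [congrFun (exp_neg_sq_half_eq τ), ← mul_assoc, ← sq]
  simpa using h

lemma abs_sin_mul_div_le (t x : ℝ) : |Real.sin (t * x) / t| ≤ |x| := by
  rcases eq_or_ne t 0 with rfl | ht
  · simp
  · rw [abs_div, div_le_iff₀ (abs_pos.2 ht), mul_comm |x|, ← abs_mul]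
    exact Real.abs_sin_le_abs

lemma integrable_gaussian_mul_sin_div (hτ : 0 < τ) (x : ℝ) :
    Integrable fun t : ℝ => Real.exp (-(τ * t) ^ 2 / 2) * (Real.sin (t * x) / t) :=
  integrable_mul_of_abs_le (integrable_exp_neg_sq_half hτ) (by fun_prop)
    (abs_sin_mul_div_le · x)

lemma integral_gaussD_mul_cos (x : ℝ) :
    ∫ t, gaussD t * Real.cos (t * x) = Real.exp (-x ^ 2 / 2) := by
  have hchar := charFun_gaussianReal (μ := 0) (v := 1) x
  rw [charFun_apply_real, integral_gaussianReal_eq_integral_smul one_ne_zero,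
    ← gaussD_eq_gaussianPDFReal] at hchar
  have hintegrable : Integrable fun t : ℝ => gaussD t • Complex.exp (x * t * Complex.I) := by
    refine integrable_gaussD.smul_bdd (C := 1) (by fun_prop)
      (Filter.Eventually.of_forall fun t => ?_)
    rw [← Complex.ofReal_mul, Complex.norm_exp_ofReal_mul_I]
  have hre : ∀ t : ℝ, (gaussD t • Complex.exp (x * t * Complex.I)).re =
      gaussD t * Real.cos (t * x) := fun t => by
    rw [Complex.smul_re, ← Complex.ofReal_mul, Complex.exp_ofReal_mul_I_re, mul_comm x,
      smul_eq_mul]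
  have hright : (Complex.exp (x * ((0 : ℝ) : ℂ) * Complex.I - ((1 : NNReal) : ℝ) * x ^ 2 / 2)).re =
      Real.exp (-x ^ 2 / 2) := by
    rw [← Complex.exp_ofReal_re]
    congr 2
    push_cast
    ring
  have h := integral_re hintegrable
  simp only [RCLike.re_eq_complex_re, hre, hchar] at h
  rw [h, ← hright]

lemma integral_gaussian_mul_cos (hτ : 0 < τ) (x : ℝ) :
    ∫ t, Real.exp (-(τ * t) ^ 2 / 2) * Real.cos (t * x) =
      2 * Real.pi * (gaussD (x / τ) / τ) := by
  have hsqrt := Real.mul_self_sqrt (show (0 : ℝ) ≤ 2 * Real.pi by positivity)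
  have hpoint : ∀ t, Real.exp (-(τ * t) ^ 2 / 2) * Real.cos (t * x) =
      Real.sqrt (2 * Real.pi) * (gaussD (τ * t) * Real.cos (τ * t * (x / τ))) := by
    intro t
    rw [show τ * t * (x / τ) = t * x by field_simp, gaussD]
    field_simp
  simp only [hpoint]
  rw [integral_const_mul, Measure.integral_comp_mul_left fun t => gaussD t * Real.cos (t * (x / τ)),
    integral_gaussD_mul_cos, abs_of_pos (inv_pos.2 hτ), smul_eq_mul, gaussD]
  nth_rw 2 [← hsqrt]
  field_simp

lemma gaussCDF_div_eq_integral_sin (hτ : 0 < τ) (x : ℝ) :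
    gaussCDF (x / τ) = 1 / 2 + (2 * Real.pi)⁻¹ *
      ∫ t : ℝ, Real.exp (-(τ * t) ^ 2 / 2) * (Real.sin (t * x) / t) := by
  have hcomm : ∀ x t : ℝ, Real.exp (-(τ * t) ^ 2 / 2) * (Real.sin (t * x) / t) =
      Real.exp (-(τ * t) ^ 2 / 2) / t * Real.sin (t * x) := fun x t => by ring
  have hcancel : (fun t : ℝ => t * (Real.exp (-(τ * t) ^ 2 / 2) / t)) =ᵐ[volume]
      fun t => Real.exp (-(τ * t) ^ 2 / 2) := by
    filter_upwards [volume.ae_ne 0] with t ht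
    field_simp
  have hsinc : ∀ x₀, HasDerivAt
      (fun x => ∫ t : ℝ, Real.exp (-(τ * t) ^ 2 / 2) * (Real.sin (t * x) / t))
      (2 * Real.pi * (gaussD (x₀ / τ) / τ)) x₀ := by
    intro x₀
    simp only [hcomm]
    refine (hasDerivAt_integral_mul_comp_mul Real.hasDerivAt_sin Real.abs_cos_le_one
      (fun x => ?_) ((integrable_exp_neg_sq_half hτ).congr hcancel.symm) x₀).congr_deriv ?_
    · simpa only [hcomm] using integrable_gaussian_mul_sin_div hτ x
    · rw [← integral_gaussian_mul_cos hτ]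
      exact integral_congr_ae (hcancel.mul (ae_eq_refl _))
  have hzero : ∀ x₀, HasDerivAt (fun x => gaussCDF (x / τ) - (2 * Real.pi)⁻¹ *
      ∫ t : ℝ, Real.exp (-(τ * t) ^ 2 / 2) * (Real.sin (t * x) / t)) 0 x₀ := by
    intro x₀
    refine (((hasDerivAt_gaussCDF (x₀ / τ)).comp x₀ ((hasDerivAt_id x₀).div_const τ)).sub
      ((hsinc x₀).const_mul _)).congr_deriv ?_
    have := Real.pi_pos
    field_simp
    ring
  have hconst := is_const_of_deriv_eq_zero (fun x => (hzero x).differentiableAt)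
    (fun x => (hzero x).deriv) x 0
  simp only [zero_div, gaussCDF_zero, mul_zero, Real.sin_zero, integral_zero, sub_zero] at hconst
  linarith

/-- The second Hermite polynomial `x² − 1` times the standard normal density: the profile of the
first Edgeworth correction, equal to the third derivative of `gaussCDF`. -/
noncomputable def gaussHermite (x : ℝ) : ℝ := gaussD x * (x ^ 2 - 1)

lemma integral_gaussian_mul_sq_mul_cos (hτ : 0 < τ) (x : ℝ) :
    ∫ t, t * (t * Real.exp (-(τ * t) ^ 2 / 2)) * Real.cos (t * x) =
      -(2 * Real.pi * (gaussHermite (x / τ) / τ ^ 3)) := by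
  have hdiv : ∀ y, HasDerivAt (fun y => y / τ) (1 / τ) y := fun y =>
    (hasDerivAt_id y).div_const τ
  have hsin : ∀ y, ∫ t, t * Real.exp (-(τ * t) ^ 2 / 2) * -Real.sin (t * y) =
      -(2 * Real.pi * (y * gaussD (y / τ) / τ ^ 3)) := by
    intro y
    have h := hasDerivAt_integral_mul_comp_mul (C := 1) Real.hasDerivAt_cos
      (fun x => by simpa using Real.abs_sin_le_one x)
      (fun x => integrable_mul_of_abs_le (integrable_exp_neg_sq_half hτ) (by fun_prop)
        fun t => Real.abs_cos_le_one (t * x)) (integrable_mul_exp_neg_sq_half hτ) y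
    simp only [integral_gaussian_mul_cos hτ] at h
    refine h.unique (((((hasDerivAt_gaussD (y / τ)).comp y (hdiv y)).div_const τ).const_mul
      (2 * Real.pi)).congr_deriv ?_)
    field_simp
  have hcos := hasDerivAt_integral_mul_comp_mul (k := fun x => -Real.sin x)
    (fun x => (Real.hasDerivAt_sin x).neg) (C := 1)
    (fun x => by simpa using Real.abs_cos_le_one x)
    (fun x => integrable_mul_of_abs_le (integrable_mul_exp_neg_sq_half hτ) (by fun_prop)
      fun t => (abs_neg _).trans_le (Real.abs_sin_le_one (t * x)))
    (integrable_sq_mul_exp_neg_sq_half hτ) x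
  simp only [hsin] at hcos
  simp only [mul_neg, integral_neg] at hcos
  have hclosed := ((((hasDerivAt_id x).mul ((hasDerivAt_gaussD (x / τ)).comp x (hdiv x))).div_const
    (τ ^ 3)).const_mul (2 * Real.pi)).neg
  rw [← neg_inj, ← hclosed.unique hcos, gaussHermite]
  simp only [id, Function.comp_apply]
  field_simp
  ring

end GaussianFourier

/-! ### Gaussian smoothing of the first-order Edgeworth expansion -/

section Smoothing

open ProbabilityTheory

/-- The first-order Edgeworth expansion of a distribution function with third cumulant `l`; the
expansion `edge1 A` is `edgeworthCDF (lam1 A)`. -/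
noncomputable def edgeworthCDF (l x : ℝ) : ℝ := gaussCDF x - l / 6 * gaussHermite x

/-- The Fourier–Stieltjes transform of `edgeworthCDF l`. -/
noncomputable def edgeworthCharFun (l t : ℝ) : ℂ :=
  Complex.exp (-(t : ℂ) ^ 2 / 2) * (1 - Complex.I * t ^ 3 * l / 6)

/-- The expansion `edgeworthCDF l` convolved with a centered normal law so as to have the total
Gaussian standard deviation `τ ≥ 1`. -/
noncomputable def smoothEdgeworthCDF (l τ x : ℝ) : ℝ :=
  gaussCDF (x / τ) - l / 6 * (gaussHermite (x / τ) / τ ^ 3)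

lemma edge1_eq_edgeworthCDF {m : ℕ} (A : Matrix (Fin m) (Fin m) ℝ) :
    edge1 A = edgeworthCDF (lam1 A) := by
  ext x
  rw [edge1, edgeworthCDF, gaussHermite]
  ring

lemma edgeworthCharFun_eq (l t : ℝ) : edgeworthCharFun l t =
    (Real.exp (-t ^ 2 / 2) : ℝ) * (1 - Complex.I * (t ^ 3 * l / 6 : ℝ)) := by
  rw [edgeworthCharFun]
  push_cast
  ring

lemma edgeworthCharFun_re (l t : ℝ) : (edgeworthCharFun l t).re = Real.exp (-t ^ 2 / 2) := by
  rw [edgeworthCharFun_eq, Complex.re_ofReal_mul, Complex.sub_re, Complex.I_mul_re,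
    Complex.ofReal_im, Complex.one_re, neg_zero, sub_zero, mul_one]

lemma edgeworthCharFun_im (l t : ℝ) :
    (edgeworthCharFun l t).im = -(Real.exp (-t ^ 2 / 2) * (t ^ 3 * l / 6)) := by
  rw [edgeworthCharFun_eq, Complex.im_ofReal_mul, Complex.sub_im, Complex.I_mul_im,
    Complex.ofReal_re, Complex.one_im, zero_sub, mul_neg]

lemma hasDerivAt_gaussHermite (x : ℝ) :
    HasDerivAt gaussHermite (gaussD x * (3 * x - x ^ 3)) x := by
  refine ((hasDerivAt_gaussD x).mul ((hasDerivAt_pow 2 x).sub_const 1)).congr_deriv ?_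
  push_cast
  ring

lemma abs_gaussD_mul_one_add_abs_le (x : ℝ) : |gaussD x| * (1 + |x|) ≤ 2 := by
  rw [abs_of_pos (gaussD_pos x)]
  refine gaussD_mul_le ?_ zero_le_two
  nlinarith [sq_nonneg (|x| - 1), sq_nonneg (x ^ 2), sq_abs x]

lemma abs_deriv_gaussHermite_mul_one_add_abs_le (x : ℝ) :
    |gaussD x * (3 * x - x ^ 3)| * (1 + |x|) ≤ 16 := by
  rw [abs_mul, abs_of_pos (gaussD_pos x), mul_assoc]
  refine gaussD_mul_le ?_ (by norm_num)
  have hcubic : |3 * x - x ^ 3| ≤ 3 * |x| + |x| ^ 3 := by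
    refine (abs_sub _ _).trans_eq ?_
    rw [abs_mul, abs_pow, abs_of_pos (three_pos : (0 : ℝ) < 3)]
  rw [← sq_abs x, show x ^ 4 = |x| ^ 4 by rw [← abs_pow, abs_of_nonneg (by positivity)]]
  calc |3 * x - x ^ 3| * (1 + |x|) ≤ (3 * |x| + |x| ^ 3) * (1 + |x|) := by gcongr
    _ ≤ 16 * (1 + |x| ^ 2 / 2 + |x| ^ 4 / 8) := by
      nlinarith [sq_nonneg (|x| - 1), sq_nonneg (|x| ^ 2 - |x|), sq_nonneg (|x| ^ 2)]

lemma abs_gaussHermite_le (x : ℝ) : |gaussHermite x| ≤ 2 := by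
  rw [gaussHermite, abs_mul, abs_of_pos (gaussD_pos x)]
  refine gaussD_mul_le ?_ zero_le_two
  rw [abs_le]
  constructor <;> nlinarith [sq_nonneg x, sq_nonneg (x ^ 2)]

section SlowlyVarying

variable {R R' : ℝ → ℝ} {C : ℝ}

lemma abs_sub_le_of_abs_deriv_mul_one_add_abs_le (hR : ∀ x, HasDerivAt R (R' x) x)
    (hC : ∀ x, |R' x| * (1 + |x|) ≤ C) (x y : ℝ) : |R x - R y| ≤ C * |x - y| := by
  refine Convex.norm_image_sub_le_of_norm_hasDerivWithin_le (s := Set.univ)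
    (fun u _ => (hR u).hasDerivWithinAt) (fun u _ => ?_) convex_univ trivial trivial
  rw [Real.norm_eq_abs]
  nlinarith [hC u, abs_nonneg u, abs_nonneg (R' u)]

lemma abs_comp_mul_sub_le_of_abs_deriv_mul_one_add_abs_le (hR : ∀ x, HasDerivAt R (R' x) x)
    (hC : ∀ x, |R' x| * (1 + |x|) ≤ C) (z : ℝ) {w : ℝ} (hw : 1 / 2 ≤ w) (hw1 : w ≤ 1) :
    |R (z * w) - R z| ≤ 2 * C * (1 - w) := by
  have hC0 : 0 ≤ C := le_trans (by positivity) (hC 0)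
  have hderiv : ∀ x ∈ Set.uIcc z (z * w), ‖R' x‖ ≤ 2 * C / (1 + |z|) := by
    intro x hx
    have hxz : |z| / 2 ≤ |x| := by
      have hzw : |z * w| = |z| * w := by rw [abs_mul, abs_of_nonneg (by linarith : (0 : ℝ) ≤ w)]
      have hdist : |z * w - z| = |z| - |z * w| := by
        rw [show z * w - z = -(z * (1 - w)) by ring, abs_neg, abs_mul,
          abs_of_nonneg (by linarith : (0 : ℝ) ≤ 1 - w), hzw]
        ring
      have hdist' := Set.abs_sub_left_of_mem_uIcc hx
      rw [abs_sub_comm x z] at hdist'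
      nlinarith [abs_nonneg z, abs_sub_abs_le_abs_sub z x]
    rw [Real.norm_eq_abs, le_div_iff₀ (by positivity)]
    nlinarith [hC x, abs_nonneg (R' x)]
  have hmvt := Convex.norm_image_sub_le_of_norm_hasDerivWithin_le
    (fun x _ => (hR x).hasDerivWithinAt) hderiv (convex_uIcc _ _) Set.left_mem_uIcc
    Set.right_mem_uIcc
  have hlen : ‖z * w - z‖ = |z| * (1 - w) := by
    rw [show z * w - z = -(z * (1 - w)) by ring, norm_neg, norm_mul, Real.norm_eq_abs,
      Real.norm_of_nonneg (by linarith)]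
  calc |R (z * w) - R z| ≤ 2 * C / (1 + |z|) * (|z| * (1 - w)) := hlen ▸ hmvt
    _ = 2 * C * (1 - w) * (|z| / (1 + |z|)) := by ring
    _ ≤ 2 * C * (1 - w) * 1 := by
      have : 0 ≤ 1 - w := by linarith
      gcongr
      exact (div_le_one (by positivity)).2 (by linarith)
    _ = 2 * C * (1 - w) := mul_one _

end SlowlyVarying

lemma abs_edgeworthCDF_sub_le {l : ℝ} (hl : |l| ≤ 1) (x y : ℝ) :
    |edgeworthCDF l x - edgeworthCDF l y| ≤ 5 * |x - y| := by
  have hΦ := abs_sub_le_of_abs_deriv_mul_one_add_abs_le hasDerivAt_gaussCDF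
    abs_gaussD_mul_one_add_abs_le x y
  have hH := abs_sub_le_of_abs_deriv_mul_one_add_abs_le hasDerivAt_gaussHermite
    abs_deriv_gaussHermite_mul_one_add_abs_le x y
  calc |edgeworthCDF l x - edgeworthCDF l y|
      = |(gaussCDF x - gaussCDF y) - l / 6 * (gaussHermite x - gaussHermite y)| := by
        simp only [edgeworthCDF]
        ring_nf
    _ ≤ |gaussCDF x - gaussCDF y| + |l| / 6 * |gaussHermite x - gaussHermite y| := by
        refine (abs_sub _ _).trans_eq ?_
        rw [abs_mul, abs_div, abs_of_pos (by norm_num : (0 : ℝ) < 6)]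
    _ ≤ 2 * |x - y| + 1 / 6 * (16 * |x - y|) := by gcongr
    _ ≤ 5 * |x - y| := by linarith [abs_nonneg (x - y)]

lemma abs_smoothEdgeworthCDF_sub_le {l ε : ℝ} (hl : |l| ≤ 1) (hε : 0 < ε) (hε1 : ε ≤ 1) (z : ℝ) :
    |smoothEdgeworthCDF l (Real.sqrt (1 + ε ^ 2)) z - edgeworthCDF l z| ≤ 20 * ε := by
  set τ := Real.sqrt (1 + ε ^ 2)
  have hτsq : τ ^ 2 = 1 + ε ^ 2 := Real.sq_sqrt (by positivity)
  have hτpos : 0 < τ := Real.sqrt_pos.2 (by positivity)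
  have hτ1 : 1 ≤ τ := by nlinarith
  have hτε : τ ≤ 1 + ε := by nlinarith
  obtain ⟨w, hw⟩ : ∃ w, w = τ⁻¹ := ⟨_, rfl⟩
  have hwτ : w * τ = 1 := hw ▸ inv_mul_cancel₀ hτpos.ne'
  have hwpos : 0 < w := hw ▸ inv_pos.2 hτpos
  have hw1 : w ≤ 1 := hw ▸ inv_le_one_of_one_le₀ hτ1
  have hwε : 1 - w ≤ ε := by nlinarith
  have hwhalf : 1 / 2 ≤ w := by nlinarith
  have hw3 : 1 - w ^ 3 ≤ 3 * ε := by nlinarith [sq_nonneg w]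
  have hw3' : w ^ 3 ≤ 1 := pow_le_one₀ hwpos.le hw1
  have hΦ := abs_comp_mul_sub_le_of_abs_deriv_mul_one_add_abs_le hasDerivAt_gaussCDF
    abs_gaussD_mul_one_add_abs_le z hwhalf hw1
  have hH := abs_comp_mul_sub_le_of_abs_deriv_mul_one_add_abs_le hasDerivAt_gaussHermite
    abs_deriv_gaussHermite_mul_one_add_abs_le z hwhalf hw1
  have hdecomp : smoothEdgeworthCDF l τ z - edgeworthCDF l z = (gaussCDF (z * w) - gaussCDF z)
      - l / 6 * (w ^ 3 * (gaussHermite (z * w) - gaussHermite z)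
        - (1 - w ^ 3) * gaussHermite z) := by
    simp only [smoothEdgeworthCDF, edgeworthCDF, div_eq_mul_inv z τ, div_eq_mul_inv _ (τ ^ 3),
      ← inv_pow, ← hw]
    ring
  have hinner : |w ^ 3 * (gaussHermite (z * w) - gaussHermite z) - (1 - w ^ 3) * gaussHermite z|
      ≤ 1 * (2 * 16 * ε) + 3 * ε * 2 := by
    refine (abs_sub _ _).trans (add_le_add ?_ ?_)
    · rw [abs_mul, abs_of_pos (pow_pos hwpos 3)]
      gcongr
      exact hH.trans (by gcongr)
    · rw [abs_mul, abs_of_nonneg (by linarith)]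
      gcongr
      exact abs_gaussHermite_le z
  rw [hdecomp]
  refine (abs_sub _ _).trans ?_
  rw [abs_mul, abs_div, abs_of_pos (by norm_num : (0 : ℝ) < 6)]
  nlinarith [abs_nonneg l]

variable {μ : Measure ℝ} [IsProbabilityMeasure μ]

lemma integral_sin_mul_sub (t z : ℝ) : ∫ x, Real.sin (t * (z - x)) ∂μ =
    Real.sin (t * z) * (charFun μ t).re - Real.cos (t * z) * (charFun μ t).im := by
  have hchar : Integrable (fun x : ℝ => Complex.exp ((t * x : ℝ) * Complex.I)) μ :=
    Integrable.of_bound (by fun_prop) 1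
      (Filter.Eventually.of_forall fun x => (Complex.norm_exp_ofReal_mul_I _).le)
  have hcharFun : charFun μ t = ∫ x, Complex.exp ((t * x : ℝ) * Complex.I) ∂μ := by
    simp only [charFun_apply_real, Complex.ofReal_mul]
  have hre : (charFun μ t).re = ∫ x, Real.cos (t * x) ∂μ := by
    rw [hcharFun, ← RCLike.re_eq_complex_re, ← integral_re hchar]
    simp only [RCLike.re_eq_complex_re, Complex.exp_ofReal_mul_I_re]
  have him : (charFun μ t).im = ∫ x, Real.sin (t * x) ∂μ := by
    rw [hcharFun, ← RCLike.im_eq_complex_im, ← integral_im hchar]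
    simp only [RCLike.im_eq_complex_im, Complex.exp_ofReal_mul_I_im]
  have hcos : Integrable (fun x => Real.cos (t * x)) μ :=
    Integrable.of_bound (by fun_prop) 1
      (Filter.Eventually.of_forall fun _ => Real.abs_cos_le_one _)
  have hsin : Integrable (fun x => Real.sin (t * x)) μ :=
    Integrable.of_bound (by fun_prop) 1
      (Filter.Eventually.of_forall fun _ => Real.abs_sin_le_one _)
  rw [hre, him, ← integral_const_mul, ← integral_const_mul,
    ← integral_sub (hcos.const_mul _) (hsin.const_mul _)]
  simp only [mul_sub t, Real.sin_sub]

lemma abs_sin_mul_re_sub_cos_mul_im_le (θ : ℝ) (w : ℂ) :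
    |Real.sin θ * w.re - Real.cos θ * w.im| ≤ ‖w‖ := by
  refine abs_le_of_sq_le_sq ?_ (norm_nonneg _)
  rw [← Complex.normSq_eq_norm_sq, Complex.normSq_apply]
  nlinarith [Real.sin_sq_add_cos_sq θ, sq_nonneg (Real.cos θ * w.re + Real.sin θ * w.im)]

lemma integrable_prod_gaussian_mul_sin_div (hμ : Integrable id μ) {ε : ℝ} (hε : 0 < ε) (z : ℝ) :
    Integrable (fun p : ℝ × ℝ =>
      Real.exp (-(ε * p.2) ^ 2 / 2) * (Real.sin (p.2 * (z - p.1)) / p.2)) (μ.prod volume) := by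
  have hbound : Integrable (fun p : ℝ × ℝ => ‖z - p.1‖ * Real.exp (-(ε * p.2) ^ 2 / 2))
      (μ.prod volume) :=
    (((integrable_const z).sub hμ).norm).mul_prod (integrable_exp_neg_sq_half hε)
  refine hbound.mono' (by fun_prop) (Filter.Eventually.of_forall fun p => ?_)
  rw [norm_mul, Real.norm_eq_abs, Real.abs_exp, mul_comm]
  exact mul_le_mul_of_nonneg_right (abs_sin_mul_div_le _ _) (Real.exp_pos _).le

lemma integral_gaussCDF_div_eq (hμ : Integrable id μ) {ε : ℝ} (hε : 0 < ε) (z : ℝ) :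
    ∫ x, gaussCDF ((z - x) / ε) ∂μ = 1 / 2 + (2 * Real.pi)⁻¹ * ∫ t, Real.exp (-(ε * t) ^ 2 / 2) *
      ((Real.sin (t * z) * (charFun μ t).re - Real.cos (t * z) * (charFun μ t).im) / t) := by
  have hprod := integrable_prod_gaussian_mul_sin_div hμ hε z
  simp only [gaussCDF_div_eq_integral_sin hε]
  rw [integral_add (integrable_const _) (hprod.integral_prod_left.const_mul _), integral_const_mul,
    integral_integral_swap hprod]
  simp only [integral_const_mul, integral_div, integral_sin_mul_sub, integral_const,
    probReal_univ, one_smul]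

lemma integrable_gaussian_mul_im_charFun_div (hμ : Integrable id μ) {ε : ℝ} (hε : 0 < ε) (z : ℝ) :
    Integrable fun t => Real.exp (-(ε * t) ^ 2 / 2) *
      ((Real.sin (t * z) * (charFun μ t).re - Real.cos (t * z) * (charFun μ t).im) / t) := by
  have h := (integrable_prod_gaussian_mul_sin_div hμ hε z).integral_prod_right
  simpa only [integral_const_mul, integral_div, integral_sin_mul_sub] using h

lemma smoothEdgeworthCDF_eq (l : ℝ) {τ : ℝ} (hτ : 0 < τ) (z : ℝ) :
    smoothEdgeworthCDF l τ z = 1 / 2 + (2 * Real.pi)⁻¹ *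
      ∫ t, (Real.exp (-(τ * t) ^ 2 / 2) * (Real.sin (t * z) / t) +
        l / 6 * (t * (t * Real.exp (-(τ * t) ^ 2 / 2)) * Real.cos (t * z))) := by
  rw [integral_add (integrable_gaussian_mul_sin_div hτ z)
    ((integrable_mul_of_abs_le (integrable_sq_mul_exp_neg_sq_half hτ) (by fun_prop)
      fun t => Real.abs_cos_le_one (t * z)).const_mul _), integral_const_mul,
    integral_gaussian_mul_sq_mul_cos hτ, smoothEdgeworthCDF, gaussCDF_div_eq_integral_sin hτ]
  generalize ∫ t, Real.exp (-(τ * t) ^ 2 / 2) * (Real.sin (t * z) / t) = I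
  field_simp
  ring

theorem abs_integral_gaussCDF_sub_smoothEdgeworthCDF_le (hμ : Integrable id μ) (l : ℝ) {ε : ℝ}
    (hε : 0 < ε) (z : ℝ) {b : ℝ → ℝ} (hb : Integrable b)
    (hbd : ∀ t ≠ 0,
      Real.exp (-(ε * t) ^ 2 / 2) * ‖charFun μ t - edgeworthCharFun l t‖ / |t| ≤ b t) :
    |∫ x, gaussCDF ((z - x) / ε) ∂μ - smoothEdgeworthCDF l (Real.sqrt (1 + ε ^ 2)) z|
      ≤ ∫ t, b t := by
  set τ := Real.sqrt (1 + ε ^ 2)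
  have hτsq : τ ^ 2 = 1 + ε ^ 2 := Real.sq_sqrt (by positivity)
  have hτ : 0 < τ := Real.sqrt_pos.2 (by positivity)
  have hsplit : ∀ t : ℝ, Real.exp (-(τ * t) ^ 2 / 2) =
      Real.exp (-(ε * t) ^ 2 / 2) * Real.exp (-t ^ 2 / 2) := fun t => by
    rw [← Real.exp_add, mul_pow, hτsq]
    congr 1
    ring
  have hcosInt := (integrable_mul_of_abs_le (integrable_sq_mul_exp_neg_sq_half hτ)
    (h := fun t => Real.cos (t * z)) (by fun_prop)
    fun t => Real.abs_cos_le_one (t * z)).const_mul (l / 6)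
  have hsumInt : Integrable fun t => Real.exp (-(τ * t) ^ 2 / 2) * (Real.sin (t * z) / t) +
      l / 6 * (t * (t * Real.exp (-(τ * t) ^ 2 / 2)) * Real.cos (t * z)) :=
    (integrable_gaussian_mul_sin_div hτ z).add hcosInt
  rw [integral_gaussCDF_div_eq hμ hε, smoothEdgeworthCDF_eq l hτ, add_sub_add_left_eq_sub,
    ← mul_sub, ← integral_sub (integrable_gaussian_mul_im_charFun_div hμ hε z) hsumInt, abs_mul]
  have hpi : |(2 * Real.pi)⁻¹| ≤ 1 := by
    rw [abs_of_pos (by positivity)]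
    exact inv_le_one_of_one_le₀ (by nlinarith [Real.pi_gt_three])
  refine (mul_le_of_le_one_left (abs_nonneg _) hpi).trans ?_
  rw [← Real.norm_eq_abs]
  refine norm_integral_le_of_norm_le hb ?_
  filter_upwards [volume.ae_ne 0] with t ht
  have hintegrand : Real.exp (-(ε * t) ^ 2 / 2) *
      ((Real.sin (t * z) * (charFun μ t).re - Real.cos (t * z) * (charFun μ t).im) / t) -
      (Real.exp (-(τ * t) ^ 2 / 2) * (Real.sin (t * z) / t) +
        l / 6 * (t * (t * Real.exp (-(τ * t) ^ 2 / 2)) * Real.cos (t * z))) =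
      Real.exp (-(ε * t) ^ 2 / 2) * (Real.sin (t * z) * (charFun μ t - edgeworthCharFun l t).re
        - Real.cos (t * z) * (charFun μ t - edgeworthCharFun l t).im) / t := by
    rw [Complex.sub_re, Complex.sub_im, edgeworthCharFun_re, edgeworthCharFun_im, hsplit]
    field_simp
    ring
  refine le_trans ?_ (hbd t ht)
  rw [hintegrand, norm_div, norm_mul, Real.norm_eq_abs, Real.abs_exp, Real.norm_eq_abs,
    Real.norm_eq_abs]
  gcongr
  exact abs_sin_mul_re_sub_cos_mul_im_le _ _

lemma integrable_gaussCDF_div (ε z : ℝ) : Integrable (fun x => gaussCDF ((z - x) / ε)) μ := by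
  have := continuous_gaussCDF
  refine Integrable.of_bound (by fun_prop) 1 (Filter.Eventually.of_forall fun x => ?_)
  rw [Real.norm_of_nonneg (gaussCDF_nonneg _)]
  exact gaussCDF_le_one _

lemma cdf_eq_integral_indicator (z : ℝ) :
    cdf μ z = ∫ x, (Set.Iic z).indicator (fun _ => (1 : ℝ)) x ∂μ := by
  rw [cdf_eq_real, integral_indicator_const _ measurableSet_Iic, smul_eq_mul, mul_one]

lemma cdf_le_integral_gaussCDF_add {ε : ℝ} (hε : 0 < ε) (a z : ℝ) :
    cdf μ z ≤ ∫ x, gaussCDF ((z + a * ε - x) / ε) ∂μ + (1 - gaussCDF a) := by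
  have hintegrable := integrable_gaussCDF_div (μ := μ) ε (z + a * ε)
  have hright : ∫ x, gaussCDF ((z + a * ε - x) / ε) ∂μ + (1 - gaussCDF a) =
      ∫ x, (gaussCDF ((z + a * ε - x) / ε) + (1 - gaussCDF a)) ∂μ := by
    rw [integral_add hintegrable (integrable_const _)]
    simp
  rw [hright, cdf_eq_integral_indicator]
  refine integral_mono ((integrable_const 1).indicator measurableSet_Iic)
    (hintegrable.add (integrable_const _)) fun x => ?_
  by_cases hx : x ≤ z
  · have hmono : gaussCDF a ≤ gaussCDF ((z + a * ε - x) / ε) :=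
      monotone_gaussCDF ((le_div_iff₀ hε).2 (by linarith))
    simp only [Set.indicator_of_mem (Set.mem_Iic.2 hx)]
    linarith
  · simp only [Set.indicator_of_notMem (mt Set.mem_Iic.1 hx)]
    linarith [gaussCDF_nonneg ((z + a * ε - x) / ε), gaussCDF_le_one a]

lemma integral_gaussCDF_le_cdf_add {ε : ℝ} (hε : 0 < ε) (a z : ℝ) :
    ∫ x, gaussCDF ((z - a * ε - x) / ε) ∂μ ≤ cdf μ z + (1 - gaussCDF a) := by
  have hind : Integrable ((Set.Iic z).indicator fun _ => (1 : ℝ)) μ :=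
    (integrable_const 1).indicator measurableSet_Iic
  have hright : cdf μ z + (1 - gaussCDF a) =
      ∫ x, ((Set.Iic z).indicator (fun _ => (1 : ℝ)) x + (1 - gaussCDF a)) ∂μ := by
    rw [integral_add hind (integrable_const _), cdf_eq_integral_indicator]
    simp
  rw [hright]
  refine integral_mono (integrable_gaussCDF_div ε (z - a * ε)) (hind.add (integrable_const _))
    fun x => ?_
  by_cases hx : x ≤ z
  · simp only [Set.indicator_of_mem (Set.mem_Iic.2 hx)]
    linarith [gaussCDF_le_one ((z - a * ε - x) / ε), gaussCDF_le_one a]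
  · have hmono : gaussCDF ((z - a * ε - x) / ε) ≤ gaussCDF (-a) :=
      monotone_gaussCDF ((div_le_iff₀ hε).2 (by linarith [not_le.1 hx]))
    simp only [Set.indicator_of_notMem (mt Set.mem_Iic.1 hx)]
    linarith [gaussCDF_neg a]

/-- A smoothing inequality of Esseen type with a Gaussian kernel of standard deviation `ε`, so that
no compactly supported kernel is needed; `a` is a truncation level for that kernel. -/
theorem abs_cdf_sub_edgeworthCDF_le (hμ : Integrable id μ) {l ε a : ℝ} (hl : |l| ≤ 1)
    (hε : 0 < ε) (hε1 : ε ≤ 1) (ha : 0 ≤ a) (z : ℝ) {b : ℝ → ℝ} (hb : Integrable b)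
    (hbd : ∀ t ≠ 0,
      Real.exp (-(ε * t) ^ 2 / 2) * ‖charFun μ t - edgeworthCharFun l t‖ / |t| ≤ b t) :
    |cdf μ z - edgeworthCDF l z| ≤
      (∫ t, b t) + Real.exp (-a ^ 2 / 2) + 5 * (a * ε) + 20 * ε := by
  have htail := one_sub_gaussCDF_le ha
  have hsmooth := fun y =>
    abs_le.1 (abs_integral_gaussCDF_sub_smoothEdgeworthCDF_le hμ l hε y hb hbd)
  have hclose := fun y => abs_le.1 (abs_smoothEdgeworthCDF_sub_le hl hε hε1 y)
  have hup := abs_le.1 (abs_edgeworthCDF_sub_le hl (z + a * ε) z)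
  have hlo := abs_le.1 (abs_edgeworthCDF_sub_le hl (z - a * ε) z)
  rw [add_sub_cancel_left, abs_of_nonneg (by positivity)] at hup
  rw [sub_sub_cancel_left, abs_neg, abs_of_nonneg (by positivity)] at hlo
  rw [abs_le]
  constructor
  · linarith [integral_gaussCDF_le_cdf_add (μ := μ) hε a z, hsmooth (z - a * ε),
      hclose (z - a * ε)]
  · linarith [cdf_le_integral_gaussCDF_add (μ := μ) hε a z, hsmooth (z + a * ε),
      hclose (z + a * ε)]

end Smoothing

/-! ### Random transpositions and the moments of a linear rank statistic -/

section RandomPermutation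

open Equiv (Perm swap)
open scoped BigOperators

variable {ι : Type*} [Fintype ι]

/-- The simple linear rank statistic with regression constants `x` and scores `w`. -/
def linearRank (x w : ι → ℝ) (π : Perm ι) : ℝ := ∑ i, x i * w (π i)

/-- The decrease of `linearRank x w` at `π` when the images of `i` and `j` are exchanged. -/
def swapDecrement (x w : ι → ℝ) (π : Perm ι) (i j : ι) : ℝ := (x i - x j) * (w (π i) - w (π j))

lemma linearRank_inv (x w : ι → ℝ) (π : Perm ι) : linearRank x w π⁻¹ = linearRank w x π := by
  rw [linearRank, ← Equiv.sum_comp π]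
  simp only [Equiv.Perm.inv_def, Equiv.symm_apply_apply, mul_comm, linearRank]

lemma sum_mul_swapDecrement {x w : ι → ℝ} (hx : ∑ i, x i = 0) (hw : ∑ i, w i = 0) (π : Perm ι) :
    ∑ i, ∑ j, x i * w (π j) * swapDecrement x w π i j =
      -((∑ i, x i ^ 2) * ∑ i, w i ^ 2) - linearRank x w π ^ 2 := by
  have hexpand : ∀ i j, x i * w (π j) * swapDecrement x w π i j =
      ((x i ^ 2 * w (π i)) * w (π j) - x i ^ 2 * w (π j) ^ 2)
        - (x i * w (π i)) * (x j * w (π j)) + x i * (x j * w (π j) ^ 2) := fun i j => by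
    rw [swapDecrement]
    ring
  simp_rw [hexpand, Finset.sum_add_distrib, Finset.sum_sub_distrib, ← Finset.sum_mul_sum]
  rw [Equiv.sum_comp π w, Equiv.sum_comp π (fun j => w j ^ 2), hx, hw, linearRank]
  ring

lemma sum_mul_swapDecrement_sq {x w : ι → ℝ} (hx : ∑ i, x i = 0) (hw : ∑ i, w i = 0) (π : Perm ι) :
    ∑ i, ∑ j, x i * w (π j) * swapDecrement x w π i j ^ 2 =
      (∑ i, x i ^ 3) * (∑ i, w i ^ 3) - 2 * (∑ i, w i ^ 2) * linearRank (x ^ 3) w π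
        - 2 * (∑ i, x i ^ 2) * linearRank x (w ^ 3) π
        - 4 * (linearRank x w π * linearRank (x ^ 2) (w ^ 2) π)
        + 5 * (linearRank x (w ^ 2) π * linearRank (x ^ 2) w π) := by
  have hexpand : ∀ i j, x i * w (π j) * swapDecrement x w π i j ^ 2 =
      (((x i ^ 3 * w (π i) ^ 2) * w (π j) + (-2 * (x i ^ 3 * w (π i))) * w (π j) ^ 2)
      + (x i ^ 3 * w (π j) ^ 3 + (-2 * (x i ^ 2 * w (π i) ^ 2)) * (x j * w (π j))))
      + ((4 * (x i ^ 2 * w (π i))) * (x j * w (π j) ^ 2) + (-2 * x i ^ 2) * (x j * w (π j) ^ 3))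
      + (((x i * w (π i) ^ 2) * (x j ^ 2 * w (π j))
        + (-2 * (x i * w (π i))) * (x j ^ 2 * w (π j) ^ 2)) + x i * (x j ^ 2 * w (π j) ^ 3)) :=
    fun i j => by
      rw [swapDecrement]
      ring
  simp_rw [hexpand, Finset.sum_add_distrib, ← Finset.sum_mul_sum, ← Finset.mul_sum]
  rw [Equiv.sum_comp π w, Equiv.sum_comp π (fun j => w j ^ 2),
    Equiv.sum_comp π (fun j => w j ^ 3), hx, hw]
  simp only [linearRank, Pi.pow_apply]
  ring

variable [DecidableEq ι]

lemma linearRank_mul_swap (x w : ι → ℝ) (π : Perm ι) (i j : ι) :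
    linearRank x w (π * swap i j) = linearRank x w π - swapDecrement x w π i j := by
  have hdiff : ∀ k, x k * w ((π * swap i j) k) - x k * w (π k) =
      (if k = i then x k * (w (π j) - w (π i)) else 0) +
        (if k = j then x k * (w (π i) - w (π j)) else 0) := fun k => by
    rw [Equiv.Perm.mul_apply, Equiv.swap_apply_def]
    grind
  rw [eq_sub_iff_add_eq, ← eq_sub_iff_add_eq', linearRank, linearRank, ← neg_inj, neg_sub,
    ← Finset.sum_sub_distrib]
  simp only [hdiff, Finset.sum_add_distrib, Finset.sum_ite_eq', Finset.mem_univ, if_true,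
    swapDecrement]
  ring

section Exchange

variable {R : Type*} [Field R] [CharZero R]

/-- If `π` is uniform then so is `π * swap i j`, which maps `i` to `π j`. -/
lemma card_mul_expect_sum_mul (c h : ι → R) (F : Perm ι → R) :
    (Fintype.card ι : R) * 𝔼 π : Perm ι, (∑ i, c i * h (π i)) * F π =
      𝔼 π : Perm ι, ∑ i, ∑ j, c i * h (π j) * F (π * swap i j) := by
  have hswap : ∀ i j, 𝔼 π : Perm ι, c i * h (π j) * F (π * swap i j) =
      𝔼 π : Perm ι, c i * h (π i) * F π := fun i j =>
    Fintype.expect_equiv (Equiv.mulRight (swap i j)) _ _ fun π => by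
      simp only [Equiv.coe_mulRight, Equiv.Perm.mul_apply, Equiv.swap_apply_left]
  simp only [Finset.expect_sum_comm, hswap, Finset.sum_mul, Finset.sum_const, Finset.card_univ,
    nsmul_eq_mul, Finset.mul_sum]

lemma card_mul_expect_sum (c h : ι → R) :
    (Fintype.card ι : R) * 𝔼 π : Perm ι, ∑ i, c i * h (π i) = (∑ i, c i) * ∑ i, h i := by
  have hexch := card_mul_expect_sum_mul c h fun _ => 1
  have hsum : ∀ π : Perm ι, ∑ i, ∑ j, c i * h (π j) = (∑ i, c i) * ∑ i, h i := fun π => by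
    rw [← Finset.sum_mul_sum, Equiv.sum_comp π h]
  simpa only [mul_one, hsum, Fintype.expect_const] using hexch

end Exchange

lemma expect_linearRank (x w : ι → ℝ) :
    (Fintype.card ι : ℝ) * 𝔼 π, linearRank x w π = (∑ i, x i) * ∑ i, w i :=
  card_mul_expect_sum x w

lemma expect_linearRank_sq (x w : ι → ℝ) :
    (Fintype.card ι : ℝ) * (Fintype.card ι - 1) * 𝔼 π, linearRank x w π ^ 2 =
      (∑ i, x i) ^ 2 * (∑ i, w i) ^ 2 - (∑ i, x i ^ 2) * (∑ i, w i) ^ 2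
        - (∑ i, x i) ^ 2 * (∑ i, w i ^ 2)
        + Fintype.card ι * ((∑ i, x i ^ 2) * ∑ i, w i ^ 2) := by
  have hinner : ∀ π : Perm ι, ∑ i, ∑ j, x i * w (π j) * linearRank x w (π * swap i j) =
      (∑ i, x i) * (∑ i, w i) * linearRank x w π - (∑ i, w i) * linearRank (x ^ 2) w π
        + (∑ i, x i ^ 2) * (∑ i, w i ^ 2) + linearRank x w π ^ 2
        - (∑ i, x i) * linearRank x (w ^ 2) π := fun π => by
    have hexpand : ∀ i j, x i * w (π j) * linearRank x w (π * swap i j) =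
        x i * (w (π j) * linearRank x w π) - (x i ^ 2 * w (π i)) * w (π j)
          + x i ^ 2 * w (π j) ^ 2 + (x i * w (π i)) * (x j * w (π j))
          - x i * (x j * w (π j) ^ 2) := fun i j => by
      rw [linearRank_mul_swap, swapDecrement]
      ring
    simp_rw [hexpand, Finset.sum_sub_distrib, Finset.sum_add_distrib, Finset.sum_sub_distrib,
      ← Finset.sum_mul_sum]
    rw [← Finset.sum_mul, Equiv.sum_comp π w, Equiv.sum_comp π (fun j => w j ^ 2)]
    simp only [linearRank, Pi.pow_apply]
    ring
  have hexch := card_mul_expect_sum_mul x w (linearRank x w)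
  simp_rw [hinner, Finset.expect_sub_distrib, Finset.expect_add_distrib, Finset.expect_sub_distrib,
    ← Finset.mul_expect, Fintype.expect_const] at hexch
  have hsq : 𝔼 π, (∑ i, x i * w (π i)) * linearRank x w π = 𝔼 π, linearRank x w π ^ 2 := by
    simp only [sq, linearRank]
  have hx2 := expect_linearRank (x ^ 2) w
  have hw2 := expect_linearRank x (w ^ 2)
  simp only [Pi.pow_apply] at hx2 hw2
  rw [hsq] at hexch
  linear_combination (Fintype.card ι : ℝ) * hexch
    + ((∑ i, x i) * (∑ i, w i)) * expect_linearRank x w - (∑ i, w i) * hx2 - (∑ i, x i) * hw2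

lemma expect_sum_pair_mul_pair (a b : ι → ℝ) :
    𝔼 π : Perm ι, ∑ i, ∑ j, (a i + a j) * (b (π i) + b (π j)) = 4 * ((∑ i, a i) * ∑ i, b i) := by
  have hinner : ∀ π : Perm ι, ∑ i, ∑ j, (a i + a j) * (b (π i) + b (π j)) =
      2 * (Fintype.card ι * linearRank a b π) + 2 * ((∑ i, a i) * ∑ i, b i) := fun π => by
    have hexpand : ∀ i j, (a i + a j) * (b (π i) + b (π j)) =
        ((a i * b (π i)) * 1 + a i * b (π j)) + (b (π i) * a j + 1 * (a j * b (π j))) :=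
      fun i j => by ring
    simp_rw [hexpand, Finset.sum_add_distrib, ← Finset.sum_mul_sum]
    rw [Equiv.sum_comp π b, linearRank]
    simp only [Finset.sum_const, Finset.card_univ, nsmul_eq_mul, mul_one]
    ring
  simp_rw [hinner, Finset.expect_add_distrib, ← Finset.mul_expect, Fintype.expect_const,
    expect_linearRank]
  ring

lemma expect_sum_abs_mul_swapDecrement_pow_le (x w c h a b : ι → ℝ) (p : ℕ)
    (ha : ∀ i j, |c i| * |x i - x j| ^ p ≤ a i + a j)
    (hb : ∀ i j, |h j| * |w i - w j| ^ p ≤ b i + b j) :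
    𝔼 π, ∑ i, ∑ j, |c i * h (π j)| * |swapDecrement x w π i j| ^ p ≤
      4 * ((∑ i, a i) * ∑ i, b i) := by
  rw [← expect_sum_pair_mul_pair]
  refine Finset.expect_le_expect fun π _ => Finset.sum_le_sum fun i _ =>
    Finset.sum_le_sum fun j _ => ?_
  calc |c i * h (π j)| * |swapDecrement x w π i j| ^ p
      = (|c i| * |x i - x j| ^ p) * (|h (π j)| * |w (π i) - w (π j)| ^ p) := by
        rw [swapDecrement, abs_mul, abs_mul, mul_pow]
        ring
    _ ≤ (a i + a j) * (b (π i) + b (π j)) :=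
        mul_le_mul (ha i j) (hb _ _) (by positivity) (le_trans (by positivity) (ha i j))

end RandomPermutation

/-! ### The characteristic function near the origin -/

section EdgeworthODE

lemma hasDerivAt_edgeworthCharFun (l t : ℝ) : HasDerivAt (edgeworthCharFun l)
    (-(t : ℂ) * edgeworthCharFun l t
      - Complex.exp (-(t : ℂ) ^ 2 / 2) * (Complex.I * t ^ 2 * l / 2)) t := by
  have hid : HasDerivAt (fun t : ℝ => (t : ℂ)) 1 t := Complex.ofRealCLM.hasDerivAt
  have hexp : HasDerivAt (fun t : ℝ => Complex.exp (-(t : ℂ) ^ 2 / 2))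
      (Complex.exp (-(t : ℂ) ^ 2 / 2) * -(t : ℂ)) t := by
    refine (((hid.fun_pow 2).fun_neg.div_const 2).cexp).congr_deriv ?_
    push_cast
    ring
  have hpoly : HasDerivAt (fun t : ℝ => 1 - Complex.I * (t : ℂ) ^ 3 * l / 6)
      (-(Complex.I * t ^ 2 * l / 2)) t := by
    refine ((((hid.fun_pow 3).const_mul Complex.I).mul_const (l : ℂ)).div_const 6
      |>.const_sub 1).congr_deriv ?_
    push_cast
    ring
  refine (hexp.mul hpoly).congr_deriv ?_
  rw [edgeworthCharFun]
  ring

lemma exp_neg_sq_div_two_mul_le (t : ℝ) : Real.exp (-t ^ 2 / 2) * (t ^ 2 / 2) ≤ 1 := by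
  rw [neg_div, Real.exp_neg, inv_mul_le_one₀ (Real.exp_pos _)]
  linarith [Real.add_one_le_exp (t ^ 2 / 2)]

/-- `edgeworthCharFun l` almost solves `f' + t f + i l t² f / 2 = 0`, which is the equation that the
exchange of two random images yields for the rank statistic. -/
lemma norm_edgeworthCharFun_ode_le (l t : ℝ) :
    ‖(-(t : ℂ) * edgeworthCharFun l t
        - Complex.exp (-(t : ℂ) ^ 2 / 2) * (Complex.I * t ^ 2 * l / 2))
      + t * edgeworthCharFun l t + Complex.I * (t ^ 2 / 2) * l * edgeworthCharFun l t‖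
      ≤ l ^ 2 * |t| ^ 3 := by
  have hresidual : (-(t : ℂ) * edgeworthCharFun l t
        - Complex.exp (-(t : ℂ) ^ 2 / 2) * (Complex.I * t ^ 2 * l / 2))
      + t * edgeworthCharFun l t + Complex.I * (t ^ 2 / 2) * l * edgeworthCharFun l t =
      ((l ^ 2 * t ^ 3 / 6 * (Real.exp (-t ^ 2 / 2) * (t ^ 2 / 2)) : ℝ) : ℂ) := by
    rw [edgeworthCharFun]
    push_cast
    linear_combination (-(Complex.exp (-(t : ℂ) ^ 2 / 2) * (t ^ 5 * l ^ 2 / 12))) * Complex.I_sq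
  have hpos : 0 ≤ Real.exp (-t ^ 2 / 2) * (t ^ 2 / 2) := by positivity
  rw [hresidual, Complex.norm_real, Real.norm_eq_abs, abs_mul, abs_of_nonneg hpos, abs_div,
    abs_mul, abs_pow, abs_pow, sq_abs, abs_of_pos (by norm_num : (0 : ℝ) < 6)]
  calc l ^ 2 * |t| ^ 3 / 6 * (Real.exp (-t ^ 2 / 2) * (t ^ 2 / 2))
      ≤ l ^ 2 * |t| ^ 3 / 6 * 1 := by
        gcongr
        exact exp_neg_sq_div_two_mul_le t
    _ ≤ l ^ 2 * |t| ^ 3 := by linarith [show 0 ≤ l ^ 2 * |t| ^ 3 by positivity]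

lemma norm_exp_integrating_factor (l t : ℝ) :
    ‖Complex.exp ((t : ℂ) ^ 2 / 2 + Complex.I * t ^ 3 * l / 6)‖ = Real.exp (t ^ 2 / 2) := by
  rw [show (t : ℂ) ^ 2 / 2 + Complex.I * t ^ 3 * l / 6 =
      ((t ^ 2 / 2 : ℝ) : ℂ) + ((t ^ 3 * l / 6 : ℝ) : ℂ) * Complex.I by push_cast; ring,
    Complex.norm_exp, Complex.add_re, Complex.ofReal_re, Complex.re_ofReal_mul, Complex.I_re,
    mul_zero, add_zero]

lemma hasDerivAt_integrating_factor_mul {g : ℝ → ℂ} {g' : ℂ} (l : ℝ) {t : ℝ}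
    (hg : HasDerivAt g g' t) :
    HasDerivAt (fun t : ℝ => Complex.exp ((t : ℂ) ^ 2 / 2 + Complex.I * t ^ 3 * l / 6) * g t)
      (Complex.exp ((t : ℂ) ^ 2 / 2 + Complex.I * t ^ 3 * l / 6) *
        (g' + t * g t + Complex.I * (t ^ 2 / 2) * l * g t)) t := by
  have hid : HasDerivAt (fun t : ℝ => (t : ℂ)) 1 t := Complex.ofRealCLM.hasDerivAt
  have hexponent : HasDerivAt (fun t : ℝ => (t : ℂ) ^ 2 / 2 + Complex.I * t ^ 3 * l / 6)
      (t + Complex.I * (t ^ 2 / 2) * l) t := by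
    refine (((hid.fun_pow 2).div_const 2).add
      ((((hid.fun_pow 3).const_mul Complex.I).mul_const (l : ℂ)).div_const 6)).congr_deriv ?_
    push_cast
    ring
  refine (hexponent.cexp.mul hg).congr_deriv ?_
  ring

theorem norm_sub_edgeworthCharFun_le {f f' : ℝ → ℂ} {l κ : ℝ} (hf : ∀ t, HasDerivAt f (f' t) t)
    (hf0 : f 0 = 1)
    (hode : ∀ t : ℝ, ‖f' t + t * f t + Complex.I * (t ^ 2 / 2) * l * f t‖ ≤ κ * (|t| + |t| ^ 3))
    (t : ℝ) : ‖f t - edgeworthCharFun l t‖ ≤ (κ + l ^ 2) * (t ^ 2 + t ^ 4) := by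
  have hderiv := fun s =>
    hasDerivAt_integrating_factor_mul l ((hf s).sub (hasDerivAt_edgeworthCharFun l s))
  have hκ : 0 ≤ κ := by simpa using (norm_nonneg _).trans (hode 1)
  have hmvt := (convex_Icc (-|t|) |t|).norm_image_sub_le_of_norm_hasDerivWithin_le
    (C := Real.exp (t ^ 2 / 2) * ((κ + l ^ 2) * (|t| + |t| ^ 3)))
    (fun s _ => (hderiv s).hasDerivWithinAt) (fun s hs => ?_) (x := 0) (y := t)
    (by simp) ⟨neg_abs_le t, le_abs_self t⟩
  · have h0 : (f - edgeworthCharFun l) 0 = 0 := by simp [hf0, edgeworthCharFun]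
    rw [h0, mul_zero, sub_zero, sub_zero, norm_mul, norm_exp_integrating_factor, mul_assoc] at hmvt
    refine (le_of_mul_le_mul_left hmvt (Real.exp_pos _)).trans_eq ?_
    rw [Real.norm_eq_abs, ← sq_abs t, show t ^ 4 = (t ^ 2) ^ 2 by ring, ← sq_abs t]
    ring
  · have hst : |s| ≤ |t| := abs_le.2 hs
    have hode_sub := (norm_sub_le _ _).trans
      (add_le_add (hode s) (norm_edgeworthCharFun_ode_le l s))
    have hrearrange : f' s - (-(s : ℂ) * edgeworthCharFun l s
          - Complex.exp (-(s : ℂ) ^ 2 / 2) * (Complex.I * s ^ 2 * l / 2))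
        + s * (f - edgeworthCharFun l) s
        + Complex.I * (s ^ 2 / 2) * l * (f - edgeworthCharFun l) s =
        (f' s + s * f s + Complex.I * (s ^ 2 / 2) * l * f s) -
          ((-(s : ℂ) * edgeworthCharFun l s
            - Complex.exp (-(s : ℂ) ^ 2 / 2) * (Complex.I * s ^ 2 * l / 2))
          + s * edgeworthCharFun l s
          + Complex.I * (s ^ 2 / 2) * l * edgeworthCharFun l s) := by
      rw [Pi.sub_apply]
      ring
    rw [norm_mul, norm_exp_integrating_factor, hrearrange]
    refine mul_le_mul (Real.exp_le_exp.2 ?_) (hode_sub.trans ?_) (norm_nonneg _)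
      (Real.exp_pos _).le
    · gcongr 1
      exact sq_le_sq.2 hst
    · calc κ * (|s| + |s| ^ 3) + l ^ 2 * |s| ^ 3 ≤ (κ + l ^ 2) * (|s| + |s| ^ 3) := by
            linarith [show 0 ≤ l ^ 2 * |s| by positivity]
        _ ≤ (κ + l ^ 2) * (|t| + |t| ^ 3) := by gcongr

end EdgeworthODE

section Exponential

lemma norm_exp_neg_I_mul_sub_one_le (θ : ℝ) : ‖Complex.exp (-(Complex.I * θ)) - 1‖ ≤ |θ| := by
  simpa using Real.norm_exp_I_mul_ofReal_sub_one_le (x := -θ)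

lemma norm_exp_neg_I_mul_sub_quadratic_le (θ : ℝ) :
    ‖Complex.exp (-(Complex.I * θ)) - 1 + Complex.I * θ + θ ^ 2 / 2‖ ≤ 4 * |θ| ^ 3 := by
  rcases le_total |θ| 1 with hθ | hθ
  · have htaylor := Complex.exp_bound (x := -(Complex.I * θ)) (by simpa using hθ) (n := 3)
      (by norm_num)
    have hsum : ∑ m ∈ Finset.range 3, (-(Complex.I * θ)) ^ m / (m.factorial : ℂ) =
        1 - Complex.I * θ - θ ^ 2 / 2 := by
      simp only [Finset.sum_range_succ, Finset.sum_range_zero, Nat.factorial, neg_sq, mul_pow,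
        Complex.I_sq]
      push_cast
      ring
    rw [hsum, norm_neg, norm_mul, Complex.norm_I, one_mul, Complex.norm_real, Real.norm_eq_abs]
      at htaylor
    calc _ = ‖Complex.exp (-(Complex.I * θ)) - (1 - Complex.I * θ - θ ^ 2 / 2)‖ := by
          congr 1
          ring
      _ ≤ _ := htaylor
      _ ≤ |θ| ^ 3 * 4 := by
        gcongr
        norm_num [Nat.factorial]
      _ = 4 * |θ| ^ 3 := mul_comm _ _
  · have hpow2 : |θ| ^ 2 ≤ |θ| ^ 3 := pow_le_pow_right₀ hθ (by norm_num)
    have hpow1 : |θ| ≤ |θ| ^ 3 := le_self_pow₀ hθ (by norm_num)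
    have hlin : ‖Complex.I * (θ : ℂ)‖ = |θ| := by simp
    have hquad : ‖(θ : ℂ) ^ 2 / 2‖ = |θ| ^ 2 / 2 := by simp
    have htri := norm_add₃_le (a := Complex.exp (-(Complex.I * θ)) - 1) (b := Complex.I * θ)
      (c := (θ : ℂ) ^ 2 / 2)
    rw [hlin, hquad] at htri
    linarith [norm_exp_neg_I_mul_sub_one_le θ]

end Exponential

lemma abs_pow_mul_abs_sub_pow_le (a b : ℝ) (m p : ℕ) :
    |a| ^ m * |a - b| ^ p ≤ 2 ^ p * |a| ^ (m + p) + 2 ^ p * |b| ^ (m + p) := by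
  have hsub : |a - b| ≤ 2 * max |a| |b| := by
    linarith [abs_sub a b, le_max_left |a| |b|, le_max_right |a| |b|]
  calc |a| ^ m * |a - b| ^ p ≤ max |a| |b| ^ m * (2 * max |a| |b|) ^ p := by
        gcongr
        exact le_max_left _ _
    _ = 2 ^ p * max |a| |b| ^ (m + p) := by
        rw [mul_pow, pow_add]
        ring
    _ ≤ _ := by
        rw [← mul_add]
        gcongr
        rcases max_choice |a| |b| with hmax | hmax <;> rw [hmax]
        · exact le_add_of_nonneg_right (by positivity)
        · exact le_add_of_nonneg_left (by positivity)

section ProductMoment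

variable {ι : Type*} [Fintype ι]

/-- The moment `∑ i, ∑ j, (x i * w j) ^ p` of the entries of the matrix `x i * w j`. -/
def productMoment (x w : ι → ℝ) (p : ℕ) : ℝ := (∑ i, x i ^ p) * ∑ i, w i ^ p

lemma productMoment_comm (x w : ι → ℝ) (p : ℕ) : productMoment x w p = productMoment w x p :=
  mul_comm _ _

lemma productMoment_nonneg_of_even (x w : ι → ℝ) {p : ℕ} (hp : Even p) : 0 ≤ productMoment x w p :=
  mul_nonneg (Finset.sum_nonneg fun _ _ => hp.pow_nonneg _)
    (Finset.sum_nonneg fun _ _ => hp.pow_nonneg _)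

/-- The regression constants `x` and the scores `w` are centred and scaled so that their linear
rank statistic has mean `0` and variance `1` under a uniform random permutation. -/
structure IsStandardizedPair (x w : ι → ℝ) : Prop where
  sum_left : ∑ i, x i = 0
  sum_right : ∑ i, w i = 0
  productMoment_two : productMoment x w 2 = Fintype.card ι - 1

lemma sum_sq_sq_le_card_mul_sum_pow_four (x : ι → ℝ) :
    (∑ i, x i ^ 2) ^ 2 ≤ Fintype.card ι * ∑ i, x i ^ 4 := by
  have hpow : ∀ i, x i ^ 4 = (x i ^ 2) ^ 2 := fun i => by ring
  simp_rw [hpow]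
  exact sq_sum_le_card_mul_sum_sq

lemma sum_pow_three_sq_le (x : ι → ℝ) :
    (∑ i, x i ^ 3) ^ 2 ≤ (∑ i, x i ^ 2) * ∑ i, x i ^ 4 := by
  have hpow3 : ∀ i, x i ^ 3 = x i * x i ^ 2 := fun i => by ring
  have hpow4 : ∀ i, x i ^ 4 = (x i ^ 2) ^ 2 := fun i => by ring
  simp_rw [hpow3, hpow4]
  exact Finset.sum_mul_sq_le_sq_mul_sq _ _ _

lemma IsStandardizedPair.sq_productMoment_three_le {x w : ι → ℝ} (h : IsStandardizedPair x w) :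
    productMoment x w 3 ^ 2 ≤ (Fintype.card ι - 1) * productMoment x w 4 := by
  calc productMoment x w 3 ^ 2 = (∑ i, x i ^ 3) ^ 2 * (∑ i, w i ^ 3) ^ 2 := mul_pow _ _ _
    _ ≤ ((∑ i, x i ^ 2) * ∑ i, x i ^ 4) * ((∑ i, w i ^ 2) * ∑ i, w i ^ 4) := by
      gcongr
      · exact sum_pow_three_sq_le x
      · exact sum_pow_three_sq_le w
    _ = productMoment x w 2 * productMoment x w 4 := mul_mul_mul_comm _ _ _ _
    _ = _ := by rw [h.productMoment_two]

lemma one_lt_cast_card (ι : Type*) [Fintype ι] [Nontrivial ι] : (1 : ℝ) < Fintype.card ι :=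
  Nat.one_lt_cast.2 Fintype.one_lt_card

end ProductMoment

section TwistedExpectation

open Equiv (Perm swap)
open scoped BigOperators

variable {ι : Type*} [Fintype ι] [DecidableEq ι]

/-- The expectation of `G(π) exp(i t T(π))`, where `π` is a uniform random permutation and `T` is
the linear rank statistic of `x` and `w`. Its value at `G = 1` is the characteristic function
of `T`. -/
noncomputable def twistedExpect (x w : ι → ℝ) (t : ℝ) : (Perm ι → ℝ) →ₗ[ℝ] ℂ where
  toFun G := 𝔼 π, (G π : ℂ) * Complex.exp (Complex.I * t * linearRank x w π)
  map_add' F G := by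
    simp only [Pi.add_apply, Complex.ofReal_add, add_mul, Finset.expect_add_distrib]
  map_smul' a G := by
    simp only [Pi.smul_apply, smul_eq_mul, Complex.ofReal_mul, RingHom.id_apply,
      Complex.real_smul, Finset.mul_expect, mul_assoc]

lemma twistedExpect_apply (x w : ι → ℝ) (t : ℝ) (G : Perm ι → ℝ) : twistedExpect x w t G =
    𝔼 π, (G π : ℂ) * Complex.exp (Complex.I * t * linearRank x w π) := rfl

lemma norm_exp_I_mul_mul (t y : ℝ) : ‖Complex.exp (Complex.I * t * y)‖ = 1 := by
  rw [mul_assoc, ← Complex.ofReal_mul, Complex.norm_exp_I_mul_ofReal]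

lemma norm_twistedExpect_le (x w : ι → ℝ) (t : ℝ) (G : Perm ι → ℝ) :
    ‖twistedExpect x w t G‖ ≤ 𝔼 π, |G π| := by
  refine (RCLike.norm_expect_le (K := ℂ)).trans_eq (Finset.expect_congr rfl fun π _ => ?_)
  rw [norm_mul, norm_exp_I_mul_mul, mul_one, Complex.norm_real, Real.norm_eq_abs]

lemma hasDerivAt_twistedExpect (x w : ι → ℝ) (G : Perm ι → ℝ) (t : ℝ) :
    HasDerivAt (fun t => twistedExpect x w t G)
      (Complex.I * twistedExpect x w t (G * linearRank x w)) t := by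
  simp only [twistedExpect_apply, Fintype.expect_eq_sum_div_card, ← mul_div_assoc, Finset.mul_sum]
  refine (HasDerivAt.fun_sum fun π _ => ?_).div_const _
  have hexponent : HasDerivAt (fun t : ℝ => Complex.I * (t : ℂ) * linearRank x w π)
      (Complex.I * linearRank x w π) t := by
    simpa using ((Complex.ofRealCLM.hasDerivAt (x := t)).const_mul Complex.I).mul_const
      (linearRank x w π : ℂ)
  refine (hexponent.cexp.const_mul (G π : ℂ)).congr_deriv ?_
  rw [Pi.mul_apply]
  push_cast
  ring

lemma twistedExpect_linearRank_swap (x w c h : ι → ℝ) (t : ℝ) :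
    twistedExpect x w t (linearRank c h) = twistedExpect w x t (linearRank h c) := by
  refine Fintype.expect_equiv (Equiv.inv (Perm ι)) _ _ fun π => ?_
  simp only [Equiv.inv_apply, linearRank_inv]

/-- Centring removes the contribution of the unperturbed phase, so that only the increments
`exp(-iθ) - 1` remain after exchanging two images. -/
lemma card_mul_twistedExpect_linearRank (x w c h : ι → ℝ) (t : ℝ)
    (hzero : (∑ i, c i) * (∑ i, h i) = 0) :
    (Fintype.card ι : ℂ) * twistedExpect x w t (linearRank c h) =
      𝔼 π, ∑ i, ∑ j, ((c i * h (π j) : ℝ) : ℂ) *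
        (Complex.exp (-(Complex.I * (t * swapDecrement x w π i j : ℝ))) - 1) *
          Complex.exp (Complex.I * t * linearRank x w π) := by
  have hexch := card_mul_expect_sum_mul (fun i => (c i : ℂ)) (fun i => (h i : ℂ))
    fun π => Complex.exp (Complex.I * t * linearRank x w π)
  have hcast : ∀ π, (linearRank c h π : ℂ) = ∑ i, (c i : ℂ) * (h (π i) : ℂ) := fun π => by
    rw [linearRank]
    push_cast
    rfl
  rw [twistedExpect_apply]
  simp_rw [hcast]
  rw [hexch]
  refine Finset.expect_congr rfl fun π _ => ?_
  have hsum : ∑ i, ∑ j, ((c i * h (π j) : ℝ) : ℂ) = 0 := by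
    rw [← Complex.ofReal_zero, ← hzero, ← Equiv.sum_comp π h, Finset.sum_mul_sum]
    push_cast
    rfl
  have hterm : ∀ i j, (c i : ℂ) * (h (π j) : ℂ) *
        Complex.exp (Complex.I * t * linearRank x w (π * swap i j)) =
      ((c i * h (π j) : ℝ) : ℂ) *
        (Complex.exp (-(Complex.I * (t * swapDecrement x w π i j : ℝ))) - 1) *
          Complex.exp (Complex.I * t * linearRank x w π) +
      ((c i * h (π j) : ℝ) : ℂ) * Complex.exp (Complex.I * t * linearRank x w π) :=
    fun i j => by
      rw [linearRank_mul_swap, Complex.ofReal_sub, mul_sub, sub_eq_neg_add, Complex.exp_add]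
      push_cast
      ring_nf
  simp_rw [hterm, Finset.sum_add_distrib, ← Finset.sum_mul]
  rw [hsum, zero_mul, add_zero]

lemma norm_expect_sum_increment_le (x w c h a b : ι → ℝ) (t C : ℝ) (p : ℕ) (ψ : ℝ → ℂ)
    (hC : 0 ≤ C) (hψ : ∀ θ, ‖ψ θ‖ ≤ C * |θ| ^ p)
    (ha : ∀ i j, |c i| * |x i - x j| ^ p ≤ a i + a j)
    (hb : ∀ i j, |h j| * |w i - w j| ^ p ≤ b i + b j) :
    ‖𝔼 π : Perm ι, ∑ i, ∑ j, ((c i * h (π j) : ℝ) : ℂ) * ψ (t * swapDecrement x w π i j) *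
        Complex.exp (Complex.I * t * linearRank x w π)‖ ≤
      C * |t| ^ p * (4 * ((∑ i, a i) * ∑ i, b i)) := by
  refine (RCLike.norm_expect_le (K := ℂ)).trans (le_trans ?_ (mul_le_mul_of_nonneg_left
    (expect_sum_abs_mul_swapDecrement_pow_le x w c h a b p ha hb) (by positivity)))
  rw [Finset.mul_expect]
  refine Finset.expect_le_expect fun π _ => ?_
  simp only [Finset.mul_sum]
  refine norm_sum_le_of_le _ fun i _ => norm_sum_le_of_le _ fun j _ => ?_
  rw [norm_mul, norm_mul, norm_exp_I_mul_mul, mul_one, Complex.norm_real, Real.norm_eq_abs]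
  calc |c i * h (π j)| * ‖ψ (t * swapDecrement x w π i j)‖
      ≤ |c i * h (π j)| * (C * |t * swapDecrement x w π i j| ^ p) := by gcongr; exact hψ _
    _ = C * |t| ^ p * (|c i * h (π j)| * |swapDecrement x w π i j| ^ p) := by
      rw [abs_mul t, mul_pow]
      ring

lemma card_sub_one_mul_expect_linearRank_sq_le [Nonempty ι] {x w : ι → ℝ}
    (hzero : (∑ i, x i) * (∑ i, w i) = 0) :
    ((Fintype.card ι : ℝ) - 1) * 𝔼 π, linearRank x w π ^ 2 ≤ (∑ i, x i ^ 2) * ∑ i, w i ^ 2 := by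
  have hcard : (0 : ℝ) < Fintype.card ι := Nat.cast_pos.2 Fintype.card_pos
  refine le_of_mul_le_mul_left ?_ hcard
  rw [← mul_assoc, expect_linearRank_sq, ← mul_pow, hzero]
  have hleft : 0 ≤ (∑ i, x i ^ 2) * (∑ i, w i) ^ 2 := by positivity
  have hright : 0 ≤ (∑ i, x i) ^ 2 * ∑ i, w i ^ 2 := by positivity
  linarith

lemma expect_abs_mul_le {Ω : Type*} [Fintype Ω] {F G : Ω → ℝ} {C : ℝ} (hC : 0 ≤ C)
    (h : (𝔼 a, F a ^ 2) * 𝔼 a, G a ^ 2 ≤ C ^ 2) : 𝔼 a, |F a * G a| ≤ C := by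
  refine le_of_sq_le_sq ?_ hC
  have hcs := Finset.expect_mul_sq_le_sq_mul_sq Finset.univ (fun a => |F a|) fun a => |G a|
  simp only [sq_abs, ← abs_mul] at hcs
  exact hcs.trans h

namespace IsStandardizedPair

variable [Nontrivial ι] {x w : ι → ℝ}

lemma expect_linearRank_sq_eq_one (h : IsStandardizedPair x w) : 𝔼 π, linearRank x w π ^ 2 = 1 := by
  have hcard := one_lt_cast_card ι
  have hmoment := expect_linearRank_sq x w
  rw [h.sum_left, h.sum_right, show (∑ i, x i ^ 2) * ∑ i, w i ^ 2 = _ from h.productMoment_two]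
    at hmoment
  have hpos : (0 : ℝ) < Fintype.card ι * (Fintype.card ι - 1) :=
    mul_pos (by linarith) (by linarith)
  exact mul_left_cancel₀ hpos.ne' (hmoment.trans (by ring))

lemma expect_linearRank_squares_sq_le (h : IsStandardizedPair x w) :
    𝔼 π, linearRank (x ^ 2) (w ^ 2) π ^ 2 ≤ 1 + productMoment x w 4 := by
  have hcard := one_lt_cast_card ι
  have hcard2 : (2 : ℝ) ≤ Fintype.card ι := Nat.ofNat_le_cast.2 Fintype.one_lt_card
  have hP := productMoment_nonneg_of_even x w (p := 4) (by decide)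
  have hmoment := expect_linearRank_sq (x ^ 2) (w ^ 2)
  simp only [Pi.pow_apply, ← pow_mul, Nat.reduceMul] at hmoment
  rw [← mul_pow, show (∑ i, x i ^ 2) * ∑ i, w i ^ 2 = _ from h.productMoment_two,
    show (∑ i, x i ^ 4) * ∑ i, w i ^ 4 = productMoment x w 4 from rfl] at hmoment
  have hleft : 0 ≤ (∑ i, x i ^ 4) * (∑ i, w i ^ 2) ^ 2 := by positivity
  have hright : 0 ≤ (∑ i, x i ^ 2) ^ 2 * ∑ i, w i ^ 4 := by positivity
  have hpos : (0 : ℝ) < Fintype.card ι * (Fintype.card ι - 1) :=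
    mul_pos (by linarith) (by linarith)
  refine le_of_mul_le_mul_left (hmoment.trans_le ?_) hpos
  nlinarith [mul_nonneg hP (mul_nonneg (by linarith : (0 : ℝ) ≤ Fintype.card ι)
    (sub_nonneg.2 hcard2))]

lemma expect_abs_linearRank_mul_linearRank_squares_le (h : IsStandardizedPair x w) :
    𝔼 π, |linearRank x w π * linearRank (x ^ 2) (w ^ 2) π| ≤ 1 + productMoment x w 4 := by
  have hP := productMoment_nonneg_of_even x w (p := 4) (by decide)
  refine expect_abs_mul_le (by linarith) ?_
  rw [h.expect_linearRank_sq_eq_one, one_mul]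
  nlinarith [h.expect_linearRank_squares_sq_le]

lemma expect_abs_linearRank_sq_right_mul_sq_left_le (h : IsStandardizedPair x w) :
    𝔼 π, |linearRank x (w ^ 2) π * linearRank (x ^ 2) w π| ≤ 1 + productMoment x w 4 := by
  have hcard := one_lt_cast_card ι
  have hcard2 : (2 : ℝ) ≤ Fintype.card ι := Nat.ofNat_le_cast.2 Fintype.one_lt_card
  have hP := productMoment_nonneg_of_even x w (p := 4) (by decide)
  have hright := card_sub_one_mul_expect_linearRank_sq_le (x := x) (w := w ^ 2)
    (by rw [h.sum_left, zero_mul])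
  have hleft := card_sub_one_mul_expect_linearRank_sq_le (x := x ^ 2) (w := w)
    (by rw [h.sum_right, mul_zero])
  simp only [Pi.pow_apply, ← pow_mul, Nat.reduceMul] at hright hleft
  refine expect_abs_mul_le (by linarith) (le_trans ?_ (by nlinarith :
    productMoment x w 4 ≤ (1 + productMoment x w 4) ^ 2))
  set U := 𝔼 π, linearRank x (w ^ 2) π ^ 2
  set V := 𝔼 π, linearRank (x ^ 2) w π ^ 2
  have hU : 0 ≤ U := Finset.expect_nonneg fun _ _ => sq_nonneg _
  have hV : 0 ≤ V := Finset.expect_nonneg fun _ _ => sq_nonneg _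
  refine le_of_mul_le_mul_left (a := (Fintype.card ι : ℝ) - 1) ?_ (by linarith)
  calc ((Fintype.card ι : ℝ) - 1) * (U * V)
      ≤ ((Fintype.card ι - 1) * (U * V)) * (Fintype.card ι - 1) :=
        le_mul_of_one_le_right (mul_nonneg (by linarith) (mul_nonneg hU hV)) (by linarith)
    _ = ((Fintype.card ι - 1) * U) * ((Fintype.card ι - 1) * V) := by ring
    _ ≤ ((∑ i, x i ^ 2) * ∑ i, w i ^ 4) * ((∑ i, x i ^ 4) * ∑ i, w i ^ 2) :=
        mul_le_mul hright hleft (mul_nonneg (by linarith) hV) (by positivity)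
    _ = productMoment x w 2 * productMoment x w 4 := by
        rw [productMoment, productMoment]
        ring
    _ = _ := by rw [h.productMoment_two]

end IsStandardizedPair

end TwistedExpectation

section RankODE

open Equiv (Perm)
open scoped BigOperators

variable {ι : Type*} [Fintype ι] [DecidableEq ι] {x w : ι → ℝ}

lemma sum_sq_mul_norm_twistedExpect_cube_left_le [Nonempty ι] (hw : ∑ i, w i = 0) (t : ℝ) :
    (∑ i, w i ^ 2) * ‖twistedExpect x w t (linearRank (x ^ 3) w)‖ ≤
      16 * |t| * productMoment x w 4 := by
  have hcard : (0 : ℝ) < Fintype.card ι := Nat.cast_pos.2 Fintype.card_pos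
  have hfirst := norm_expect_sum_increment_le x w (x ^ 3) w (fun i => 2 ^ 1 * |x i| ^ 4)
    (fun i => 2 ^ 1 * |w i| ^ 2) t 1 1 (fun θ => Complex.exp (-(Complex.I * θ)) - 1) zero_le_one
    (fun θ => by simpa using norm_exp_neg_I_mul_sub_one_le θ)
    (fun i j => by simpa only [Pi.pow_apply, abs_pow] using abs_pow_mul_abs_sub_pow_le _ _ 3 1)
    (fun i j => by
      rw [abs_sub_comm, add_comm]
      simpa only [pow_one] using abs_pow_mul_abs_sub_pow_le (w j) (w i) 1 1)
  rw [← card_mul_twistedExpect_linearRank x w (x ^ 3) w t (by rw [hw, mul_zero]), norm_mul,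
    Complex.norm_natCast] at hfirst
  simp only [← Finset.mul_sum, sq_abs, Even.pow_abs (show Even 4 by decide)] at hfirst
  refine le_of_mul_le_mul_left ?_ hcard
  calc (Fintype.card ι : ℝ) *
        ((∑ i, w i ^ 2) * ‖twistedExpect x w t (linearRank (x ^ 3) w)‖)
      = (∑ i, w i ^ 2) *
        (Fintype.card ι * ‖twistedExpect x w t (linearRank (x ^ 3) w)‖) := by ring
    _ ≤ (∑ i, w i ^ 2) *
        (1 * |t| ^ 1 * (4 * ((2 ^ 1 * ∑ i, x i ^ 4) * (2 ^ 1 * ∑ i, w i ^ 2)))) := by gcongr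
    _ = 16 * |t| * (∑ i, x i ^ 4) * (∑ i, w i ^ 2) ^ 2 := by ring
    _ ≤ 16 * |t| * (∑ i, x i ^ 4) * (Fintype.card ι * ∑ i, w i ^ 4) := by
      gcongr
      exact sum_sq_sq_le_card_mul_sum_pow_four w
    _ = _ := by
      rw [productMoment]
      ring

lemma sum_sq_mul_norm_twistedExpect_cube_right_le [Nonempty ι] (hx : ∑ i, x i = 0) (t : ℝ) :
    (∑ i, x i ^ 2) * ‖twistedExpect x w t (linearRank x (w ^ 3))‖ ≤
      16 * |t| * productMoment x w 4 := by
  rw [twistedExpect_linearRank_swap, productMoment_comm]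
  exact sum_sq_mul_norm_twistedExpect_cube_left_le hx t

/-- Second order expansion, in the increments, of `𝔼 T exp(i t T)` after exchanging two images. -/
lemma norm_card_mul_twistedExpect_add_le (hx : ∑ i, x i = 0) (t : ℝ) :
    ‖(Fintype.card ι : ℂ) * twistedExpect x w t (linearRank x w)
      + Complex.I * t *
        twistedExpect x w t (fun π => ∑ i, ∑ j, x i * w (π j) * swapDecrement x w π i j)
      + t ^ 2 / 2 *
        twistedExpect x w t (fun π => ∑ i, ∑ j, x i * w (π j) * swapDecrement x w π i j ^ 2)‖
      ≤ 1024 * |t| ^ 3 * productMoment x w 4 := by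
  have hthird := norm_expect_sum_increment_le x w x w (fun i => 2 ^ 3 * |x i| ^ 4)
    (fun i => 2 ^ 3 * |w i| ^ 4) t 4 3
    (fun θ => Complex.exp (-(Complex.I * θ)) - 1 + Complex.I * θ + θ ^ 2 / 2) (by norm_num)
    norm_exp_neg_I_mul_sub_quadratic_le
    (fun i j => by simpa only [pow_one] using abs_pow_mul_abs_sub_pow_le (x i) (x j) 1 3)
    (fun i j => by
      rw [abs_sub_comm, add_comm]
      simpa only [pow_one] using abs_pow_mul_abs_sub_pow_le (w j) (w i) 1 3)
  simp only [← Finset.mul_sum, Even.pow_abs (show Even 4 by decide)] at hthird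
  rw [card_mul_twistedExpect_linearRank x w x w t (by rw [hx, zero_mul]), twistedExpect_apply,
    twistedExpect_apply, Finset.mul_expect, Finset.mul_expect, ← Finset.expect_add_distrib,
    ← Finset.expect_add_distrib]
  refine (le_of_eq (congrArg _ (Finset.expect_congr rfl fun π _ => ?_))).trans
    (hthird.trans_eq ?_)
  · push_cast
    simp only [Finset.sum_mul, Finset.mul_sum, ← Finset.sum_add_distrib]
    refine Finset.sum_congr rfl fun i _ => Finset.sum_congr rfl fun j _ => ?_
    ring
  · rw [productMoment]
    ring

variable [Nontrivial ι]

namespace IsStandardizedPair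

lemma norm_twistedExpect_sum_decrement_add_le (h : IsStandardizedPair x w) (t : ℝ) :
    ‖twistedExpect x w t (fun π => ∑ i, ∑ j, x i * w (π j) * swapDecrement x w π i j)
      + Fintype.card ι * twistedExpect x w t 1‖ ≤ 2 := by
  have hsum : (fun π => ∑ i, ∑ j, x i * w (π j) * swapDecrement x w π i j)
      + (Fintype.card ι : ℝ) • (1 : Perm ι → ℝ) = fun π => 1 - linearRank x w π ^ 2 := by
    ext π
    rw [Pi.add_apply, sum_mul_swapDecrement h.sum_left h.sum_right,
      show (∑ i, x i ^ 2) * ∑ i, w i ^ 2 = _ from h.productMoment_two, Pi.smul_apply,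
      Pi.one_apply, smul_eq_mul]
    ring
  rw [← Complex.ofReal_natCast, ← Complex.real_smul, ← map_smul, ← map_add, hsum]
  refine (norm_twistedExpect_le x w t _).trans ?_
  calc 𝔼 π, |1 - linearRank x w π ^ 2| ≤ 𝔼 π, (1 + linearRank x w π ^ 2) :=
        Finset.expect_le_expect fun π _ => (abs_sub _ _).trans_eq (by simp)
    _ = 2 := by
      rw [Finset.expect_add_distrib, Fintype.expect_const, h.expect_linearRank_sq_eq_one]
      norm_num

lemma norm_twistedExpect_sum_decrement_sq_sub_le (h : IsStandardizedPair x w) (t : ℝ) :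
    ‖twistedExpect x w t (fun π => ∑ i, ∑ j, x i * w (π j) * swapDecrement x w π i j ^ 2)
      - productMoment x w 3 * twistedExpect x w t 1‖ ≤
      64 * |t| * productMoment x w 4 + 9 * (1 + productMoment x w 4) := by
  have hsum : (fun π => ∑ i, ∑ j, x i * w (π j) * swapDecrement x w π i j ^ 2)
      - productMoment x w 3 • (1 : Perm ι → ℝ) =
      (-2 : ℝ) • (∑ i, w i ^ 2) • linearRank (x ^ 3) w
        + (-2 : ℝ) • (∑ i, x i ^ 2) • linearRank x (w ^ 3)
        + (-4 : ℝ) • (fun π => linearRank x w π * linearRank (x ^ 2) (w ^ 2) π)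
        + (5 : ℝ) • (fun π => linearRank x (w ^ 2) π * linearRank (x ^ 2) w π) := by
    ext π
    simp only [Pi.sub_apply, Pi.add_apply, Pi.smul_apply, Pi.one_apply, smul_eq_mul]
    rw [sum_mul_swapDecrement_sq h.sum_left h.sum_right, productMoment]
    ring
  have hcubeL := sum_sq_mul_norm_twistedExpect_cube_left_le (x := x) h.sum_right t
  have hcubeR := sum_sq_mul_norm_twistedExpect_cube_right_le (w := w) h.sum_left t
  have hmixed := (norm_twistedExpect_le x w t _).trans
    h.expect_abs_linearRank_mul_linearRank_squares_le
  have hcross := (norm_twistedExpect_le x w t _).trans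
    h.expect_abs_linearRank_sq_right_mul_sq_left_le
  have hx2 : 0 ≤ ∑ i, x i ^ 2 := by positivity
  have hw2 : 0 ≤ ∑ i, w i ^ 2 := by positivity
  rw [← Complex.real_smul, ← map_smul, ← map_sub, hsum]
  simp only [map_add, map_smul]
  refine norm_add₄_le.trans ?_
  simp only [norm_smul, Real.norm_eq_abs, abs_of_nonneg hx2, abs_of_nonneg hw2, abs_neg,
    Nat.abs_ofNat]
  linarith

lemma norm_twistedExpect_ode_le (h : IsStandardizedPair x w) (t : ℝ) :
    ‖Complex.I * twistedExpect x w t (linearRank x w) + t * twistedExpect x w t 1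
      + Complex.I * (t ^ 2 / 2) * (productMoment x w 3 / Fintype.card ι : ℝ)
        * twistedExpect x w t 1‖ ≤
      1100 * ((productMoment x w 4 + 1) / Fintype.card ι) * (|t| + |t| ^ 3) := by
  have hexpansion := norm_card_mul_twistedExpect_add_le (w := w) h.sum_left t
  have hlinear := h.norm_twistedExpect_sum_decrement_add_le t
  have hquadratic := h.norm_twistedExpect_sum_decrement_sq_sub_le t
  set f := twistedExpect x w t 1
  set S₁ := twistedExpect x w t fun π => ∑ i, ∑ j, x i * w (π j) * swapDecrement x w π i j
  set S₂ := twistedExpect x w t fun π => ∑ i, ∑ j, x i * w (π j) * swapDecrement x w π i j ^ 2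
  set R := (Fintype.card ι : ℂ) * twistedExpect x w t (linearRank x w) + Complex.I * t * S₁
    + t ^ 2 / 2 * S₂ with hR
  have hcardC : (Fintype.card ι : ℂ) ≠ 0 := Nat.cast_ne_zero.2 Fintype.card_ne_zero
  have hsplit : Complex.I * twistedExpect x w t (linearRank x w) + t * f
      + Complex.I * (t ^ 2 / 2) * (productMoment x w 3 / Fintype.card ι : ℝ) * f =
      (Complex.I * R + t * (S₁ + Fintype.card ι * f)
        + -(Complex.I * (t ^ 2 / 2)) * (S₂ - productMoment x w 3 * f)) / Fintype.card ι := by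
    rw [hR, eq_div_iff hcardC]
    push_cast
    field_simp
    linear_combination (-2 * t * S₁) * Complex.I_sq
  have hsq : ‖-(Complex.I * ((t : ℂ) ^ 2 / 2))‖ = |t| ^ 2 / 2 := by simp
  rw [hsplit, norm_div, Complex.norm_natCast, ← mul_div_assoc (1100 : ℝ), div_mul_eq_mul_div]
  gcongr
  refine norm_add₃_le.trans ?_
  rw [norm_mul, norm_mul, norm_mul, hsq, Complex.norm_I, one_mul, Complex.norm_real,
    Real.norm_eq_abs]
  have hP := productMoment_nonneg_of_even x w (p := 4) (by decide)
  have hpow : |t| ^ 2 ≤ |t| + |t| ^ 3 := by nlinarith [abs_nonneg t, sq_nonneg (|t| - 1)]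
  calc ‖R‖ + |t| * ‖S₁ + Fintype.card ι * f‖ + |t| ^ 2 / 2 * ‖S₂ - productMoment x w 3 * f‖
      ≤ 1024 * |t| ^ 3 * productMoment x w 4 + |t| * 2 + |t| ^ 2 / 2 *
        (64 * |t| * productMoment x w 4 + 9 * (1 + productMoment x w 4)) := by gcongr
    _ = 1056 * productMoment x w 4 * |t| ^ 3 + 2 * |t|
        + 9 / 2 * (1 + productMoment x w 4) * |t| ^ 2 := by ring
    _ ≤ 1056 * (1 + productMoment x w 4) * (|t| + |t| ^ 3)
        + 2 * (1 + productMoment x w 4) * (|t| + |t| ^ 3)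
        + 9 / 2 * (1 + productMoment x w 4) * (|t| + |t| ^ 3) := by
      gcongr ?_ + ?_ + _ * ?_
      · gcongr <;> linarith [abs_nonneg t]
      · nlinarith [mul_nonneg hP (abs_nonneg t), mul_nonneg hP (pow_nonneg (abs_nonneg t) 3),
          pow_nonneg (abs_nonneg t) 3]
    _ ≤ _ := by
      linarith [show 0 ≤ (1 + productMoment x w 4) * (|t| + |t| ^ 3) by positivity]

theorem norm_twistedExpect_one_sub_edgeworthCharFun_le (h : IsStandardizedPair x w) (t : ℝ) :
    ‖twistedExpect x w t 1 - edgeworthCharFun (productMoment x w 3 / Fintype.card ι) t‖ ≤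
      1101 * ((productMoment x w 4 + 1) / Fintype.card ι) * (t ^ 2 + t ^ 4) := by
  have hderiv : ∀ t, HasDerivAt (fun t => twistedExpect x w t 1)
      (Complex.I * twistedExpect x w t (linearRank x w)) t := fun t => by
    simpa only [one_mul] using hasDerivAt_twistedExpect x w 1 t
  have hzero : twistedExpect x w 0 1 = 1 := by
    simp [twistedExpect_apply]
  have hP := productMoment_nonneg_of_even x w (p := 4) (by decide)
  have hcard := one_lt_cast_card ι
  have hskew : (productMoment x w 3 / Fintype.card ι) ^ 2 ≤
      (productMoment x w 4 + 1) / Fintype.card ι := by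
    rw [div_pow, div_le_div_iff₀ (by positivity) (by positivity)]
    nlinarith [mul_le_mul_of_nonneg_right h.sq_productMoment_three_le
      (zero_le_one.trans hcard.le)]
  refine (norm_sub_edgeworthCharFun_le hderiv hzero h.norm_twistedExpect_ode_le t).trans ?_
  gcongr ?_ * _
  linarith

end IsStandardizedPair

end RankODE

/-! ### Decay of the characteristic function by random transpositions -/

section RandomTranspositions

open Equiv (Perm swap)
open scoped BigOperators

variable {ι κ : Type*}

/-- The average of the phase of `linearRank x w` over exchanging or not exchanging the images of
`i` and `j`, relative to its phase at `π`. -/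
noncomputable def swapPhaseMean (x w : ι → ℝ) (t : ℝ) (π : Perm ι) (i j : ι) : ℂ :=
  (1 + Complex.exp (-(Complex.I * (t * swapDecrement x w π i j)))) / 2

lemma norm_swapPhaseMean (x w : ι → ℝ) (t : ℝ) (π : Perm ι) (i j : ι) :
    ‖swapPhaseMean x w t π i j‖ = |Real.cos (t * swapDecrement x w π i j / 2)| := by
  set θ : ℝ := t * swapDecrement x w π i j / 2 with hθ
  have hfactor : swapPhaseMean x w t π i j = Complex.exp (-θ * Complex.I) * (Real.cos θ : ℝ) := by
    rw [swapPhaseMean, Complex.ofReal_cos, Complex.cos, mul_div_assoc', mul_add,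
      ← Complex.exp_add, ← Complex.exp_add, neg_mul, neg_add_cancel, Complex.exp_zero, hθ]
    push_cast
    ring_nf
  rw [hfactor, norm_mul, ← Complex.ofReal_neg, Complex.norm_exp_ofReal_mul_I, one_mul,
    Complex.norm_real, Real.norm_eq_abs]

lemma swapDecrement_mul_swap_of_ne [DecidableEq ι] (x w : ι → ℝ) (π : Perm ι) {a b i j : ι}
    (hai : i ≠ a) (hbi : i ≠ b) (haj : j ≠ a) (hbj : j ≠ b) :
    swapDecrement x w (π * swap a b) i j = swapDecrement x w π i j := by
  simp only [swapDecrement, Equiv.Perm.mul_apply, Equiv.swap_apply_of_ne_of_ne hai hbi,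
    Equiv.swap_apply_of_ne_of_ne haj hbj]

variable [Fintype ι] [DecidableEq ι]

/-- Averaging over independent transpositions of disjoint pairs does not change the law of `π`. -/
lemma expect_prod_swapPhaseMean_mul (x w : ι → ℝ) (t : ℝ) (e : κ ⊕ κ ↪ ι) (L : Finset κ) :
    𝔼 π, (∏ l ∈ L, swapPhaseMean x w t π (e (.inl l)) (e (.inr l))) *
      Complex.exp (Complex.I * t * linearRank x w π) = twistedExpect x w t 1 := by
  classical
  induction L using Finset.induction_on with
  | empty => simp [twistedExpect_apply]
  | insert m L hm ih =>
    set F : Perm ι → ℂ := fun π => (∏ l ∈ L, swapPhaseMean x w t π (e (.inl l)) (e (.inr l))) *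
      Complex.exp (Complex.I * t * linearRank x w π)
    have hother : ∀ π, ∏ l ∈ L, swapPhaseMean x w t (π * swap (e (.inl m)) (e (.inr m)))
        (e (.inl l)) (e (.inr l)) =
          ∏ l ∈ L, swapPhaseMean x w t π (e (.inl l)) (e (.inr l)) := fun π =>
      Finset.prod_congr rfl fun l hl => by
        have hlm : l ≠ m := fun h => hm (h ▸ hl)
        rw [swapPhaseMean, swapDecrement_mul_swap_of_ne, swapPhaseMean] <;> simp [hlm]
    have hsplit : ∀ π, (∏ l ∈ insert m L, swapPhaseMean x w t π (e (.inl l)) (e (.inr l))) *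
        Complex.exp (Complex.I * t * linearRank x w π) =
          2⁻¹ * F π + 2⁻¹ * F (π * swap (e (.inl m)) (e (.inr m))) := fun π => by
      have hphase : Complex.exp (-(Complex.I *
          (t * swapDecrement x w π (e (.inl m)) (e (.inr m))))) *
            Complex.exp (Complex.I * t * linearRank x w π) =
          Complex.exp (Complex.I * t * linearRank x w (π * swap (e (.inl m)) (e (.inr m)))) := by
        rw [← Complex.exp_add, linearRank_mul_swap]
        push_cast
        ring_nf
      simp only [F, hother, ← hphase, Finset.prod_insert hm]
      rw [swapPhaseMean]
      ring
    have hreindex : 𝔼 π, F (π * swap (e (.inl m)) (e (.inr m))) = 𝔼 π, F π :=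
      Fintype.expect_equiv (Equiv.mulRight (swap (e (.inl m)) (e (.inr m)))) _ _ fun _ => rfl
    rw [← ih]
    simp only [hsplit, Finset.expect_add_distrib, ← Finset.mul_expect, hreindex]
    ring

lemma expect_prod_abs_cos_insert_eq [DecidableEq κ] (x w : ι → ℝ) (t : ℝ) {e : κ ⊕ κ ↪ ι} {m : κ}
    {L : Finset κ} (hm : m ∉ L) {b : ι} (hb : b ∉ (insert (.inl m) (L.disjSum L)).map e) :
    𝔼 π, ∏ l ∈ insert m L, |Real.cos (t * swapDecrement x w π (e (.inl l)) (e (.inr l)) / 2)| =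
      𝔼 π, |Real.cos
          (t * ((x (e (.inl m)) - x (e (.inr m))) * (w (π (e (.inl m))) - w (π b))) / 2)| *
        ∏ l ∈ L, |Real.cos (t * swapDecrement x w π (e (.inl l)) (e (.inr l)) / 2)| := by
  obtain ⟨hbm, hbL⟩ : e (.inl m) ≠ b ∧ ∀ l ∈ L, e (.inl l) ≠ b ∧ e (.inr l) ≠ b := by
    simp only [Finset.mem_map, Finset.mem_insert, Finset.mem_disjSum] at hb
    aesop
  refine (Fintype.expect_equiv (Equiv.mulRight (swap (e (.inr m)) b)) _ _ fun π => ?_).symm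
  rw [Finset.prod_insert hm, Equiv.coe_mulRight]
  refine congrArg₂ (· * ·) ?_ (Finset.prod_congr rfl fun l hl => ?_)
  · simp only [swapDecrement, Equiv.Perm.mul_apply, Equiv.swap_apply_left,
      Equiv.swap_apply_of_ne_of_ne (e.injective.ne Sum.inl_ne_inr) hbm]
  · have hlm : l ≠ m := fun h => hm (h ▸ hl)
    have hlb := hbL l hl
    rw [swapDecrement_mul_swap_of_ne] <;> simp [hlm, hlb]

variable [Fintype κ]

/-- Conditionally on the images of the other pairs, the image of `e (.inr m)` is uniform over the
remaining values. -/
lemma expect_prod_abs_cos_insert_le [DecidableEq κ] {x w : ι → ℝ} {t ρ : ℝ} {e : κ ⊕ κ ↪ ι} {m : κ}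
    (hρ : ∀ B : Finset ι, Fintype.card ι ≤ #B + 2 * Fintype.card κ → ∀ v : ℝ,
      ∑ b ∈ B, |Real.cos (t * ((x (e (.inl m)) - x (e (.inr m))) * (v - w b)) / 2)| ≤ ρ * #B)
    {L : Finset κ} (hm : m ∉ L) :
    𝔼 π, ∏ l ∈ insert m L, |Real.cos (t * swapDecrement x w π (e (.inl l)) (e (.inr l)) / 2)| ≤
      ρ * 𝔼 π, ∏ l ∈ L, |Real.cos (t * swapDecrement x w π (e (.inl l)) (e (.inr l)) / 2)| := by
  set P : Perm ι → ℝ := fun π =>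
    ∏ l ∈ L, |Real.cos (t * swapDecrement x w π (e (.inl l)) (e (.inr l)) / 2)|
  set D : Perm ι → ι → ℝ := fun π b => |Real.cos
    (t * ((x (e (.inl m)) - x (e (.inr m))) * (w (π (e (.inl m))) - w (π b))) / 2)|
  set U : Finset (κ ⊕ κ) := insert (.inl m) (L.disjSum L)
  set B : Finset ι := (U.map e)ᶜ with hB
  have hcard : Fintype.card ι ≤ #B + 2 * Fintype.card κ := by
    have hL := Finset.card_insert_of_notMem hm ▸ Finset.card_le_univ (insert m L)
    have hU : #U ≤ #L + #L + 1 := (Finset.card_insert_le _ _).trans_eq (by simp)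
    rw [hB, Finset.card_compl, Finset.card_map]
    lia
  have hBpos : (0 : ℝ) < #B :=
    Nat.cast_pos.2 <| Finset.card_pos.2 ⟨e (.inr m), by simp [hB, U, hm]⟩
  refine le_of_mul_le_mul_left ?_ hBpos
  calc (#B : ℝ) * 𝔼 π, ∏ l ∈ insert m L,
        |Real.cos (t * swapDecrement x w π (e (.inl l)) (e (.inr l)) / 2)|
      = 𝔼 π, (∑ b ∈ B, D π b) * P π := by
        simp only [Finset.sum_mul, Finset.expect_sum_comm]
        rw [← nsmul_eq_mul, ← Finset.sum_const]
        exact Finset.sum_congr rfl fun b hb =>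
          expect_prod_abs_cos_insert_eq x w t hm (Finset.mem_compl.1 hb)
    _ ≤ 𝔼 π, ρ * #B * P π := by
        refine Finset.expect_le_expect fun π _ =>
          mul_le_mul_of_nonneg_right ?_ (Finset.prod_nonneg fun _ _ => abs_nonneg _)
        simpa [D] using hρ (B.map π.toEmbedding) (by simpa using hcard) (w (π (e (.inl m))))
    _ = #B * (ρ * 𝔼 π, P π) := by
        rw [← Finset.mul_expect]
        ring

theorem norm_twistedExpect_one_le_pow (x w : ι → ℝ) {t ρ : ℝ} (hρ₀ : 0 ≤ ρ) (e : κ ⊕ κ ↪ ι)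
    (hρ : ∀ l, ∀ B : Finset ι, Fintype.card ι ≤ #B + 2 * Fintype.card κ → ∀ v : ℝ,
      ∑ b ∈ B, |Real.cos (t * ((x (e (.inl l)) - x (e (.inr l))) * (v - w b)) / 2)| ≤ ρ * #B) :
    ‖twistedExpect x w t 1‖ ≤ ρ ^ Fintype.card κ := by
  classical
  have hpow : ∀ L : Finset κ,
      𝔼 π, ∏ l ∈ L, |Real.cos (t * swapDecrement x w π (e (.inl l)) (e (.inr l)) / 2)| ≤
        ρ ^ #L := by
    intro L
    induction L using Finset.induction_on with
    | empty => simp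
    | insert m L hm ih =>
      rw [Finset.card_insert_of_notMem hm, pow_succ']
      exact (expect_prod_abs_cos_insert_le (hρ m) hm).trans (by gcongr)
  rw [← expect_prod_swapPhaseMean_mul x w t e Finset.univ]
  refine (RCLike.norm_expect_le (K := ℂ)).trans ((Finset.expect_congr rfl fun π _ => ?_).trans_le
    (hpow Finset.univ))
  rw [norm_mul, norm_exp_I_mul_mul, mul_one, norm_prod]
  exact Finset.prod_congr rfl fun l _ => norm_swapPhaseMean x w t π _ _

end RandomTranspositions

section CosineSum

lemma abs_cos_le_one_sub_sin_sq_div_two (θ : ℝ) : |Real.cos θ| ≤ 1 - Real.sin θ ^ 2 / 2 := by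
  rw [Real.sin_sq, ← sq_abs (Real.cos θ)]
  nlinarith [sq_nonneg (|Real.cos θ| - 1)]

lemma sin_sub_sq_div_two_le (θ φ : ℝ) :
    Real.sin (θ - φ) ^ 2 / 2 ≤ Real.sin θ ^ 2 + Real.sin φ ^ 2 := by
  calc Real.sin (θ - φ) ^ 2 / 2
      ≤ (Real.sin θ * Real.cos φ) ^ 2 + (Real.cos θ * Real.sin φ) ^ 2 := by
        rw [Real.sin_sub]
        linarith [sq_nonneg (Real.sin θ * Real.cos φ + Real.cos θ * Real.sin φ)]
    _ ≤ Real.sin θ ^ 2 + Real.sin φ ^ 2 := by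
        rw [mul_pow, mul_pow]
        exact add_le_add (mul_le_of_le_one_right (sq_nonneg _) (Real.cos_sq_le_one φ))
          (mul_le_of_le_one_left (sq_nonneg _) (Real.cos_sq_le_one θ))

variable {ι κ : Type*} [Fintype ι] [Fintype κ]

lemma card_le_card_filter_mem_add_two_mul_card_compl [DecidableEq ι] {a b : κ → ι}
    (ha : a.Injective) (hb : b.Injective) (B : Finset ι) :
    Fintype.card κ ≤ #{k | a k ∈ B ∧ b k ∈ B} + 2 * #Bᶜ := by
  classical
  have hpre : ∀ {f : κ → ι}, f.Injective → #{k | f k ∈ Bᶜ} ≤ #Bᶜ := fun hf =>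
    Finset.card_le_card_of_injOn _ (fun _ hk => (Finset.mem_filter.1 hk).2) hf.injOn
  have hcover : (Finset.univ : Finset κ) ⊆ Finset.univ.filter (fun k => a k ∈ B ∧ b k ∈ B) ∪
      (Finset.univ.filter (fun k => a k ∈ Bᶜ) ∪ Finset.univ.filter fun k => b k ∈ Bᶜ) := by
    intro k _
    simp only [Finset.mem_union, Finset.mem_filter, Finset.mem_univ, Finset.mem_compl, true_and]
    tauto
  have hcard := (Finset.card_le_card hcover).trans
    ((Finset.card_union_le _ _).trans (Nat.add_le_add_left (Finset.card_union_le _ _) _))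
  have := hpre ha
  have := hpre hb
  rw [Finset.card_univ] at hcard
  lia

/-- Since `sin (θ - φ)` cannot be large unless `sin θ` or `sin φ` is, each pair `a k`, `b k`
contained in `B` loses a fixed amount. -/
lemma sum_abs_cos_le (w : ι → ℝ) {a b : κ → ι} (ha : a.Injective) (hb : b.Injective)
    {θ s₀ : ℝ} (hs₀ : 0 ≤ s₀) (hsin : ∀ k, s₀ ≤ Real.sin (θ * (w (b k) - w (a k))) ^ 2)
    (v : ℝ) (B : Finset ι) :
    ∑ i ∈ B, |Real.cos (θ * (v - w i))| ≤
      #B - s₀ / 8 * (Fintype.card κ - 2 * (Fintype.card ι - #B)) := by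
  classical
  set S : Finset κ := {k | a k ∈ B ∧ b k ∈ B}
  have hpush : ∀ {f : κ → ι}, f.Injective → (∀ k ∈ S, f k ∈ B) →
      ∑ k ∈ S, Real.sin (θ * (v - w (f k))) ^ 2 ≤ ∑ i ∈ B, Real.sin (θ * (v - w i)) ^ 2 := by
    intro f hf hfB
    rw [← Finset.sum_image (g := f) (f := fun i => Real.sin (θ * (v - w i)) ^ 2) hf.injOn]
    exact Finset.sum_le_sum_of_subset_of_nonneg (Finset.image_subset_iff.2 hfB)
      fun _ _ _ => sq_nonneg _
  have hpairs : #S * (s₀ / 2) ≤ ∑ k ∈ S, Real.sin (θ * (v - w (a k))) ^ 2 +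
      ∑ k ∈ S, Real.sin (θ * (v - w (b k))) ^ 2 := by
    rw [← Finset.sum_add_distrib, ← nsmul_eq_mul, ← Finset.sum_const]
    refine Finset.sum_le_sum fun k _ =>
      le_trans ?_ (sin_sub_sq_div_two_le (θ * (v - w (a k))) (θ * (v - w (b k))))
    rw [← mul_sub, sub_sub_sub_cancel_left]
    exact div_le_div_of_nonneg_right (hsin k) two_pos.le
  have hcompl : (#Bᶜ : ℝ) = Fintype.card ι - #B := by
    rw [Finset.card_compl, Nat.cast_sub (Finset.card_le_univ B)]
  have hcard : (Fintype.card κ : ℝ) - 2 * (Fintype.card ι - #B) ≤ #S := by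
    rw [← hcompl, sub_le_iff_le_add]
    exact_mod_cast card_le_card_filter_mem_add_two_mul_card_compl ha hb B
  calc ∑ i ∈ B, |Real.cos (θ * (v - w i))|
      ≤ ∑ i ∈ B, (1 - Real.sin (θ * (v - w i)) ^ 2 / 2) :=
        Finset.sum_le_sum fun i _ => abs_cos_le_one_sub_sin_sq_div_two _
    _ = #B - (∑ i ∈ B, Real.sin (θ * (v - w i)) ^ 2) / 2 := by
        rw [Finset.sum_sub_distrib, ← Finset.sum_div, Finset.sum_const, nsmul_one]
    _ ≤ #B - s₀ / 8 * #S := by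
        linarith [hpush ha fun k hk => (Finset.mem_filter.1 hk).2.1,
          hpush hb fun k hk => (Finset.mem_filter.1 hk).2.2]
    _ ≤ _ := by gcongr

end CosineSum

/-! ### Decay of the characteristic function for approximating scores -/

section Scores

open Filter Topology

/-- The scores generated by `J` at the grid `1/(n+1), …, n/(n+1)`; the index `j` starts at `0`. -/
noncomputable def approxScore (J : ℝ → ℝ) (n : ℕ) (j : Fin n) : ℝ :=
  J (((j : ℕ) + 1 : ℝ) / ((n : ℝ) + 1))

lemma exists_deriv_ne_zero_of_ne {f : ℝ → ℝ} {U : Set ℝ} (hU : IsOpen U) (hU' : IsPreconnected U)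
    (hf : DifferentiableOn ℝ f U) {a b : ℝ} (ha : a ∈ U) (hb : b ∈ U) (hne : f a ≠ f b) :
    ∃ t ∈ U, deriv f t ≠ 0 := by
  by_contra! hzero
  exact hne (hU.is_const_of_deriv_eq_zero hU' hf hzero ha hb)

lemma eventually_abs_sub_bounds_of_hasStrictDerivAt {f : ℝ → ℝ} {f' a : ℝ}
    (hf : HasStrictDerivAt f f' a) (hf' : f' ≠ 0) :
    ∀ᶠ p in 𝓝 (a, a), 3 * |f'| / 4 * |p.1 - p.2| ≤ |f p.1 - f p.2| ∧
      |f p.1 - f p.2| ≤ 2 * (3 * |f'| / 4) * |p.1 - p.2| := by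
  filter_upwards [hf.isLittleO.bound (show 0 < |f'| / 4 by positivity)] with p hp
  simp only [Real.norm_eq_abs, ContinuousLinearMap.toSpanSingleton_apply, smul_eq_mul] at hp
  have hlower := abs_sub_abs_le_abs_sub ((p.1 - p.2) * f') (f p.1 - f p.2)
  have hupper := abs_sub_abs_le_abs_sub (f p.1 - f p.2) ((p.1 - p.2) * f')
  rw [abs_sub_comm ((p.1 - p.2) * f'), abs_mul] at hlower
  rw [abs_mul] at hupper
  have := mul_nonneg (abs_nonneg (p.1 - p.2)) (abs_nonneg f')
  constructor <;> linarith

lemma exists_Icc_abs_sub_bounds {J : ℝ → ℝ} (hJ : ContDiffOn ℝ 1 J (Set.Ioo 0 1)) {t₁ t₂ : ℝ}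
    (ht₁ : t₁ ∈ Set.Ioo (0 : ℝ) 1) (ht₂ : t₂ ∈ Set.Ioo (0 : ℝ) 1) (hne : J t₁ ≠ J t₂) :
    ∃ τ η c : ℝ, 0 < τ ∧ 0 < η ∧ 0 < c ∧ τ + 2 * η < 1 ∧
      ∀ s ∈ Set.Icc τ (τ + 2 * η), ∀ s' ∈ Set.Icc τ (τ + 2 * η),
        c * |s' - s| ≤ |J s' - J s| ∧ |J s' - J s| ≤ 2 * c * |s' - s| := by
  obtain ⟨τ, hτ, hderiv⟩ := exists_deriv_ne_zero_of_ne isOpen_Ioo isPreconnected_Ioo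
    (hJ.differentiableOn one_ne_zero) ht₁ ht₂ hne
  have hstrict := (hJ.contDiffAt (isOpen_Ioo.mem_nhds hτ)).hasStrictDerivAt one_ne_zero
  obtain ⟨δ, hδ, hball⟩ := Metric.eventually_nhds_iff.1
    (eventually_abs_sub_bounds_of_hasStrictDerivAt hstrict hderiv)
  obtain ⟨hτ₀, hτ₁⟩ := hτ
  set η := min (δ / 4) ((1 - τ) / 4)
  have hη : 0 < η := lt_min (by positivity) (by linarith)
  have hηδ : η ≤ δ / 4 := min_le_left _ _
  have hητ : η ≤ (1 - τ) / 4 := min_le_right _ _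
  have hnear : ∀ s ∈ Set.Icc τ (τ + 2 * η), dist s τ < δ := fun s hs => by
    rw [Real.dist_eq, abs_of_nonneg (sub_nonneg.2 hs.1)]
    linarith [hs.2]
  refine ⟨τ, η, 3 * |deriv J τ| / 4, hτ₀, hη, by positivity, by linarith, fun s hs s' hs' => ?_⟩
  exact hball (y := (s', s)) (max_lt (hnear s' hs') (hnear s hs))

lemma exists_pairs_shift {τ η : ℝ} (hτ : 0 < τ) (hη : 0 < η) (hτη : τ + 2 * η < 1) {n h : ℕ}
    (hn : 2 / η ≤ n) (hh : (h : ℝ) ≤ (n + 1) * η) :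
    ∃ N : ℕ, ∃ a b : Fin N → Fin n, a.Injective ∧ b.Injective ∧ η * n / 2 ≤ N ∧
      ∀ k, (b k : ℕ) = a k + h ∧ τ * (n + 1) ≤ (a k : ℕ) + 1 ∧
        (b k : ℕ) + 1 ≤ (τ + 2 * η) * (n + 1) := by
  obtain ⟨i, hi⟩ : ∃ i, ⌈τ * (n + 1)⌉₊ = i + 1 :=
    Nat.exists_eq_succ_of_ne_zero (Nat.ceil_pos.2 (by positivity)).ne'
  have hi_ge : τ * (n + 1) ≤ (i : ℝ) + 1 := by exact_mod_cast hi ▸ Nat.le_ceil (τ * ((n : ℝ) + 1))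
  have hi_lt : (i : ℝ) + 1 < τ * (n + 1) + 1 := by
    exact_mod_cast hi ▸ Nat.ceil_lt_add_one (show 0 ≤ τ * ((n : ℝ) + 1) by positivity)
  set N := ⌊((n : ℝ) + 1) * η⌋₊
  have hN_le : (N : ℝ) ≤ (n + 1) * η := Nat.floor_le (by positivity)
  have hN_gt : (n + 1) * η < (N : ℝ) + 1 := Nat.lt_floor_add_one _
  have hk_le : ∀ k : Fin N, (i : ℝ) + k + h + 1 ≤ (τ + 2 * η) * (n + 1) := fun k => by
    have : ((k : ℕ) : ℝ) + 1 ≤ N := by exact_mod_cast k.2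
    linarith
  have hlt : ∀ k : Fin N, i + k + h < n := fun k => by
    have : (τ + 2 * η) * (n + 1) < 1 * ((n : ℝ) + 1) := by gcongr
    have : ((i + k + h : ℕ) : ℝ) < n := by
      push_cast
      linarith [hk_le k]
    exact_mod_cast this
  refine ⟨N, fun k => ⟨i + k, by linarith [hlt k]⟩, fun k => ⟨i + k + h, hlt k⟩,
    fun k l hkl => Fin.ext (by simpa using hkl), fun k l hkl => Fin.ext (by simpa using hkl), ?_,
    fun k => ⟨rfl, ?_, by push_cast; exact hk_le k⟩⟩
  · rw [div_le_iff₀ hη] at hn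
    linarith
  · push_cast
    linarith [Nat.cast_nonneg (α := ℝ) (k : ℕ)]

/-- The pairs are taken from a window on which `J` is bi-Lipschitz. -/
lemma exists_pairs_approxScore {J : ℝ → ℝ} (hJ : ContDiffOn ℝ 1 J (Set.Ioo 0 1)) {t₁ t₂ : ℝ}
    (ht₁ : t₁ ∈ Set.Ioo (0 : ℝ) 1) (ht₂ : t₂ ∈ Set.Ioo (0 : ℝ) 1) (hne : J t₁ ≠ J t₂) :
    ∃ η c : ℝ, 0 < η ∧ η ≤ 1 ∧ 0 < c ∧ ∀ n h : ℕ, 2 / η ≤ n → (h : ℝ) ≤ (n + 1) * η →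
      ∃ N : ℕ, ∃ a b : Fin N → Fin n, a.Injective ∧ b.Injective ∧ η * n / 2 ≤ N ∧
        ∀ k, c * (h / (n + 1)) ≤ |approxScore J n (b k) - approxScore J n (a k)| ∧
          |approxScore J n (b k) - approxScore J n (a k)| ≤ 2 * c * (h / (n + 1)) := by
  obtain ⟨τ, η, c, hτ, hη, hc, hτη, hwindow⟩ := exists_Icc_abs_sub_bounds hJ ht₁ ht₂ hne
  refine ⟨η, c, hη, by linarith, hc, fun n h hn hh => ?_⟩
  obtain ⟨N, a, b, ha, hb, hN, hab⟩ := exists_pairs_shift hτ hη hτη hn hh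
  refine ⟨N, a, b, ha, hb, hN, fun k => ?_⟩
  obtain ⟨hshift, hge, hle⟩ := hab k
  have hn₁ : (0 : ℝ) < n + 1 := by positivity
  have hshift' : ((b k : ℕ) : ℝ) = (a k : ℕ) + h := by exact_mod_cast hshift
  have hdist : |(((b k : ℕ) : ℝ) + 1) / (n + 1) - (((a k : ℕ) : ℝ) + 1) / (n + 1)| =
      h / (n + 1) := by
    rw [hshift', ← sub_div, add_sub_add_right_eq_sub, add_sub_cancel_left,
      abs_of_nonneg (by positivity)]
  have hab_le : (((a k : ℕ) : ℝ) + 1) / (n + 1) ≤ (((b k : ℕ) : ℝ) + 1) / (n + 1) := by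
    rw [hshift']
    gcongr
    exact le_add_of_nonneg_right (Nat.cast_nonneg h)
  have ha_ge := (le_div_iff₀ hn₁).2 hge
  have hb_le := (div_le_iff₀ hn₁).2 hle
  rw [← hdist]
  exact hwindow _ ⟨ha_ge, hab_le.trans hb_le⟩ _ ⟨ha_ge.trans hab_le, hb_le⟩

lemma sq_div_four_le_sin_sq {y : ℝ} (hy : |y| ≤ 1) : y ^ 2 / 4 ≤ Real.sin y ^ 2 := by
  have hsin := Real.mul_abs_le_abs_sin (hy.trans Real.one_le_pi_div_two)
  have hhalf : |y| / 2 ≤ |Real.sin y| := by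
    refine le_trans ?_ hsin
    rw [div_mul_eq_mul_div, div_le_div_iff₀ two_pos Real.pi_pos]
    nlinarith [Real.pi_le_four, abs_nonneg y]
  calc y ^ 2 / 4 = (|y| / 2) ^ 2 := by
        rw [div_pow, sq_abs]
        norm_num
    _ ≤ |Real.sin y| ^ 2 := by gcongr
    _ = Real.sin y ^ 2 := sq_abs _

lemma exists_natCast_half_le_le {y : ℝ} (hy : 1 ≤ y) : ∃ h : ℕ, y / 2 ≤ h ∧ h ≤ y := by
  have hpos : (1 : ℝ) ≤ ⌊y⌋₊ := by exact_mod_cast Nat.one_le_floor_iff y |>.2 hy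
  exact ⟨⌊y⌋₊, by linarith [Nat.lt_floor_add_one y], Nat.floor_le (by linarith)⟩

/-- The spacing of the pairs is chosen of order `min 1 (1 / |u|)`, so that the phase differences
are bounded away from `0` without leaving the range where `sin` is comparable to its argument. -/
lemma exists_pairs_sin_sq {J : ℝ → ℝ} (hJ : ContDiffOn ℝ 1 J (Set.Ioo 0 1)) {t₁ t₂ : ℝ}
    (ht₁ : t₁ ∈ Set.Ioo (0 : ℝ) 1) (ht₂ : t₂ ∈ Set.Ioo (0 : ℝ) 1) (hne : J t₁ ≠ J t₂) :
    ∃ η c : ℝ, 0 < η ∧ η ≤ 1 ∧ 0 < c ∧ ∀ n : ℕ, 2 / η ≤ n → ∀ u : ℝ, u ≠ 0 → c * |u| ≤ n →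
      ∃ N : ℕ, ∃ a b : Fin N → Fin n, a.Injective ∧ b.Injective ∧ η * n / 2 ≤ N ∧ ∀ k,
        min (η * c * |u|) 1 ^ 2 / 64 ≤
          Real.sin (u * (approxScore J n (b k) - approxScore J n (a k))) ^ 2 := by
  obtain ⟨η, c, hη, hη₁, hc, hpairs⟩ := exists_pairs_approxScore hJ ht₁ ht₂ hne
  refine ⟨η, 2 * c, hη, hη₁, by positivity, fun n hn u hu hun => ?_⟩
  have hcu : 0 < 2 * c * |u| := by positivity
  have hn₁ : (0 : ℝ) < n + 1 := by positivity
  set ζ := min η (1 / (2 * c * |u|)) with hζ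
  have hζ_mul : 2 * c * |u| * ζ = min (η * (2 * c) * |u|) 1 := by
    rw [hζ, mul_min_of_nonneg _ _ hcu.le, mul_one_div_cancel hcu.ne']
    ring_nf
  have hone : 1 ≤ (n + 1) * ζ := by
    rw [hζ, mul_min_of_nonneg _ _ hn₁.le, mul_one_div, le_min_iff, one_le_div₀ hcu]
    rw [div_le_iff₀ hη] at hn
    constructor <;> linarith
  obtain ⟨h, hh_ge, hh_le⟩ := exists_natCast_half_le_le hone
  obtain ⟨N, a, b, ha, hb, hN, hab⟩ :=
    hpairs n h hn (hh_le.trans (by gcongr; exact min_le_left _ _))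
  refine ⟨N, a, b, ha, hb, hN, fun k => ?_⟩
  obtain ⟨hlower, hupper⟩ := hab k
  set Δ := approxScore J n (b k) - approxScore J n (a k)
  have hh_ge' : ζ / 2 ≤ h / (n + 1) := by
    rw [le_div_iff₀ hn₁]
    linarith
  have hh_le' : h / (n + 1) ≤ ζ := by
    rw [div_le_iff₀ hn₁]
    linarith
  have hphase_le : |u * Δ| ≤ 1 := by
    calc |u * Δ| = |u| * |Δ| := abs_mul _ _
      _ ≤ |u| * (2 * c * ζ) := by gcongr; exact hupper.trans (by gcongr)
      _ = min (η * (2 * c) * |u|) 1 := by rw [← hζ_mul]; ring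
      _ ≤ 1 := min_le_right _ _
  have hphase_ge : min (η * (2 * c) * |u|) 1 / 4 ≤ |u * Δ| := by
    calc min (η * (2 * c) * |u|) 1 / 4 = |u| * (c * (ζ / 2)) := by rw [← hζ_mul]; ring
      _ ≤ |u| * |Δ| := by gcongr; exact le_trans (by gcongr) hlower
      _ = |u * Δ| := (abs_mul _ _).symm
  calc min (η * (2 * c) * |u|) 1 ^ 2 / 64 = (min (η * (2 * c) * |u|) 1 / 4) ^ 2 / 4 := by ring
    _ ≤ |u * Δ| ^ 2 / 4 := by gcongr
    _ ≤ Real.sin (u * Δ) ^ 2 := by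
        rw [sq_abs]
        exact sq_div_four_le_sin_sq hphase_le

lemma min_mul_min_le_min {a b : ℝ} (ha : 0 ≤ a) (hb : 0 ≤ b) :
    min a 1 * min b 1 ≤ min (a * b) 1 :=
  le_min (mul_le_mul (min_le_left _ _) (min_le_left _ _) (le_min hb zero_le_one) ha)
    (mul_le_one₀ (min_le_right _ _) (le_min hb zero_le_one) (min_le_right _ _))

lemma min_one_sq {a : ℝ} (ha : 0 ≤ a) : min a 1 ^ 2 = min (a ^ 2) 1 := by
  rcases le_total a 1 with h | h
  · rw [min_eq_left h, min_eq_left (pow_le_one₀ ha h)]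
  · rw [min_eq_right h, min_eq_right (one_le_pow₀ h), one_pow]

lemma exists_sum_abs_cos_approxScore_le {J : ℝ → ℝ} (hJ : ContDiffOn ℝ 1 J (Set.Ioo 0 1))
    {t₁ t₂ : ℝ} (ht₁ : t₁ ∈ Set.Ioo (0 : ℝ) 1) (ht₂ : t₂ ∈ Set.Ioo (0 : ℝ) 1) (hne : J t₁ ≠ J t₂) :
    ∃ δ : ℝ, 0 < δ ∧ δ ≤ 1 ∧ ∀ n : ℕ, 1 ≤ δ * n → ∀ u : ℝ, |u| ≤ δ * n → ∀ (v : ℝ)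
      (B : Finset (Fin n)), (1 - δ) * n ≤ #B →
        ∑ j ∈ B, |Real.cos (u * (v - approxScore J n j))| ≤ (1 - δ * min (u ^ 2) 1) * #B := by
  obtain ⟨η, c, hη, hη₁, hc, hpairs⟩ := exists_pairs_sin_sq hJ ht₁ ht₂ hne
  set δ := min (η / 8) (min (1 / c) (η / 2048 * min ((η * c) ^ 2) 1))
  have hδ : 0 < δ := by positivity
  have hδη : δ ≤ η / 8 := min_le_left _ _
  have hδc : δ ≤ 1 / c := (min_le_right _ _).trans (min_le_left _ _)
  have hδs : δ ≤ η / 2048 * min ((η * c) ^ 2) 1 := (min_le_right _ _).trans (min_le_right _ _)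
  refine ⟨δ, hδ, by linarith, fun n hn u hun v B hB => ?_⟩
  rcases eq_or_ne u 0 with rfl | hu
  · simp
  have hn₀ : (0 : ℝ) ≤ n := Nat.cast_nonneg n
  have hn_ge : 2 / η ≤ n := by
    rw [div_le_iff₀ hη]
    linarith [mul_le_mul_of_nonneg_right hδη hn₀]
  have hcu : c * |u| ≤ n := by
    calc c * |u| ≤ c * (1 / c * n) := by gcongr; exact hun.trans (by gcongr)
      _ = n := by field_simp
  obtain ⟨N, a, b, ha, hb, hN, hsin⟩ := hpairs n hn_ge u hu hcu
  have hsum := sum_abs_cos_le (approxScore J n) ha hb (by positivity) hsin v B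
  have hrate : δ * min (u ^ 2) 1 ≤ min (η * c * |u|) 1 ^ 2 / 64 / 8 * (η / 4) := by
    have hmin := min_mul_min_le_min (sq_nonneg (η * c)) (sq_nonneg u)
    rw [min_one_sq (by positivity), mul_pow, sq_abs]
    calc δ * min (u ^ 2) 1 ≤ η / 2048 * min ((η * c) ^ 2) 1 * min (u ^ 2) 1 := by gcongr
      _ ≤ η / 2048 * min ((η * c) ^ 2 * u ^ 2) 1 := by
        rw [mul_assoc]
        gcongr
      _ = _ := by ring
  have hBn : (#B : ℝ) ≤ n := by exact_mod_cast (Finset.card_le_univ B).trans_eq (Fintype.card_fin n)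
  rw [Fintype.card_fin, Fintype.card_fin] at hsum
  calc _ ≤ _ := hsum
    _ ≤ #B - min (η * c * |u|) 1 ^ 2 / 64 / 8 * (η / 4 * #B) := by
        gcongr
        linarith [mul_le_mul_of_nonneg_right hδη hn₀, mul_le_mul_of_nonneg_left hBn hη.le]
    _ ≤ #B - δ * min (u ^ 2) 1 * #B := by
        rw [← mul_assoc]
        gcongr
    _ = _ := by ring

end Scores

section Decay

variable {ι : Type*} [Fintype ι]

/-- Paley–Zygmund: the part of `x` below `c / 8` or above `8 * C / c` contributes at most half of
the sum of its positive part. -/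
lemma le_card_filter_mem_Icc {c C : ℝ} (hc : 0 < c) (hC : 0 < C) {x : ι → ℝ} (hx : ∑ i, x i = 0)
    (habs : c * Fintype.card ι ≤ ∑ i, |x i|) (hsq : ∑ i, x i ^ 2 ≤ C * Fintype.card ι) :
    c ^ 2 / (32 * C) * Fintype.card ι ≤ #{i | x i ∈ Set.Icc (c / 8) (8 * C / c)} := by
  classical
  set K := 8 * C / c with hK
  have hKpos : 0 < K := by positivity
  have hpos : ∀ i, (|x i| + x i) / 2 ≤
      c / 8 + x i ^ 2 / K + K * (if x i ∈ Set.Icc (c / 8) K then 1 else 0) := fun i => by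
    have hquad : 0 ≤ x i ^ 2 / K := by positivity
    rcases lt_or_ge (x i) (c / 8) with hlow | hlow
    · rw [if_neg fun h => hlow.not_ge h.1]
      rcases abs_cases (x i) with h | h <;> linarith
    rw [abs_of_nonneg (by linarith : 0 ≤ x i)]
    rcases le_or_gt (x i) K with hhigh | hhigh
    · rw [if_pos ⟨hlow, hhigh⟩]
      linarith
    · have : x i ≤ x i ^ 2 / K := by
        rw [le_div_iff₀ hKpos, sq]
        gcongr
        linarith
      rw [if_neg fun h => hhigh.not_ge h.2]
      linarith
  have hsum := Finset.sum_le_sum (s := Finset.univ) fun i _ => hpos i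
  simp only [← Finset.sum_div, Finset.sum_add_distrib, hx, ← Finset.mul_sum, Finset.sum_boole,
    Finset.sum_const, Finset.card_univ, nsmul_eq_mul] at hsum
  have htail : (∑ i, x i ^ 2) / K ≤ c / 8 * Fintype.card ι := by
    rw [div_le_iff₀ hKpos, hK]
    refine hsq.trans_eq ?_
    field_simp
  refine le_of_mul_le_mul_left ?_ hKpos
  calc K * (c ^ 2 / (32 * C) * Fintype.card ι) = c / 4 * Fintype.card ι := by
        rw [hK]
        field_simp
        ring
    _ ≤ _ := by linarith

lemma exists_embedding_sub_mem_Icc {c C : ℝ} (hc : 0 < c) (hC : 0 < C) {x : ι → ℝ}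
    (hx : ∑ i, x i = 0) (habs : c * Fintype.card ι ≤ ∑ i, |x i|)
    (hsq : ∑ i, x i ^ 2 ≤ C * Fintype.card ι) {M : ℕ}
    (hM : (M : ℝ) ≤ c ^ 2 / (32 * C) * Fintype.card ι) :
    ∃ e : Fin M ⊕ Fin M ↪ ι,
      ∀ l, (x (e (.inl l)) - x (e (.inr l))) / 2 ∈ Set.Icc (c / 8) (8 * C / c) := by
  classical
  have hembed : ∀ y : ι → ℝ, (M : ℝ) ≤ #{i | y i ∈ Set.Icc (c / 8) (8 * C / c)} →
      ∃ f : Fin M ↪ ι, ∀ l, y (f l) ∈ Set.Icc (c / 8) (8 * C / c) := fun y hy => by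
    obtain ⟨f⟩ := Function.Embedding.nonempty_of_card_le (α := Fin M)
      (β := {i // y i ∈ Set.Icc (c / 8) (8 * C / c)})
      (by rw [Fintype.card_fin, Fintype.card_subtype]; exact_mod_cast hy)
    exact ⟨f.trans (.subtype _), fun l => (f l).2⟩
  obtain ⟨p, hp⟩ := hembed x (hM.trans (le_card_filter_mem_Icc hc hC hx habs hsq))
  obtain ⟨q, hq⟩ := hembed (fun i => -x i) (hM.trans (le_card_filter_mem_Icc hc hC
    (by rw [Finset.sum_neg_distrib, hx, neg_zero]) (by simpa only [abs_neg] using habs)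
    (by simpa only [neg_sq] using hsq)))
  refine ⟨⟨Sum.elim p q, p.injective.sumElim q.injective fun l l' h => ?_⟩, fun l => ?_⟩
  · have hpos := (hp l).1
    have hneg := (hq l').1
    rw [h] at hpos
    linarith
  · have hpl := hp l
    have hql := hq l
    simp only [Set.mem_Icc, Function.Embedding.coeFn_mk, Sum.elim_inl, Sum.elim_inr] at *
    constructor <;> linarith

lemma min_sq_le_min_sq_mul_div {ε K sl su δ n σ t D : ℝ} (hε : 0 < ε) (hsl : 0 < sl) (hδ : 0 < δ)
    (hn : 0 < n) (hσ : 0 < σ) (hσl : sl * n ≤ σ ^ 2) (hσu : σ ^ 2 ≤ su * n) (ht : |t| ≤ n)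
    (hD : D ∈ Set.Icc ε K) (hnK : K ^ 2 / (δ ^ 2 * sl) ≤ n) :
    |t * D / σ| ≤ δ * n ∧
      min (ε ^ 2 / su) 1 * min (t ^ 2 / n) 1 ≤ min ((t * D / σ) ^ 2) 1 := by
  have hsun : 0 < su * n := (pow_pos hσ 2).trans_le hσu
  have hsu : 0 < su := pos_of_mul_pos_left hsun hn.le
  have hD₀ : 0 < D := hε.trans_le hD.1
  constructor
  · rw [div_le_iff₀ (by positivity)] at hnK
    refine abs_le_of_sq_le_sq ?_ (by positivity)
    rw [div_pow, div_le_iff₀ (pow_pos hσ 2), mul_pow, ← sq_abs t]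
    calc |t| ^ 2 * D ^ 2 ≤ n ^ 2 * K ^ 2 := by
          gcongr
          exact hD.2
      _ ≤ n ^ 2 * (n * (δ ^ 2 * sl)) := by gcongr
      _ = (δ * n) ^ 2 * (sl * n) := by ring
      _ ≤ (δ * n) ^ 2 * σ ^ 2 := by gcongr
  · refine (min_mul_min_le_min (by positivity) (by positivity)).trans (min_le_min_right 1 ?_)
    calc ε ^ 2 / su * (t ^ 2 / n) = (t * ε) ^ 2 / (su * n) := by
          field_simp
      _ ≤ (t * D) ^ 2 / σ ^ 2 := by
          rw [mul_pow, mul_pow]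
          gcongr
          exact hD.1
      _ = (t * D / σ) ^ 2 := (div_pow _ _ _).symm

lemma one_sub_pow_le_exp {a : ℝ} (ha : a ≤ 1) (M : ℕ) : (1 - a) ^ M ≤ Real.exp (-(M * a)) := by
  rw [← mul_neg, Real.exp_nat_mul]
  exact pow_le_pow_left₀ (by linarith) (Real.one_sub_le_exp_neg a) M

lemma norm_twistedExpect_one_le_exp [DecidableEq ι] {κ : Type*} [Fintype κ] {x S : ι → ℝ}
    {δ ε K sl su σ μ t : ℝ} (hδ : 0 < δ) (hδ₁ : δ ≤ 1) (hε : 0 < ε) (hsl : 0 < sl) (hσ : 0 < σ)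
    (hn : (0 : ℝ) < Fintype.card ι) (hσl : sl * Fintype.card ι ≤ σ ^ 2)
    (hσu : σ ^ 2 ≤ su * Fintype.card ι) (ht : |t| ≤ Fintype.card ι)
    (hnK : K ^ 2 / (δ ^ 2 * sl) ≤ Fintype.card ι)
    (hS : ∀ u : ℝ, |u| ≤ δ * Fintype.card ι → ∀ (v : ℝ) (B : Finset ι),
      (1 - δ) * Fintype.card ι ≤ #B →
        ∑ j ∈ B, |Real.cos (u * (v - S j))| ≤ (1 - δ * min (u ^ 2) 1) * #B)
    (e : κ ⊕ κ ↪ ι) (he : ∀ l, (x (e (.inl l)) - x (e (.inr l))) / 2 ∈ Set.Icc ε K)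
    (hκ : 2 * (Fintype.card κ : ℝ) ≤ δ * Fintype.card ι) :
    ‖twistedExpect x (fun j => (S j - μ) / σ) t 1‖ ≤ Real.exp
      (-(Fintype.card κ * (δ * (min (ε ^ 2 / su) 1 * min (t ^ 2 / Fintype.card ι) 1)))) := by
  have hsu : 0 < su := pos_of_mul_pos_left ((pow_pos hσ 2).trans_le hσu) hn.le
  set rate := min (ε ^ 2 / su) 1 * min (t ^ 2 / Fintype.card ι) 1
  have hrate : δ * rate ≤ 1 := mul_le_one₀ hδ₁ (by positivity)
    (mul_le_one₀ (min_le_right _ _) (by positivity) (min_le_right _ _))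
  have hfactor : ∀ l, ∀ B : Finset ι, Fintype.card ι ≤ #B + 2 * Fintype.card κ → ∀ v, ∑ b ∈ B,
      |Real.cos (t * ((x (e (.inl l)) - x (e (.inr l))) * (v - (S b - μ) / σ)) / 2)| ≤
        (1 - δ * rate) * #B := by
    intro l B hB v
    obtain ⟨hu_le, hu_ge⟩ :=
      min_sq_le_min_sq_mul_div hε hsl hδ hn hσ hσl hσu ht (he l) hnK
    have hBcard : (1 - δ) * Fintype.card ι ≤ #B := by
      have hB' : (Fintype.card ι : ℝ) ≤ #B + 2 * Fintype.card κ := by exact_mod_cast hB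
      linarith
    refine le_trans (le_of_eq (Finset.sum_congr rfl fun b _ => ?_))
      ((hS _ hu_le (v * σ + μ) B hBcard).trans (by gcongr))
    congr 2
    field_simp
    ring
  exact (norm_twistedExpect_one_le_pow x _ (by linarith) e hfactor).trans
    (one_sub_pow_le_exp hrate _)

theorem exists_norm_twistedExpect_one_le_exp {J : ℝ → ℝ} (hJ : ContDiffOn ℝ 1 J (Set.Ioo 0 1))
    {t₁ t₂ : ℝ} (ht₁ : t₁ ∈ Set.Ioo (0 : ℝ) 1) (ht₂ : t₂ ∈ Set.Ioo (0 : ℝ) 1) (hne : J t₁ ≠ J t₂)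
    {c C sl su : ℝ} (hc : 0 < c) (hC : 0 < C) (hsl : 0 < sl) (hsu : 0 < su) :
    ∃ γ : ℝ, 0 < γ ∧ ∃ N : ℕ, ∀ n : ℕ, N ≤ n → ∀ x : Fin n → ℝ, ∑ i, x i = 0 →
      c * n ≤ ∑ i, |x i| → ∑ i, x i ^ 2 ≤ C * n →
      ∀ σ : ℝ, 0 < σ → sl * n ≤ σ ^ 2 → σ ^ 2 ≤ su * n → ∀ μ t : ℝ, |t| ≤ n →
        ‖twistedExpect x (fun j => (approxScore J n j - μ) / σ) t 1‖ ≤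
          Real.exp (-(γ * min (t ^ 2) n)) := by
  obtain ⟨δ, hδ, hδ₁, hcos⟩ := exists_sum_abs_cos_approxScore_le hJ ht₁ ht₂ hne
  set ε := c / 8
  set K := 8 * C / c
  set κ := min (ε ^ 2 / su) 1
  set c' := min (c ^ 2 / (32 * C)) (δ / 2)
  have : 0 < κ := by positivity
  have hc' : 0 < c' := by positivity
  refine ⟨δ * κ * c' / 2, by positivity, ⌈1 / δ⌉₊ + ⌈2 / c'⌉₊ + ⌈K ^ 2 / (δ ^ 2 * sl)⌉₊ + 1,
    fun n hn x hx habs hsq σ hσ hσl hσu μ t ht => ?_⟩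
  have hn_δ : 1 / δ ≤ n := Nat.ceil_le.1 (by lia)
  have hn_c' : 2 / c' ≤ n := Nat.ceil_le.1 (by lia)
  have hn_K : K ^ 2 / (δ ^ 2 * sl) ≤ n := Nat.ceil_le.1 (by lia)
  have hn₀ : (0 : ℝ) < n := Nat.cast_pos.2 (by lia)
  rw [div_le_iff₀' hδ] at hn_δ
  rw [div_le_iff₀' hc'] at hn_c'
  obtain ⟨M, hM_ge, hM_le⟩ := exists_natCast_half_le_le (y := c' * n) (by linarith)
  obtain ⟨e, he⟩ := exists_embedding_sub_mem_Icc hc hC hx (by simpa using habs) (by simpa using hsq)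
    (M := M) (hM_le.trans (by rw [Fintype.card_fin]; gcongr; exact min_le_left _ _))
  have hM_δ : 2 * (M : ℝ) ≤ δ * n := by
    have : c' * n ≤ δ / 2 * n := by gcongr; exact min_le_right _ _
    linarith
  have hmin : min (t ^ 2) (n : ℝ) = min (t ^ 2 / n) 1 * n := by
    rw [min_mul_of_nonneg _ _ hn₀.le, one_mul, div_mul_cancel₀ _ hn₀.ne']
  have hbound := norm_twistedExpect_one_le_exp (κ := Fin M) (x := x) (su := su) (K := K) (μ := μ)
    (t := t) (S := approxScore J n) hδ hδ₁ (by positivity : 0 < ε) hsl hσ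
  simp only [Fintype.card_fin] at hbound
  refine (hbound hn₀ hσl hσu ht hn_K (hcos n hn_δ) e he hM_δ).trans (Real.exp_le_exp.2 ?_)
  rw [hmin, neg_le_neg_iff]
  calc δ * κ * c' / 2 * (min (t ^ 2 / n) 1 * n) = c' * n / 2 * (δ * (κ * min (t ^ 2 / n) 1)) := by
        ring
    _ ≤ M * (δ * (κ * min (t ^ 2 / n) 1)) := by gcongr

end Decay

/-! ### Growth of the scores and their moments -/

section ScoreGrowth

lemma rpow_neg_mul_one_sub_le {β s : ℝ} (hβ : 0 ≤ β) (hs : s ∈ Set.Ioo (0 : ℝ) 1) :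
    (s * (1 - s)) ^ (-β) ≤ 2 ^ β * (s ^ (-β) + (1 - s) ^ (-β)) := by
  have hs₀ : 0 < s := hs.1
  have hs₁ : 0 < 1 - s := sub_pos.2 hs.2
  have hhalf : ∀ y : ℝ, 1 / 2 ≤ y → y ^ (-β) ≤ 2 ^ β := fun y hy =>
    (Real.rpow_le_rpow_of_nonpos (by norm_num) hy (by linarith)).trans_eq (by
      rw [one_div, Real.inv_rpow zero_le_two, ← Real.rpow_neg zero_le_two, neg_neg])
  rw [Real.mul_rpow hs₀.le hs₁.le, mul_add]
  rcases le_total (1 / 2) s with h | h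
  · refine le_add_of_nonneg_of_le (by positivity) ?_
    gcongr
    exact hhalf s h
  · refine le_add_of_le_of_nonneg ?_ (by positivity)
    rw [mul_comm]
    gcongr
    exact hhalf _ (by linarith)

lemma abs_sub_le_abs_sub_of_abs_deriv_le {D : Set ℝ} (hD : Convex ℝ D) {f g f' g' : ℝ → ℝ}
    (hf : ∀ x ∈ D, HasDerivAt f (f' x) x)
    (hg : ∀ x ∈ D, HasDerivAt g (g' x) x) (hfg : ∀ x ∈ D, |f' x| ≤ g' x) {x y : ℝ} (hx : x ∈ D)
    (hy : y ∈ D) : |f y - f x| ≤ |g y - g x| := by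
  wlog hxy : x ≤ y generalizing x y
  · rw [abs_sub_comm (f y), abs_sub_comm (g y)]
    exact this hy hx (le_of_not_ge hxy)
  have hmono : ∀ {h h' : ℝ → ℝ}, (∀ x ∈ D, HasDerivAt h (h' x) x) → (∀ x ∈ D, 0 ≤ h' x) →
      h x ≤ h y := fun hh hpos =>
    monotoneOn_of_deriv_nonneg hD (fun z hz => (hh z hz).continuousAt.continuousWithinAt)
      (fun z hz => (hh z (interior_subset hz)).differentiableAt.differentiableWithinAt)
      (fun z hz => (hh z (interior_subset hz)).deriv.symm ▸ hpos z (interior_subset hz))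
      hx hy hxy
  have hsub := hmono (fun z hz => (hg z hz).sub (hf z hz))
    fun z hz => sub_nonneg.2 (le_of_abs_le (hfg z hz))
  have hadd := hmono (fun z hz => (hg z hz).add (hf z hz))
    fun z hz => neg_le_iff_add_nonneg'.1 (neg_le_of_abs_le (hfg z hz))
  simp only [Pi.sub_apply, Pi.add_apply] at hsub hadd
  rw [abs_le]
  constructor <;> linarith [le_abs_self (g y - g x)]

lemma condV.exists_abs_sub_le {J : ℝ → ℝ} {α : ℝ} (hV : condV J α) (hα : 0 < α)
    (hJ : DifferentiableOn ℝ J (Set.Ioo 0 1)) :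
    ∃ K : ℝ, 0 < K ∧ ∀ t ∈ Set.Ioo (0 : ℝ) 1,
      |J t - J (1 / 2)| ≤ K * (t ^ (-α) + (1 - t) ^ (-α)) := by
  obtain ⟨Γ, hΓ, hJ'⟩ := hV
  set K := Γ * 2 ^ (1 + α) / α with hK
  have hKpos : 0 < K := by positivity
  set b : ℝ → ℝ := fun s => K * ((1 - s) ^ (-α) - s ^ (-α)) with hb
  have hb' : ∀ s ∈ Set.Ioo (0 : ℝ) 1,
      HasDerivAt b (K * (α * (s ^ (-(1 + α)) + (1 - s) ^ (-(1 + α))))) s := by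
    intro s hs
    have hleft := (hasDerivAt_id s).rpow_const (p := -α) (Or.inl hs.1.ne')
    have hright := ((hasDerivAt_id s).const_sub 1).rpow_const (p := -α)
      (Or.inl (sub_pos.2 hs.2).ne')
    refine ((hright.sub hleft).const_mul K).congr_deriv ?_
    simp only [id, show -α - 1 = -(1 + α) by ring]
    ring
  have hderiv : ∀ s ∈ Set.Ioo (0 : ℝ) 1,
      |deriv J s| ≤ K * (α * (s ^ (-(1 + α)) + (1 - s) ^ (-(1 + α)))) := fun s hs =>
    calc |deriv J s| ≤ Γ * (s * (1 - s)) ^ (-(1 + α)) := by simpa only [neg_add'] using hJ' s hs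
      _ ≤ Γ * (2 ^ (1 + α) * (s ^ (-(1 + α)) + (1 - s) ^ (-(1 + α)))) := by
          gcongr
          exact rpow_neg_mul_one_sub_le (by linarith) hs
      _ = K * (α * (s ^ (-(1 + α)) + (1 - s) ^ (-(1 + α)))) := by rw [hK]; field_simp
  refine ⟨K, hKpos, fun t ht => ?_⟩
  have hhalf : (1 / 2 : ℝ) ∈ Set.Ioo (0 : ℝ) 1 := by norm_num
  refine (abs_sub_le_abs_sub_of_abs_deriv_le (convex_Ioo 0 1)
    (fun s hs => (hJ.differentiableAt (isOpen_Ioo.mem_nhds hs)).hasDerivAt) hb' hderiv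
    hhalf ht).trans ?_
  have ht₀ : 0 ≤ t ^ (-α) := Real.rpow_nonneg ht.1.le _
  have ht₁ : 0 ≤ (1 - t) ^ (-α) := Real.rpow_nonneg (sub_pos.2 ht.2).le _
  have hb_half : b (1 / 2) = 0 := by norm_num [hb]
  rw [hb_half, sub_zero, abs_mul, abs_of_pos hKpos]
  gcongr
  rw [abs_le]
  constructor <;> linarith

lemma sum_range_rpow_neg_le {β : ℝ} (hβ : 0 ≤ β) (hβ₁ : β < 1) (n : ℕ) :
    ∑ j ∈ range n, ((j : ℝ) + 1) ^ (-β) ≤ (n : ℝ) ^ (1 - β) / (1 - β) := by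
  have hβ' : 0 < 1 - β := sub_pos.2 hβ₁
  induction n with
  | zero => simp [Real.zero_rpow hβ'.ne']
  | succ n ih =>
    have hn : (0 : ℝ) < n + 1 := by positivity
    have hpow : ((n : ℝ) + 1) ^ (1 - β) = ((n : ℝ) + 1) ^ (-β) * (n + 1) := by
      rw [sub_eq_neg_add, Real.rpow_add hn, Real.rpow_one]
    have hbernoulli : (n : ℝ) ^ (1 - β) ≤
        ((n : ℝ) + 1) ^ (1 - β) - (1 - β) * ((n : ℝ) + 1) ^ (-β) := by
      have h := rpow_one_add_le_one_add_mul_self (s := -(1 / ((n : ℝ) + 1))) (p := 1 - β)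
        (neg_le_neg ((div_le_one hn).2 (by linarith [n.cast_nonneg (α := ℝ)]))) hβ'.le
        (by linarith)
      rw [show 1 + -(1 / ((n : ℝ) + 1)) = n / (n + 1) by field_simp; ring,
        Real.div_rpow n.cast_nonneg hn.le, div_le_iff₀ (by positivity)] at h
      refine h.trans_eq ?_
      rw [hpow]
      field_simp
      ring
    rw [sum_range_succ, Nat.cast_succ]
    refine (add_le_add_left ih _).trans ?_
    rw [div_add' _ _ _ hβ'.ne']
    gcongr
    linarith

lemma sum_rpow_neg_grid_le {β : ℝ} (hβ : 0 ≤ β) (hβ₁ : β < 1) (n : ℕ) :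
    ∑ j : Fin n, (((j : ℕ) + 1 : ℝ) / (n + 1)) ^ (-β) ≤ 2 / (1 - β) * n := by
  have : 0 < 1 - β := sub_pos.2 hβ₁
  rcases n.eq_zero_or_pos with rfl | hn
  · simp
  have hn₁ : (1 : ℝ) ≤ n := Nat.one_le_cast.2 hn
  have hscale : ((n : ℝ) + 1) ^ β ≤ 2 * (n : ℝ) ^ β :=
    calc ((n : ℝ) + 1) ^ β ≤ (2 * n) ^ β := by gcongr; linarith
      _ = 2 ^ β * (n : ℝ) ^ β := Real.mul_rpow zero_le_two (by linarith)
      _ ≤ 2 * (n : ℝ) ^ β := by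
          gcongr
          exact (Real.rpow_le_rpow_of_exponent_le one_le_two hβ₁.le).trans_eq (Real.rpow_one 2)
  calc ∑ j : Fin n, (((j : ℕ) + 1 : ℝ) / (n + 1)) ^ (-β)
      = ((n : ℝ) + 1) ^ β * ∑ j ∈ range n, ((j : ℝ) + 1) ^ (-β) := by
        rw [Fin.sum_univ_eq_sum_range (fun j : ℕ => ((j + 1 : ℝ) / (n + 1)) ^ (-β)), mul_sum]
        refine sum_congr rfl fun j _ => ?_
        rw [Real.div_rpow (by positivity) (by positivity),
          Real.rpow_neg (by positivity : (0 : ℝ) ≤ n + 1), div_inv_eq_mul, mul_comm]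
    _ ≤ 2 * (n : ℝ) ^ β * ((n : ℝ) ^ (1 - β) / (1 - β)) := by
        gcongr
        exact sum_range_rpow_neg_le hβ hβ₁ n
    _ = 2 / (1 - β) * ((n : ℝ) ^ β * (n : ℝ) ^ (1 - β)) := by ring
    _ = 2 / (1 - β) * n := by
        rw [← Real.rpow_add (by linarith), add_sub_cancel, Real.rpow_one]

lemma add_rpow_le_two_rpow_mul {a b p : ℝ} (ha : 0 ≤ a) (hb : 0 ≤ b) (hp : 0 ≤ p) :
    (a + b) ^ p ≤ 2 ^ p * (a ^ p + b ^ p) := by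
  wlog hab : a ≤ b generalizing a b
  · rw [add_comm a, add_comm (a ^ p)]
    exact this hb ha (le_of_not_ge hab)
  calc (a + b) ^ p ≤ (2 * b) ^ p := by gcongr; linarith
    _ = 2 ^ p * b ^ p := Real.mul_rpow zero_le_two hb
    _ ≤ 2 ^ p * (a ^ p + b ^ p) := by
        gcongr
        exact le_add_of_nonneg_left (Real.rpow_nonneg ha p)

lemma condV.exists_sum_abs_approxScore_sub_rpow_le {J : ℝ → ℝ} {α p : ℝ} (hV : condV J α)
    (hα : 0 < α) (hp : 0 ≤ p) (hαp : α * p < 1) (hJ : DifferentiableOn ℝ J (Set.Ioo 0 1)) :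
    ∃ C : ℝ, 0 < C ∧ ∀ n : ℕ, ∑ j, |approxScore J n j - J (1 / 2)| ^ p ≤ C * n := by
  obtain ⟨K, hK, hgrowth⟩ := hV.exists_abs_sub_le hα hJ
  have : 0 < 1 - α * p := sub_pos.2 hαp
  refine ⟨K ^ p * 2 ^ p * (2 * (2 / (1 - α * p))), by positivity, fun n => ?_⟩
  set u : Fin n → ℝ := fun j => ((j : ℕ) + 1 : ℝ) / (n + 1) with hu
  have hu_mem : ∀ j, u j ∈ Set.Ioo (0 : ℝ) 1 := fun j =>
    ⟨by positivity, (div_lt_one (by positivity)).2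
      (by have : ((j : ℕ) : ℝ) < n := Nat.cast_lt.2 j.2
          linarith)⟩
  have hu_rev : ∀ j, 1 - u j = u (Fin.revPerm j) := fun j => by
    simp only [hu, Fin.revPerm_apply, Fin.val_rev, Nat.cast_sub j.2]
    field_simp
    push_cast
    ring
  have hterm : ∀ j, |approxScore J n j - J (1 / 2)| ^ p ≤
      K ^ p * 2 ^ p * (u j ^ (-(α * p)) + u (Fin.revPerm j) ^ (-(α * p))) := fun j => by
    have hleft := (hu_mem j).1
    have hright := (hu_mem (Fin.revPerm j)).1
    calc |approxScore J n j - J (1 / 2)| ^ p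
        ≤ (K * (u j ^ (-α) + u (Fin.revPerm j) ^ (-α))) ^ p := by
          gcongr
          exact (hgrowth (u j) (hu_mem j)).trans_eq (by rw [hu_rev])
      _ ≤ K ^ p * (2 ^ p * ((u j ^ (-α)) ^ p + (u (Fin.revPerm j) ^ (-α)) ^ p)) := by
          rw [Real.mul_rpow hK.le (by positivity)]
          gcongr
          exact add_rpow_le_two_rpow_mul (by positivity) (by positivity) hp
      _ = K ^ p * 2 ^ p * (u j ^ (-(α * p)) + u (Fin.revPerm j) ^ (-(α * p))) := by
          rw [← Real.rpow_mul hleft.le, ← Real.rpow_mul hright.le, neg_mul, mul_assoc]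
  refine (sum_le_sum fun j _ => hterm j).trans ?_
  rw [← mul_sum, sum_add_distrib, Equiv.sum_comp Fin.revPerm fun j => u j ^ (-(α * p)),
    mul_assoc (_ * _)]
  gcongr
  linarith [sum_rpow_neg_grid_le (mul_nonneg hα.le hp) hαp n]

end ScoreGrowth

section Moments

variable {ι : Type*} [Fintype ι]

lemma sum_rpow_le_of_exponent_le {y : ι → ℝ} (hy : ∀ i, 0 ≤ y i) {p q C : ℝ} (hq : 0 ≤ q)
    (hqp : q ≤ p) (hC : ∑ i, y i ^ p ≤ C * Fintype.card ι) :
    ∑ i, y i ^ q ≤ (1 + C) * Fintype.card ι := by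
  have hterm : ∀ i, y i ^ q ≤ 1 + y i ^ p := fun i => by
    rcases le_total (y i) 1 with hi | hi
    · exact le_add_of_le_of_nonneg (Real.rpow_le_one (hy i) hi hq) (Real.rpow_nonneg (hy i) p)
    · exact (Real.rpow_le_rpow_of_exponent_le hi hqp).trans (le_add_of_nonneg_left zero_le_one)
  calc ∑ i, y i ^ q ≤ ∑ i, (1 + y i ^ p) := sum_le_sum fun i _ => hterm i
    _ = Fintype.card ι + ∑ i, y i ^ p := by simp [sum_add_distrib]
    _ ≤ (1 + C) * Fintype.card ι := by linarith

lemma sum_rpow_le_sum_rpow_rpow {y : ι → ℝ} (hy : ∀ i, 0 ≤ y i) {p q : ℝ} (hp : 0 < p)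
    (hpq : p ≤ q) : ∑ i, y i ^ q ≤ (∑ i, y i ^ p) ^ (q / p) := by
  set S := ∑ i, y i ^ p with hS
  have hyp : ∀ i, 0 ≤ y i ^ p := fun i => Real.rpow_nonneg (hy i) p
  have hS₀ : 0 ≤ S := sum_nonneg fun i _ => hyp i
  have hexp : q / p = (q / p - 1) + 1 := by ring
  have hexp₀ : 0 ≤ q / p - 1 := sub_nonneg.2 ((one_le_div hp).2 hpq)
  have hsplit : ∀ {a : ℝ}, 0 ≤ a → a ^ (q / p) = a ^ (q / p - 1) * a := fun ha => by
    conv_lhs => rw [hexp, Real.rpow_add_of_nonneg ha hexp₀ zero_le_one, Real.rpow_one]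
  calc ∑ i, y i ^ q = ∑ i, (y i ^ p) ^ (q / p - 1) * y i ^ p := by
        refine sum_congr rfl fun i _ => ?_
        rw [← hsplit (hyp i), ← Real.rpow_mul (hy i), mul_div_cancel₀ _ hp.ne']
    _ ≤ ∑ i, S ^ (q / p - 1) * y i ^ p := by
        gcongr with i
        · exact hyp i
        · exact hyp i
        · exact single_le_sum (f := fun j => y j ^ p) (fun j _ => hyp j) (mem_univ i)
    _ = S ^ (q / p) := by rw [← mul_sum, ← hS, ← hsplit hS₀]

lemma sum_rpow_le_mul_card_rpow {y : ι → ℝ} (hy : ∀ i, 0 ≤ y i) {p q C : ℝ} (hp : 0 < p)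
    (hq : 0 ≤ q) (hC₀ : 0 ≤ C) (hC : ∑ i, y i ^ p ≤ C * Fintype.card ι) :
    ∑ i, y i ^ q ≤ (1 + C + C ^ (q / p)) * (Fintype.card ι : ℝ) ^ (1 + max (q / p - 1) 0) := by
  rcases le_total q p with hqp | hpq
  · rw [max_eq_right (sub_nonpos.2 ((div_le_one hp).2 hqp)), add_zero, Real.rpow_one]
    refine (sum_rpow_le_of_exponent_le hy hq hqp hC).trans ?_
    gcongr ?_ * _
    exact le_add_of_nonneg_right (by positivity)
  · rw [max_eq_left (sub_nonneg.2 ((one_le_div hp).2 hpq)), add_sub_cancel]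
    calc ∑ i, y i ^ q ≤ (C * Fintype.card ι) ^ (q / p) :=
          (sum_rpow_le_sum_rpow_rpow hy hp hpq).trans <| Real.rpow_le_rpow
            (sum_nonneg fun i _ => Real.rpow_nonneg (hy i) p) hC (by positivity)
      _ = C ^ (q / p) * (Fintype.card ι : ℝ) ^ (q / p) := Real.mul_rpow hC₀ (by positivity)
      _ ≤ (1 + C + C ^ (q / p)) * (Fintype.card ι : ℝ) ^ (q / p) := by gcongr; linarith

lemma rpow_le_add_mul_add_mul {y δ M r k : ℝ} (hy : 0 ≤ y) (hδ : 0 < δ) (hM : 0 < M) (hr : 0 ≤ r)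
    (hrk : r ≤ k) : y ^ r ≤ δ ^ r + M ^ r / δ * y + M ^ (r - k) * y ^ k := by
  have : 0 ≤ M ^ r / δ * y := by positivity
  have : 0 ≤ M ^ (r - k) * y ^ k := by positivity
  have : 0 ≤ δ ^ r := by positivity
  rcases le_total y δ with hyδ | hδy
  · have : y ^ r ≤ δ ^ r := by gcongr
    linarith
  rcases le_total y M with hyM | hMy
  · have : y ^ r ≤ M ^ r / δ * y :=
      calc y ^ r ≤ M ^ r / δ * δ := by rw [div_mul_cancel₀ _ hδ.ne']; gcongr
        _ ≤ M ^ r / δ * y := by gcongr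
    linarith
  · have : y ^ r ≤ M ^ (r - k) * y ^ k :=
      calc y ^ r = y ^ (r - k) * y ^ k := by
            rw [← Real.rpow_add (hM.trans_le hMy), sub_add_cancel]
        _ ≤ M ^ (r - k) * y ^ k := by
            gcongr ?_ * _
            exact Real.rpow_le_rpow_of_nonpos hM hMy (by linarith)
    linarith

lemma exists_mul_card_le_sum {e E r k : ℝ} (he : 0 < e) (hE : 0 < E) (hr : 0 < r) (hrk : r < k) :
    ∃ c : ℝ, 0 < c ∧ ∀ {ι : Type*} [Fintype ι] {y : ι → ℝ}, (∀ i, 0 ≤ y i) →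
      e * Fintype.card ι ≤ ∑ i, y i ^ r → ∑ i, y i ^ k ≤ E * Fintype.card ι →
        c * Fintype.card ι ≤ ∑ i, y i := by
  set δ := (e / 4) ^ r⁻¹
  set M := (4 * E / e) ^ (k - r)⁻¹
  have hδ : 0 < δ := by positivity
  have hM : 0 < M := by positivity
  have hδr : δ ^ r = e / 4 := Real.rpow_inv_rpow (by positivity) hr.ne'
  have hMk : M ^ (r - k) = e / (4 * E) := by
    rw [← neg_sub, Real.rpow_neg hM.le, Real.rpow_inv_rpow (by positivity) (sub_pos.2 hrk).ne',
      inv_div]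
  refine ⟨e / 2 / (M ^ r / δ), by positivity, fun {ι _ y} hy hlow hup => ?_⟩
  have hsum : ∑ i, y i ^ r ≤
      e / 4 * Fintype.card ι + M ^ r / δ * ∑ i, y i + e / (4 * E) * ∑ i, y i ^ k :=
    calc ∑ i, y i ^ r ≤ ∑ i, (e / 4 + M ^ r / δ * y i + e / (4 * E) * y i ^ k) := by
          gcongr with i
          rw [← hδr, ← hMk]
          exact rpow_le_add_mul_add_mul (hy i) hδ hM hr.le hrk.le
      _ = e / 4 * Fintype.card ι + M ^ r / δ * ∑ i, y i + e / (4 * E) * ∑ i, y i ^ k := by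
          rw [sum_add_distrib, sum_add_distrib, ← mul_sum, ← mul_sum]
          simp [mul_comm]
  have htail : e / (4 * E) * ∑ i, y i ^ k ≤ e / 4 * Fintype.card ι :=
    calc e / (4 * E) * ∑ i, y i ^ k ≤ e / (4 * E) * (E * Fintype.card ι) := by gcongr
      _ = e / 4 * Fintype.card ι := by field_simp
  rw [div_mul_eq_mul_div, div_le_iff₀' (by positivity)]
  linarith

/-- The deviations of the family `d` from its arithmetic mean. -/
noncomputable def centered (d : ι → ℝ) (j : ι) : ℝ := d j - (∑ i, d i) / Fintype.card ι

lemma sum_centered_eq_zero (d : ι → ℝ) : ∑ j, centered d j = 0 := by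
  cases isEmpty_or_nonempty ι
  · simp
  · simp [centered, sum_sub_distrib, mul_div_cancel₀]

lemma sum_centered_sq_le (d : ι → ℝ) (c : ℝ) :
    ∑ j, centered d j ^ 2 ≤ ∑ j, (d j - c) ^ 2 := by
  simp only [centered]
  set m := (∑ i, d i) / Fintype.card ι
  have hexpand : ∑ j, (d j - c) ^ 2 = ∑ j, (d j - m) ^ 2 + Fintype.card ι * (m - c) ^ 2 :=
    calc ∑ j, (d j - c) ^ 2
        = ∑ j, ((d j - m) ^ 2 + 2 * (m - c) * (d j - m) + (m - c) ^ 2) :=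
          sum_congr rfl fun j _ => by ring
      _ = ∑ j, (d j - m) ^ 2 + Fintype.card ι * (m - c) ^ 2 := by
          rw [sum_add_distrib, sum_add_distrib, ← mul_sum,
            show ∑ j, (d j - m) = 0 from sum_centered_eq_zero d]
          simp
  rw [hexpand]
  exact le_add_of_nonneg_right (by positivity)

lemma sum_centered_pow_four_le (d : ι → ℝ) (c : ℝ) :
    ∑ j, centered d j ^ 4 ≤ 16 * ∑ j, (d j - c) ^ 4 := by
  cases isEmpty_or_nonempty ι
  · simp
  simp only [centered]
  set m := (∑ i, d i) / Fintype.card ι with hm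
  have hcard : (0 : ℝ) < Fintype.card ι := Nat.cast_pos.2 Fintype.card_pos
  have hjensen : Fintype.card ι * (m - c) ^ 4 ≤ ∑ j, (d j - c) ^ 4 := by
    have hmean : m - c = ∑ j, (Fintype.card ι : ℝ)⁻¹ * (d j - c) := by
      rw [← mul_sum, sum_sub_distrib, sum_const, card_univ, nsmul_eq_mul, hm]
      field_simp
    rw [hmean, ← le_inv_mul_iff₀ hcard, mul_sum]
    exact Real.pow_arith_mean_le_arith_mean_pow_of_even _ _ _ (fun _ _ => by positivity)
      (by simp) (even_two_mul 2)
  calc ∑ j, (d j - m) ^ 4 ≤ ∑ j, 2 ^ 3 * ((d j - c) ^ 4 + (m - c) ^ 4) := by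
        gcongr with j
        have h := Even.add_pow_le (a := d j - c) (b := -(m - c)) (even_two_mul 2)
        rwa [(even_two_mul 2).neg_pow, ← sub_eq_add_neg, sub_sub_sub_cancel_right] at h
    _ = 8 * ∑ j, (d j - c) ^ 4 + 8 * (Fintype.card ι * (m - c) ^ 4) := by
        rw [← mul_sum, sum_add_distrib]
        simp
        ring
    _ ≤ 16 * ∑ j, (d j - c) ^ 4 := by linarith

end Moments

section ScoreVariance

variable {J : ℝ → ℝ} {t₁ t₂ : ℝ}

lemma exists_mul_le_sum_approxScore_sub_sq (hJ : ContDiffOn ℝ 1 J (Set.Ioo 0 1))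
    (ht₁ : t₁ ∈ Set.Ioo (0 : ℝ) 1) (ht₂ : t₂ ∈ Set.Ioo (0 : ℝ) 1) (hne : J t₁ ≠ J t₂) :
    ∃ c : ℝ, 0 < c ∧ ∃ N : ℕ, ∀ n : ℕ, N ≤ n → ∀ μ : ℝ,
      c * n ≤ ∑ j, (approxScore J n j - μ) ^ 2 := by
  obtain ⟨η, c, hη, -, hc, hpairs⟩ := exists_pairs_approxScore hJ ht₁ ht₂ hne
  refine ⟨η / 8 * (c * (η / 2)) ^ 2, by positivity, ⌈2 / η⌉₊, fun n hn μ => ?_⟩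
  have hn_η : 2 / η ≤ n := Nat.ceil_le.1 hn
  have hη_le : 1 ≤ ((n : ℝ) + 1) * η := by
    rw [div_le_iff₀ hη] at hn_η
    linarith
  obtain ⟨h, hh_ge, hh_le⟩ := exists_natCast_half_le_le hη_le
  obtain ⟨N, a, b, ha, hb, hN, hab⟩ := hpairs n h hn_η hh_le
  have hratio : η / 2 ≤ h / (n + 1) := by
    rw [le_div_iff₀ (by positivity)]
    linarith
  set f : Fin n → ℝ := fun j => (approxScore J n j - μ) ^ 2
  have hsub : ∀ g : Fin N → Fin n, g.Injective → ∑ k, f (g k) ≤ ∑ j, f j := fun g hg => by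
    rw [← sum_image (f := f) hg.injOn]
    exact sum_le_sum_of_subset_of_nonneg (subset_univ _) fun j _ _ => sq_nonneg _
  have hpair : ∀ k, (c * (η / 2)) ^ 2 ≤ 2 * (f (a k) + f (b k)) := fun k => by
    calc (c * (η / 2)) ^ 2 ≤ |approxScore J n (b k) - approxScore J n (a k)| ^ 2 := by
          gcongr
          exact (mul_le_mul_of_nonneg_left hratio hc.le).trans (hab k).1
      _ ≤ 2 * (f (a k) + f (b k)) := by
          rw [sq_abs]
          nlinarith [sq_nonneg (approxScore J n (a k) - μ + (approxScore J n (b k) - μ))]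
  have hsum : (N : ℝ) * (c * (η / 2)) ^ 2 ≤ 2 * (∑ k, f (a k) + ∑ k, f (b k)) := by
    have h := sum_le_sum fun k (_ : k ∈ univ) => hpair k
    rwa [← mul_sum, sum_add_distrib, sum_const, card_univ, Fintype.card_fin, nsmul_eq_mul] at h
  have : η * n / 2 * (c * (η / 2)) ^ 2 ≤ N * (c * (η / 2)) ^ 2 := by gcongr
  linarith [hsub a ha, hsub b hb]

lemma one_le_nOne (hJ : ContDiffOn ℝ 1 J (Set.Ioo 0 1)) (ht₁ : t₁ ∈ Set.Ioo (0 : ℝ) 1)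
    (ht₂ : t₂ ∈ Set.Ioo (0 : ℝ) 1) (hne : J t₁ ≠ J t₂) : 1 ≤ nOne J := by
  obtain ⟨c, hc, N, hN⟩ := exists_mul_le_sum_approxScore_sub_sq hJ ht₁ ht₂ hne
  refine le_csSup ⟨N, fun n hn => ?_⟩ (by simp)
  by_contra! hlt
  set μ := (∑ j' ∈ Icc 1 n, J ((j' : ℝ) / ((n : ℝ) + 1))) / (n : ℝ) with hμ
  have hn₀ : (0 : ℝ) < n := Nat.cast_pos.2 (by lia)
  have hsum : ∑ j ∈ Icc 1 n, (J ((j : ℝ) / ((n : ℝ) + 1)) - μ) ^ 2 =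
      ∑ j, (approxScore J n j - μ) ^ 2 := by
    rw [← Ico_add_one_right_eq_Icc, sum_Ico_eq_sum_range, add_tsub_cancel_right,
      ← Fin.sum_univ_eq_sum_range fun k => (J (((1 + k : ℕ) : ℝ) / ((n : ℝ) + 1)) - μ) ^ 2]
    simp only [approxScore, Nat.cast_add, Nat.cast_one, add_comm]
  have hlow := hN n hlt.le μ
  rw [← hsum, hμ, hn] at hlow
  exact (mul_pos hc hn₀).not_ge hlow

end ScoreVariance

/-! ### Esseen's inequality with a smooth cutoff -/

section Esseen

open ProbabilityTheory Filter

lemma norm_edgeworthCharFun_le {l : ℝ} (hl : |l| ≤ 1) (t : ℝ) :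
    ‖edgeworthCharFun l t‖ ≤ 3 * Real.exp (-t ^ 2 / 4) := by
  have hcorr : ‖(1 : ℂ) - Complex.I * ((t ^ 3 * l / 6 : ℝ) : ℂ)‖ ≤ 1 + |t| ^ 3 / 6 := by
    refine (norm_sub_le _ _).trans ?_
    rw [norm_one, norm_mul, Complex.norm_I, one_mul, Complex.norm_real, Real.norm_eq_abs, abs_div,
      abs_mul, abs_pow, abs_of_pos (by norm_num : (0 : ℝ) < 6)]
    gcongr
    exact mul_le_of_le_one_right (by positivity) hl
  have hcubic : 1 + |t| ^ 3 / 6 ≤ 3 * Real.exp (t ^ 2 / 4) := by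
    have htaylor := Real.quadratic_le_exp_of_nonneg (x := t ^ 2 / 4) (by positivity)
    rw [← sq_abs t] at htaylor ⊢
    nlinarith [mul_nonneg (abs_nonneg t) (sq_nonneg (|t| - 1)), sq_nonneg (|t| ^ 2),
      mul_nonneg (sq_nonneg |t|) (sq_nonneg (|t| - 1))]
  rw [edgeworthCharFun_eq, norm_mul, Complex.norm_real, Real.norm_eq_abs, Real.abs_exp]
  calc Real.exp (-t ^ 2 / 2) * _ ≤ Real.exp (-t ^ 2 / 2) * (3 * Real.exp (t ^ 2 / 4)) := by
        gcongr
        exact hcorr.trans hcubic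
    _ = 3 * Real.exp (-t ^ 2 / 4) := by
      rw [mul_left_comm, ← Real.exp_add]
      ring_nf

/-- The majorant used to integrate a smoothed difference of characteristic functions: a constant at
low frequencies `|t| ≤ L`, a constant at moderate frequencies `|t| ≤ T`, and a Gaussian of
width `1 / ε` beyond. -/
noncomputable def frequencyBound (L T M δ η ε t : ℝ) : ℝ :=
  (Set.Icc (-L) L).indicator (fun _ => M) t + (Set.Icc (-T) T).indicator (fun _ => δ) t
    + η * Real.exp (-(ε ^ 2 / 4) * t ^ 2)

section FrequencyBound

variable {L T M δ η ε : ℝ}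

lemma le_frequencyBound (hM : 0 ≤ M) (hδ : 0 ≤ δ) (hη : 0 ≤ η) {t y : ℝ}
    (hlow : |t| ≤ L → y ≤ M) (hmid : L < |t| → |t| ≤ T → y ≤ δ)
    (hhigh : T < |t| → y ≤ η * Real.exp (-(ε ^ 2 / 4) * t ^ 2)) :
    y ≤ frequencyBound L T M δ η ε t := by
  have hlow₀ : 0 ≤ (Set.Icc (-L) L).indicator (fun _ => M) t :=
    Set.indicator_nonneg (fun _ _ => hM) t
  have hmid₀ : 0 ≤ (Set.Icc (-T) T).indicator (fun _ => δ) t :=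
    Set.indicator_nonneg (fun _ _ => hδ) t
  have hhigh₀ : 0 ≤ η * Real.exp (-(ε ^ 2 / 4) * t ^ 2) := by positivity
  rw [frequencyBound]
  rcases le_or_gt |t| L with htL | htL
  · rw [Set.indicator_of_mem (Set.mem_Icc.2 (abs_le.1 htL))]
    linarith [hlow htL]
  rcases le_or_gt |t| T with htT | htT
  · rw [Set.indicator_of_mem (Set.mem_Icc.2 (abs_le.1 htT)) (fun _ => δ)]
    linarith [hmid htL htT]
  · linarith [hhigh htT]

lemma integrable_indicator_Icc_const (a b c : ℝ) :
    Integrable ((Set.Icc a b).indicator fun _ => c) :=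
  (integrable_indicator_iff measurableSet_Icc).2 (integrableOn_const (by simp))

lemma integrable_frequencyBound (L T M δ η : ℝ) (hε : 0 < ε) :
    Integrable (frequencyBound L T M δ η ε) :=
  ((integrable_indicator_Icc_const _ _ _).add (integrable_indicator_Icc_const _ _ _)).add
    ((integrable_exp_neg_mul_sq (by positivity : 0 < ε ^ 2 / 4)).const_mul η)

lemma integral_frequencyBound (hL : 0 ≤ L) (hT : 0 ≤ T) (M δ η : ℝ) (hε : 0 < ε) :
    ∫ t, frequencyBound L T M δ η ε t =
      2 * L * M + 2 * T * δ + η * Real.sqrt (Real.pi / (ε ^ 2 / 4)) := by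
  have hlow := integrable_indicator_Icc_const (-L) L M
  have hmid := integrable_indicator_Icc_const (-T) T δ
  have hlowmid : Integrable fun t =>
      (Set.Icc (-L) L).indicator (fun _ => M) t + (Set.Icc (-T) T).indicator (fun _ => δ) t :=
    hlow.add hmid
  have hhigh := (integrable_exp_neg_mul_sq (by positivity : 0 < ε ^ 2 / 4)).const_mul η
  simp only [frequencyBound]
  rw [integral_add hlowmid hhigh, integral_add hlow hmid,
    integral_indicator measurableSet_Icc, integral_indicator measurableSet_Icc,
    integral_const_mul, integral_gaussian]
  simp only [setIntegral_const, smul_eq_mul]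
  rw [Real.volume_real_Icc_of_le (by linarith), Real.volume_real_Icc_of_le (by linarith)]
  ring

end FrequencyBound

section Regimes

variable {ε t : ℝ} {D : ℂ}

lemma exp_neg_mul_norm_div_le_of_norm_le_add {B L : ℝ} (hB : 0 ≤ B) (hL : 1 ≤ L) (ht : t ≠ 0)
    (htL : |t| ≤ L) (hD : ‖D‖ ≤ B * (t ^ 2 + t ^ 4)) :
    Real.exp (-(ε * t) ^ 2 / 2) * ‖D‖ / |t| ≤ 2 * B * L ^ 3 := by
  have htL3 : |t| ≤ L ^ 3 := htL.trans (le_self_pow₀ hL (by norm_num))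
  rw [div_le_iff₀ (abs_pos.2 ht)]
  calc Real.exp (-(ε * t) ^ 2 / 2) * ‖D‖ ≤ 1 * (B * (t ^ 2 + t ^ 4)) := by
        gcongr
        exact Real.exp_le_one_iff.2 (by linarith [sq_nonneg (ε * t)])
    _ = B * (|t| + |t| ^ 3) * |t| := by
      rw [show t ^ 4 = (t ^ 2) ^ 2 by ring, ← sq_abs t]
      ring
    _ ≤ B * (L ^ 3 + L ^ 3) * |t| := by gcongr
    _ = 2 * B * L ^ 3 * |t| := by ring

lemma exp_neg_mul_norm_div_le_norm (ht : 1 ≤ |t|) :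
    Real.exp (-(ε * t) ^ 2 / 2) * ‖D‖ / |t| ≤ ‖D‖ := by
  refine (div_le_self (by positivity) ht).trans (mul_le_of_le_one_left (norm_nonneg _) ?_)
  exact Real.exp_le_one_iff.2 (by linarith [sq_nonneg (ε * t)])

lemma exp_neg_mul_norm_div_le_of_lt_abs {T c : ℝ} (hT : 0 < T) (hεT : Real.log T ≤ (ε * T) ^ 2 / 4)
    (htT : T < |t|) (hD : ‖D‖ ≤ c) :
    Real.exp (-(ε * t) ^ 2 / 2) * ‖D‖ / |t| ≤ c / T ^ 2 * Real.exp (-(ε ^ 2 / 4) * t ^ 2) := by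
  have hexp : Real.exp (-(ε * t) ^ 2 / 2) ≤ T⁻¹ * Real.exp (-(ε ^ 2 / 4) * t ^ 2) := by
    rw [← Real.exp_log (inv_pos.2 hT), Real.log_inv, ← Real.exp_add, Real.exp_le_exp]
    have hmono : ε ^ 2 * T ^ 2 ≤ ε ^ 2 * |t| ^ 2 := by gcongr
    rw [sq_abs] at hmono
    linarith
  have hc : 0 ≤ c := (norm_nonneg D).trans hD
  calc Real.exp (-(ε * t) ^ 2 / 2) * ‖D‖ / |t|
      ≤ T⁻¹ * Real.exp (-(ε ^ 2 / 4) * t ^ 2) * c / T := by gcongr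
    _ = c / T ^ 2 * Real.exp (-(ε ^ 2 / 4) * t ^ 2) := by field_simp

end Regimes

/-- The Gaussian cutoff scale `ε` for which `(ε * T) ^ 2 = 4 * log T`. -/
noncomputable def cutoffScale (T : ℝ) : ℝ := 2 * Real.sqrt (Real.log T) / T

section CutoffScale

variable {T : ℝ}

lemma cutoffScale_mul_sq (hT : 1 ≤ T) : (cutoffScale T * T) ^ 2 = 4 * Real.log T := by
  rw [cutoffScale, div_mul_cancel₀ _ (by linarith), mul_pow, Real.sq_sqrt (Real.log_nonneg hT)]
  norm_num

lemma cutoffScale_pos (hT : 1 < T) : 0 < cutoffScale T := by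
  have hlog := Real.log_pos hT
  rw [cutoffScale]
  positivity

lemma cutoffScale_le (hT : 0 < T) (hlog : 1 ≤ Real.log T) :
    cutoffScale T ≤ 2 * (Real.log T / T) := by
  rw [cutoffScale, mul_div_assoc]
  gcongr
  exact Real.sqrt_le_self_iff.2 (Or.inr hlog)

lemma sqrt_pi_div_cutoffScale_sq_le (hT : 1 ≤ T) (hlog : 1 ≤ Real.log T) :
    Real.sqrt (Real.pi / (cutoffScale T ^ 2 / 4)) ≤ 2 * T := by
  have hpos := cutoffScale_pos (hT.lt_of_ne (by rintro rfl; norm_num at hlog))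
  rw [Real.sqrt_le_left (by linarith), div_le_iff₀ (by positivity),
    show (2 * T) ^ 2 * (cutoffScale T ^ 2 / 4) = (cutoffScale T * T) ^ 2 by ring,
    cutoffScale_mul_sq hT]
  linarith [Real.pi_le_four]

end CutoffScale

section CharFun

variable {μ : Measure ℝ} {γ K T B l : ℝ}

lemma norm_charFun_sub_edgeworthCharFun_le_of_abs_le (hγ : 0 ≤ γ) (hγK : 2 ≤ γ * K) (hK : 8 ≤ K)
    (hT : 0 < T) (hKT : K * Real.log T ≤ T) (hlog : 0 ≤ Real.log T) (hl : |l| ≤ 1) {t : ℝ}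
    (hKt : K * Real.log T ≤ t ^ 2) (hdecay : ‖charFun μ t‖ ≤ Real.exp (-(γ * min (t ^ 2) T))) :
    ‖charFun μ t - edgeworthCharFun l t‖ ≤ 4 / T ^ 2 := by
  have hexp : Real.exp (-(2 * Real.log T)) = 1 / T ^ 2 := by
    rw [Real.exp_neg, two_mul, Real.exp_add, Real.exp_log hT, one_div, sq]
  have hleft : ‖charFun μ t‖ ≤ 1 / T ^ 2 := by
    refine hdecay.trans ?_
    rw [← hexp, Real.exp_le_exp, neg_le_neg_iff]
    calc 2 * Real.log T ≤ γ * K * Real.log T := by gcongr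
      _ = γ * (K * Real.log T) := mul_assoc _ _ _
      _ ≤ γ * min (t ^ 2) T := by
        gcongr
        exact le_min hKt hKT
  have hright : ‖edgeworthCharFun l t‖ ≤ 3 * (1 / T ^ 2) := by
    refine (norm_edgeworthCharFun_le hl t).trans ?_
    rw [← hexp]
    gcongr
    linarith [mul_le_mul_of_nonneg_right hK hlog]
  calc ‖charFun μ t - edgeworthCharFun l t‖ ≤ 1 / T ^ 2 + 3 * (1 / T ^ 2) :=
        (norm_sub_le _ _).trans (add_le_add hleft hright)
    _ = 4 / T ^ 2 := by ring

variable [IsProbabilityMeasure μ]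

lemma norm_charFun_sub_edgeworthCharFun_le_four (hl : |l| ≤ 1) (t : ℝ) :
    ‖charFun μ t - edgeworthCharFun l t‖ ≤ 4 := by
  have hexp : Real.exp (-t ^ 2 / 4) ≤ 1 := Real.exp_le_one_iff.2 (by linarith [sq_nonneg t])
  linarith [norm_sub_le (charFun μ t) (edgeworthCharFun l t), norm_charFun_le_one (μ := μ) t,
    norm_edgeworthCharFun_le hl t]

lemma exp_neg_mul_norm_charFun_sub_div_le_frequencyBound (hγ : 0 ≤ γ) (hγK : 2 ≤ γ * K)
    (hK : 8 ≤ K) (hT : 1 ≤ T) (hKT : K * Real.log T ≤ T) (hlog : 1 ≤ Real.log T) (hl : |l| ≤ 1)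
    (hB : 0 ≤ B)
    (hsmall : ∀ t, ‖charFun μ t - edgeworthCharFun l t‖ ≤ B * (t ^ 2 + t ^ 4))
    (hdecay : ∀ t, |t| ≤ T → ‖charFun μ t‖ ≤ Real.exp (-(γ * min (t ^ 2) T)))
    {t : ℝ} (ht : t ≠ 0) :
    Real.exp (-(cutoffScale T * t) ^ 2 / 2) * ‖charFun μ t - edgeworthCharFun l t‖ / |t| ≤
      frequencyBound (Real.sqrt (K * Real.log T)) T (2 * B * Real.sqrt (K * Real.log T) ^ 3)
        (4 / T ^ 2) (4 / T ^ 2) (cutoffScale T) t := by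
  have hKlog : 1 ≤ K * Real.log T := by nlinarith
  have hL : 1 ≤ Real.sqrt (K * Real.log T) := Real.one_le_sqrt.2 hKlog
  refine le_frequencyBound (by positivity) (by positivity) (by positivity) (fun htL => ?_)
    (fun htL htT => ?_) (fun htT => ?_)
  · exact exp_neg_mul_norm_div_le_of_norm_le_add hB hL ht htL (hsmall t)
  · refine (exp_neg_mul_norm_div_le_norm (hL.trans htL.le)).trans ?_
    refine norm_charFun_sub_edgeworthCharFun_le_of_abs_le hγ hγK hK (by linarith) hKT
      (by linarith) hl ?_ (hdecay t htT)
    rw [← sq_abs, ← Real.sq_sqrt (by linarith : 0 ≤ K * Real.log T)]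
    gcongr
  · exact exp_neg_mul_norm_div_le_of_lt_abs (by linarith)
      (by linarith [cutoffScale_mul_sq hT]) htT (norm_charFun_sub_edgeworthCharFun_le_four hl t)

lemma abs_cdf_sub_edgeworthCDF_le_of_log (hμ : Integrable id μ) (hγ : 0 ≤ γ) (hγK : 2 ≤ γ * K)
    (hK : 8 ≤ K) (hT : 1 ≤ T) (hKT : K * Real.log T ≤ T) (hlog : 1 ≤ Real.log T) (hl : |l| ≤ 1)
    (hB : 0 ≤ B)
    (hsmall : ∀ t, ‖charFun μ t - edgeworthCharFun l t‖ ≤ B * (t ^ 2 + t ^ 4))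
    (hdecay : ∀ t, |t| ≤ T → ‖charFun μ t‖ ≤ Real.exp (-(γ * min (t ^ 2) T))) (z : ℝ) :
    |cdf μ z - edgeworthCDF l z| ≤
      (4 * K ^ 2 + 77) * (B * Real.log T ^ 2 + Real.log T / T) := by
  set Λ := Real.log T
  have hT₀ : 0 < T := by linarith
  have hTinv : 1 / T ≤ Λ / T := by gcongr
  have hε : 0 < cutoffScale T := cutoffScale_pos (by nlinarith)
  have hεle : cutoffScale T ≤ 2 * (Λ / T) := cutoffScale_le hT₀ hlog
  have hε1 : cutoffScale T ≤ 1 := hεle.trans (by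
    rw [← mul_div_assoc, div_le_one hT₀]
    nlinarith)
  have hΛsq : Real.sqrt Λ ^ 2 = Λ := Real.sq_sqrt (by linarith)
  have hproduct : 2 * Real.sqrt (K * Λ) * (2 * B * Real.sqrt (K * Λ) ^ 3) =
      4 * K ^ 2 * (B * Λ ^ 2) := by
    calc _ = 4 * B * (Real.sqrt (K * Λ) ^ 2) ^ 2 := by ring
      _ = _ := by
        rw [Real.sq_sqrt (by nlinarith)]
        ring
  have hmid : 2 * T * (4 / T ^ 2) = 8 * (1 / T) := by
    field_simp
    norm_num
  have hhigh : 4 / T ^ 2 * Real.sqrt (Real.pi / (cutoffScale T ^ 2 / 4)) ≤ 8 * (1 / T) := by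
    calc _ ≤ 4 / T ^ 2 * (2 * T) := by
          gcongr
          exact sqrt_pi_div_cutoffScale_sq_le hT hlog
      _ = 8 * (1 / T) := by linarith
  have hgauss : Real.exp (-(2 * Real.sqrt Λ) ^ 2 / 2) ≤ 1 / T := by
    rw [one_div, ← Real.exp_log (inv_pos.2 hT₀), Real.log_inv, Real.exp_le_exp, mul_pow, hΛsq]
    linarith
  have hshift : 2 * Real.sqrt Λ * cutoffScale T = 4 * (Λ / T) := by
    rw [cutoffScale, ← hΛsq, Real.sqrt_sq (Real.sqrt_nonneg Λ)]
    ring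
  have hsmooth := abs_cdf_sub_edgeworthCDF_le hμ hl hε hε1 (by positivity : 0 ≤ 2 * Real.sqrt Λ) z
    (integrable_frequencyBound _ _ _ _ _ hε) fun t ht =>
      exp_neg_mul_norm_charFun_sub_div_le_frequencyBound hγ hγK hK hT hKT hlog hl hB hsmall
        hdecay ht
  rw [integral_frequencyBound (Real.sqrt_nonneg _) hT₀.le _ _ _ hε, hproduct, hmid, hshift]
    at hsmooth
  have hBΛ : 0 ≤ B * Λ ^ 2 := by positivity
  have hKΛ : 0 ≤ K ^ 2 * (Λ / T) := by positivity
  linarith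

end CharFun

lemma exists_abs_cdf_sub_edgeworthCDF_le {γ : ℝ} (hγ : 0 < γ) :
    ∃ C : ℝ, 0 < C ∧ ∀ᶠ T in atTop, ∀ (μ : Measure ℝ) [IsProbabilityMeasure μ],
      Integrable id μ → ∀ l B : ℝ, |l| ≤ 1 → 0 ≤ B →
      (∀ t, ‖charFun μ t - edgeworthCharFun l t‖ ≤ B * (t ^ 2 + t ^ 4)) →
      (∀ t, |t| ≤ T → ‖charFun μ t‖ ≤ Real.exp (-(γ * min (t ^ 2) T))) →
      ∀ z, |cdf μ z - edgeworthCDF l z| ≤ C * (B * Real.log T ^ 2 + Real.log T / T) := by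
  set K := max (2 / γ) 8
  have hγK : 2 ≤ γ * K := by
    calc 2 = γ * (2 / γ) := by field_simp
      _ ≤ γ * K := by
        gcongr
        exact le_max_left _ _
  have hK : 8 ≤ K := le_max_right _ _
  refine ⟨4 * K ^ 2 + 77, by positivity, ?_⟩
  filter_upwards [eventually_ge_atTop 1, Real.tendsto_log_atTop.eventually_ge_atTop 1,
    Real.isLittleO_log_id_atTop.bound (by positivity : 0 < K⁻¹)] with T hT hlog hlogT
    μ _ hμ l B hl hB hsmall hdecay z
  have hKT : K * Real.log T ≤ T := by
    rw [Real.norm_eq_abs, id, Real.norm_of_nonneg (by linarith), abs_of_nonneg (by linarith),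
      ← div_eq_inv_mul, le_div_iff₀ (by positivity)] at hlogT
    linarith
  exact abs_cdf_sub_edgeworthCDF_le_of_log hμ hγ.le hγK hK hT hKT hlog hl hB hsmall hdecay z

end Esseen

/-! ### The law of a linear rank statistic -/

section RankLaw

open ProbabilityTheory
open Equiv (Perm)
open scoped BigOperators ENNReal

section UniformLaw

variable {Ω : Type*} [Fintype Ω]

/-- The law of `f` when its argument is uniformly distributed on the finite type `Ω`. -/
noncomputable def uniformLaw (f : Ω → ℝ) : Measure ℝ :=
  (Fintype.card Ω : ℝ≥0∞)⁻¹ • ∑ ω, Measure.dirac (f ω)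

instance [Nonempty Ω] (f : Ω → ℝ) : IsProbabilityMeasure (uniformLaw f) where
  measure_univ := by simp [uniformLaw, ENNReal.inv_mul_cancel]

variable {E : Type*} [NormedAddCommGroup E]

lemma integrable_uniformLaw [Nonempty Ω] (f : Ω → ℝ) (g : ℝ → E) :
    Integrable g (uniformLaw f) :=
  (integrable_finsetSum_measure.2 fun _ _ => integrable_dirac (by simp)).smul_measure (by simp)

lemma integral_uniformLaw [NormedSpace ℝ E] [CompleteSpace E] (f : Ω → ℝ) (g : ℝ → E) :
    ∫ y, g y ∂uniformLaw f = (Fintype.card Ω : ℝ)⁻¹ • ∑ ω, g (f ω) := by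
  rw [uniformLaw, integral_smul_measure,
    integral_finsetSum_measure fun _ _ => integrable_dirac (by simp)]
  simp

lemma cdf_uniformLaw [Nonempty Ω] (f : Ω → ℝ) (z : ℝ) :
    cdf (uniformLaw f) z = (∑ ω, if f ω ≤ z then (1 : ℝ) else 0) / Fintype.card Ω := by
  rw [cdf_eq_real, ← integral_indicator_one measurableSet_Iic, integral_uniformLaw, smul_eq_mul,
    div_eq_inv_mul]
  simp only [Set.indicator_apply, Set.mem_Iic, Pi.one_apply]

end UniformLaw

variable {ι : Type*} [Fintype ι] [DecidableEq ι]

lemma charFun_uniformLaw_linearRank (x w : ι → ℝ) (t : ℝ) :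
    charFun (uniformLaw (linearRank x w)) t = twistedExpect x w t 1 := by
  rw [charFun_apply_real, integral_uniformLaw, twistedExpect_apply, Fintype.expect_eq_sum_div_card]
  simp [div_eq_inv_mul, mul_comm, mul_left_comm]

end RankLaw

section StandardizedExpansion

open ProbabilityTheory Filter
open scoped BigOperators

lemma abs_cdf_sub_edgeworthCDF_le_one_add (μ : Measure ℝ) [IsProbabilityMeasure μ] (l z : ℝ) :
    |cdf μ z - edgeworthCDF l z| ≤ 1 + |l| := by
  have hcorr : |l / 6 * gaussHermite z| ≤ |l| := by
    rw [abs_mul, abs_div, abs_of_pos (by norm_num : (0 : ℝ) < 6)]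
    nlinarith [abs_gaussHermite_le z, abs_nonneg l]
  have hcdf := abs_sub_le_of_nonneg_of_le (cdf_nonneg (μ := μ) z) (cdf_le_one (μ := μ) z)
    (gaussCDF_nonneg z) (gaussCDF_le_one z)
  rw [edgeworthCDF, sub_sub_eq_add_sub, add_sub_right_comm]
  exact (abs_add_le _ _).trans (add_le_add hcdf hcorr)

lemma IsStandardizedPair.sq_productMoment_three_div_card_le {ι : Type*} [Fintype ι] [Nonempty ι]
    {x w : ι → ℝ} (h : IsStandardizedPair x w) :
    (productMoment x w 3 / Fintype.card ι) ^ 2 ≤ productMoment x w 4 / Fintype.card ι := by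
  have hP := productMoment_nonneg_of_even x w (p := 4) (by decide)
  have hcard : (0 : ℝ) < Fintype.card ι := Nat.cast_pos.2 Fintype.card_pos
  rw [div_pow, div_le_div_iff₀ (by positivity) hcard]
  nlinarith [h.sq_productMoment_three_le]

lemma exists_abs_cdf_linearRank_sub_edgeworthCDF_le {γ : ℝ} (hγ : 0 < γ) :
    ∃ C : ℝ, 0 < C ∧ ∀ᶠ n : ℕ in atTop, ∀ x w : Fin n → ℝ, IsStandardizedPair x w →
      (∀ t : ℝ, |t| ≤ n → ‖twistedExpect x w t 1‖ ≤ Real.exp (-(γ * min (t ^ 2) n))) →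
      ∀ z, |cdf (uniformLaw (linearRank x w)) z - edgeworthCDF (productMoment x w 3 / n) z| ≤
        C * Real.log n ^ 2 * ((productMoment x w 4 + 1) / n) := by
  obtain ⟨C, hC, hexpansion⟩ := exists_abs_cdf_sub_edgeworthCDF_le hγ
  refine ⟨1102 * C + 2, by positivity, ?_⟩
  have hlog_large := Real.tendsto_log_atTop.eventually_ge_atTop 1
  filter_upwards [tendsto_natCast_atTop_atTop.eventually hexpansion,
    tendsto_natCast_atTop_atTop.eventually hlog_large, eventually_ge_atTop 2]
    with n hexpansion hlog hn x w h hdecay z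
  have : Nontrivial (Fin n) := Fin.nontrivial_iff_two_le.2 hn
  have hn₀ : (0 : ℝ) < n := by positivity
  have hP := productMoment_nonneg_of_even x w (p := 4) (by decide)
  have hskew := h.sq_productMoment_three_div_card_le
  rw [Fintype.card_fin] at hskew
  set κ := (productMoment x w 4 + 1) / n
  have hκ : 1 / n ≤ κ := by
    rw [div_le_div_iff_of_pos_right hn₀]
    linarith
  have hlogκ : κ ≤ κ * Real.log n ^ 2 := le_mul_of_one_le_right (by positivity) (one_le_pow₀ hlog)
  rcases le_or_gt |productMoment x w 3 / n| 1 with hl | hl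
  · have hsmall := h.norm_twistedExpect_one_sub_edgeworthCharFun_le
    simp only [Fintype.card_fin, ← charFun_uniformLaw_linearRank] at hsmall hdecay
    have hlogn : Real.log n / n ≤ κ * Real.log n ^ 2 := by
      calc Real.log n / n = 1 / n * Real.log n := by ring
        _ ≤ κ * Real.log n ^ 2 := by
          gcongr
          exact le_self_pow₀ hlog two_ne_zero
    have hκlog : 0 ≤ Real.log n ^ 2 * κ := by positivity
    calc _ ≤ C * (1101 * κ * Real.log n ^ 2 + Real.log n / n) :=
          hexpansion _ (integrable_uniformLaw _ _) _ _ hl (by positivity) hsmall hdecay z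
      _ ≤ C * (1101 * κ * Real.log n ^ 2 + κ * Real.log n ^ 2) := by gcongr
      _ ≤ (1102 * C + 2) * Real.log n ^ 2 * κ := by linarith
  · have hPκ : productMoment x w 4 / n ≤ κ := by
      rw [div_le_div_iff_of_pos_right hn₀]
      linarith
    rw [← sq_abs] at hskew
    have hCκ : 0 ≤ C * (κ * Real.log n ^ 2) := by positivity
    calc _ ≤ 1 + |productMoment x w 3 / n| := abs_cdf_sub_edgeworthCDF_le_one_add _ _ z
      _ ≤ 2 * |productMoment x w 3 / n| ^ 2 := by nlinarith
      _ ≤ 2 * (κ * Real.log n ^ 2) := by linarith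
      _ ≤ (1102 * C + 2) * Real.log n ^ 2 * κ := by linarith

end StandardizedExpansion

/-! ### Rank statistics of rank-one matrices -/

section RankOne

open ProbabilityTheory Matrix

variable {n : ℕ} (u d : Fin n → ℝ)

/-- The centered scores `d` divided by the standard deviation of the rank statistic of the matrix
with entries `u i * d j`. -/
noncomputable def standardizedScores (j : Fin n) : ℝ := centered d j / sdev (vecMulVec u d)

lemma ctr_vecMulVec (i j : Fin n) : ctr (vecMulVec u d) i j = centered u i * centered d j := by
  have hn : (n : ℝ) ≠ 0 := Nat.cast_ne_zero.2 i.pos.ne'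
  simp only [ctr, rowMean, colMean, totMean, centered, vecMulVec_apply, ← mul_sum, ← sum_mul,
    Fintype.card_fin]
  field_simp
  ring

lemma sigma2_vecMulVec : sigma2 (vecMulVec u d) =
    productMoment (centered u) (centered d) 2 / (n - 1) := by
  simp only [sigma2, ctr_vecMulVec, mul_pow, ← mul_sum, ← sum_mul, productMoment]

lemma rankTstd_vecMulVec (π : Equiv.Perm (Fin n)) : rankTstd (vecMulVec u d) π =
    linearRank (centered u) (standardizedScores u d) π := by
  obtain rfl | hn := n.eq_zero_or_pos
  · simp [rankTstd, rankT, muM, linearRank]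
  have hn₀ : (n : ℝ) ≠ 0 := Nat.cast_ne_zero.2 hn.ne'
  have hshift : ∑ i, centered u i * centered d (π i) =
      ∑ i, u i * d (π i) - (∑ i, u i) / n * ∑ i, d (π i) := by
    calc ∑ i, centered u i * centered d (π i)
        = ∑ i, (u i * d (π i) - (∑ i, u i) / n * d (π i) - centered u i * ((∑ i, d i) / n)) :=
          sum_congr rfl fun i _ => by
            simp only [centered, Fintype.card_fin]
            ring
      _ = _ := by
        rw [sum_sub_distrib, sum_sub_distrib, ← mul_sum, ← sum_mul, sum_centered_eq_zero, zero_mul,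
          sub_zero]
  simp only [linearRank, standardizedScores, ← mul_div_assoc, ← sum_div]
  rw [hshift, Equiv.sum_comp π d, rankTstd, rankT, muM, totMean]
  simp only [vecMulVec_apply, ← mul_sum, ← sum_mul]
  congr 2
  field_simp

lemma lam1_vecMulVec : lam1 (vecMulVec u d) =
    productMoment (centered u) (standardizedScores u d) 3 / n := by
  simp only [lam1, hatM, ctr_vecMulVec, mul_div_assoc, mul_pow, ← mul_sum, ← sum_mul,
    productMoment, standardizedScores]

lemma Fstd_vecMulVec (z : ℝ) : Fstd (vecMulVec u d) z =
    cdf (uniformLaw (linearRank (centered u) (standardizedScores u d))) z := by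
  simp only [cdf_uniformLaw, Fstd, permExp, rankTstd_vecMulVec, Fintype.card_perm, Fintype.card_fin]

lemma Fstd_sub_edge1_vecMulVec (z : ℝ) :
    Fstd (vecMulVec u d) z - edge1 (vecMulVec u d) z =
      cdf (uniformLaw (linearRank (centered u) (standardizedScores u d))) z
        - edgeworthCDF (productMoment (centered u) (standardizedScores u d) 3 / n) z := by
  rw [Fstd_vecMulVec, edge1_eq_edgeworthCDF, lam1_vecMulVec]

variable {u d}

lemma sq_sdev_vecMulVec (hn : 1 < n) : sdev (vecMulVec u d) ^ 2 * (n - 1) =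
    productMoment (centered u) (centered d) 2 := by
  have hn₁ : (0 : ℝ) < n - 1 := sub_pos.2 (Nat.one_lt_cast.2 hn)
  have hP := productMoment_nonneg_of_even (centered u) (centered d) even_two
  rw [sdev, sigma2_vecMulVec, Real.sq_sqrt (by positivity), div_mul_cancel₀ _ hn₁.ne']

lemma productMoment_standardizedScores (x : Fin n → ℝ) (p : ℕ) :
    productMoment x (standardizedScores u d) p =
      productMoment x (centered d) p / sdev (vecMulVec u d) ^ p := by
  simp only [productMoment, standardizedScores, div_pow, ← sum_div, mul_div_assoc]

lemma isStandardizedPair_centered_standardizedScores (hn : 1 < n)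
    (hσ : 0 < sdev (vecMulVec u d)) :
    IsStandardizedPair (centered u) (standardizedScores u d) where
  sum_left := sum_centered_eq_zero u
  sum_right := by
    simp only [standardizedScores, ← sum_div, sum_centered_eq_zero, zero_div]
  productMoment_two := by
    rw [productMoment_standardizedScores, ← sq_sdev_vecMulVec hn,
      mul_div_cancel_left₀ _ (by positivity), Fintype.card_fin]

lemma sum_pow_four_le_sq_sum_sq {ι : Type*} [Fintype ι] (y : ι → ℝ) :
    ∑ i, y i ^ 4 ≤ (∑ i, y i ^ 2) ^ 2 := by
  simpa only [← pow_mul, Nat.reduceMul] using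
    sum_sq_le_sq_sum_of_nonneg fun i (_ : i ∈ univ) => sq_nonneg (y i)

lemma productMoment_four_le_sq {ι : Type*} [Fintype ι] (x w : ι → ℝ) :
    productMoment x w 4 ≤ productMoment x w 2 ^ 2 := by
  rw [productMoment, productMoment, mul_pow]
  gcongr <;> exact sum_pow_four_le_sq_sum_sq _

lemma abs_lam1_vecMulVec_le (hn : 1 < n) : |lam1 (vecMulVec u d)| ≤ n := by
  rw [lam1_vecMulVec]
  rcases (Real.sqrt_nonneg (sigma2 (vecMulVec u d))).eq_or_lt with hσ | hσ
  · rw [productMoment_standardizedScores, sdev, ← hσ]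
    simp
  have h := isStandardizedPair_centered_standardizedScores hn hσ
  have : Nonempty (Fin n) := ⟨0, by lia⟩
  have hn₁ : (1 : ℝ) < n := Nat.one_lt_cast.2 hn
  have hfour := productMoment_four_le_sq (centered u) (standardizedScores u d)
  have hthree := h.sq_productMoment_three_div_card_le
  rw [h.productMoment_two] at hfour
  rw [Fintype.card_fin] at hfour hthree
  refine abs_le_of_sq_le_sq (hthree.trans ?_) (by positivity)
  rw [div_le_iff₀ (by positivity)]
  nlinarith

end RankOne

/-! ### Moment growth of coefficients and scores -/

section MomentGrowth

open Filter Matrix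

/-- The family `y` has second moment between `c` and `C`, and fourth moment growing at most like the
power `a` of the number of its members. -/
structure HasMomentGrowth {ι : Type*} [Fintype ι] (y : ι → ℝ) (c C a : ℝ) : Prop where
  le_sum_sq : c * Fintype.card ι ≤ ∑ i, y i ^ 2
  sum_sq_le : ∑ i, y i ^ 2 ≤ C * Fintype.card ι
  sum_pow_four_le : ∑ i, y i ^ 4 ≤ C * (Fintype.card ι : ℝ) ^ (1 + a)

section AbsMoments

variable {ι : Type*} [Fintype ι] {y : ι → ℝ} {p C : ℝ}

lemma sum_sq_le_of_sum_abs_rpow_le (hp : 2 ≤ p) (h : ∑ i, |y i| ^ p ≤ C * Fintype.card ι) :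
    ∑ i, y i ^ 2 ≤ (1 + C) * Fintype.card ι := by
  simpa only [Real.rpow_two, sq_abs] using
    sum_rpow_le_of_exponent_le (fun i => abs_nonneg (y i)) zero_le_two hp h

lemma sum_pow_four_le_of_sum_abs_rpow_le (hp : 0 < p) (hC : 0 ≤ C)
    (h : ∑ i, |y i| ^ p ≤ C * Fintype.card ι) :
    ∑ i, y i ^ 4 ≤ (1 + C + C ^ (4 / p)) * (Fintype.card ι : ℝ) ^ (1 + max (4 / p - 1) 0) := by
  have hfour : ∀ i, |y i| ^ (4 : ℝ) = y i ^ 4 := fun i => by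
    rw [← Even.pow_abs (by decide : Even 4), ← Real.rpow_natCast]
    norm_num
  simpa only [hfour] using
    sum_rpow_le_mul_card_rpow (fun i => abs_nonneg (y i)) hp zero_le_four hC h

lemma sq_mul_card_le_sum_sq {c : ℝ} (hc : 0 ≤ c) (h : c * Fintype.card ι ≤ ∑ i, |y i|) :
    c ^ 2 * Fintype.card ι ≤ ∑ i, y i ^ 2 := by
  cases isEmpty_or_nonempty ι
  · simp
  have hcard : (0 : ℝ) < Fintype.card ι := Nat.cast_pos.2 Fintype.card_pos
  refine le_of_mul_le_mul_left ?_ hcard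
  calc Fintype.card ι * (c ^ 2 * Fintype.card ι) = (c * Fintype.card ι) ^ 2 := by ring
    _ ≤ (∑ i, |y i|) ^ 2 := by gcongr
    _ ≤ Fintype.card ι * ∑ i, y i ^ 2 := by
      simpa only [sq_abs, card_univ] using
        sq_sum_le_card_mul_sum_sq (s := univ) (f := fun i => |y i|)

end AbsMoments

lemma exists_hasMomentGrowth {e E r k : ℝ} (he : 0 < e) (hE : 0 < E) (hr : 0 < r) (hrk : r < k)
    (hk : 2 ≤ k) : ∃ c C : ℝ, 0 < c ∧ 0 < C ∧ ∀ {ι : Type*} [Fintype ι] {y : ι → ℝ},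
      e * Fintype.card ι ≤ ∑ i, |y i| ^ r → ∑ i, |y i| ^ k ≤ E * Fintype.card ι →
        c * Fintype.card ι ≤ ∑ i, |y i| ∧ HasMomentGrowth y (c ^ 2) C (max (4 / k - 1) 0) := by
  obtain ⟨c, hc, hmean⟩ := exists_mul_card_le_sum he hE hr hrk
  refine ⟨c, 1 + E + E ^ (4 / k), hc, by positivity, fun {ι _ y} hlow hup => ?_⟩
  have habs := hmean (fun i => abs_nonneg (y i)) hlow hup
  refine ⟨habs, sq_mul_card_le_sum_sq hc.le habs, ?_,
    sum_pow_four_le_of_sum_abs_rpow_le (by linarith) hE.le hup⟩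
  refine (sum_sq_le_of_sum_abs_rpow_le hk hup).trans ?_
  gcongr ?_ * _
  exact le_add_of_nonneg_right (by positivity)

lemma exists_hasMomentGrowth_centered_approxScore {J : ℝ → ℝ} {α s t₁ t₂ : ℝ} (hV : condV J α)
    (hα : 0 < α) (hs : 2 ≤ s) (hαs : α < 1 / s) (hJ : ContDiffOn ℝ 1 J (Set.Ioo 0 1))
    (ht₁ : t₁ ∈ Set.Ioo (0 : ℝ) 1) (ht₂ : t₂ ∈ Set.Ioo (0 : ℝ) 1) (hne : J t₁ ≠ J t₂) :
    ∃ c C : ℝ, 0 < c ∧ 0 < C ∧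
      ∀ᶠ n in atTop, HasMomentGrowth (centered (approxScore J n)) c C (max (4 / s - 1) 0) := by
  have hs₀ : 0 < s := by linarith
  obtain ⟨c, hc, N, hlow⟩ := exists_mul_le_sum_approxScore_sub_sq hJ ht₁ ht₂ hne
  obtain ⟨C, hC, hup⟩ := hV.exists_sum_abs_approxScore_sub_rpow_le hα hs₀.le
    ((lt_div_iff₀ hs₀).1 hαs) (hJ.differentiableOn one_ne_zero)
  refine ⟨c, 16 * (1 + C + C ^ (4 / s)), hc, by positivity, ?_⟩
  filter_upwards [eventually_ge_atTop N] with n hn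
  have hup_card : ∑ j, |approxScore J n j - J (1 / 2)| ^ s ≤ C * Fintype.card (Fin n) := by
    simpa only [Fintype.card_fin] using hup n
  refine ⟨by simpa only [Fintype.card_fin] using! hlow n hn _, ?_, ?_⟩
  · refine (sum_centered_sq_le _ (J (1 / 2))).trans
      ((sum_sq_le_of_sum_abs_rpow_le hs hup_card).trans ?_)
    gcongr ?_ * _
    linarith [Real.rpow_nonneg hC.le (4 / s)]
  · rw [mul_assoc]
    refine (sum_centered_pow_four_le _ (J (1 / 2))).trans ?_
    gcongr
    exact sum_pow_four_le_of_sum_abs_rpow_le hs₀ hC.le hup_card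

variable {n : ℕ} {u d : Fin n → ℝ} {c₁ C₁ a c₂ C₂ b : ℝ}

lemma mul_le_sq_sdev_vecMulVec (hn : 1 < n) (hu : HasMomentGrowth (centered u) c₁ C₁ a)
    (hd : HasMomentGrowth (centered d) c₂ C₂ b) (hc₁ : 0 ≤ c₁) (hc₂ : 0 ≤ c₂) :
    c₁ * c₂ * n ≤ sdev (vecMulVec u d) ^ 2 := by
  have hn₁ : (0 : ℝ) < n - 1 := sub_pos.2 (Nat.one_lt_cast.2 hn)
  have hlow₁ := hu.le_sum_sq
  have hlow₂ := hd.le_sum_sq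
  rw [Fintype.card_fin] at hlow₁ hlow₂
  refine le_of_mul_le_mul_right ?_ hn₁
  calc c₁ * c₂ * n * (n - 1) ≤ c₁ * c₂ * n * n := by gcongr; linarith
    _ = c₁ * n * (c₂ * n) := by ring
    _ ≤ productMoment (centered u) (centered d) 2 := by rw [productMoment]; gcongr
    _ = sdev (vecMulVec u d) ^ 2 * (n - 1) := (sq_sdev_vecMulVec hn).symm

lemma sq_sdev_vecMulVec_le (hn : 1 < n) (hu : HasMomentGrowth (centered u) c₁ C₁ a)
    (hd : HasMomentGrowth (centered d) c₂ C₂ b) (hC₁ : 0 ≤ C₁) (hC₂ : 0 ≤ C₂) :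
    sdev (vecMulVec u d) ^ 2 ≤ 2 * (C₁ * C₂) * n := by
  have hn₁ : (0 : ℝ) < n - 1 := sub_pos.2 (Nat.one_lt_cast.2 hn)
  have hn₂ : (2 : ℝ) ≤ n := Nat.ofNat_le_cast.2 hn
  have hup₁ := hu.sum_sq_le
  have hup₂ := hd.sum_sq_le
  rw [Fintype.card_fin] at hup₁ hup₂
  refine le_of_mul_le_mul_right ?_ hn₁
  calc sdev (vecMulVec u d) ^ 2 * (n - 1) = productMoment (centered u) (centered d) 2 :=
        sq_sdev_vecMulVec hn
    _ ≤ C₁ * n * (C₂ * n) := by rw [productMoment]; gcongr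
    _ = C₁ * C₂ * n * n := by ring
    _ ≤ C₁ * C₂ * n * (2 * (n - 1)) := by gcongr; linarith
    _ = 2 * (C₁ * C₂) * n * (n - 1) := by ring

lemma productMoment_four_add_one_div_le (hn : 1 < n) (hu : HasMomentGrowth (centered u) c₁ C₁ a)
    (hd : HasMomentGrowth (centered d) c₂ C₂ b) (hc₁ : 0 < c₁) (hc₂ : 0 < c₂) (hC₁ : 0 ≤ C₁)
    (hC₂ : 0 ≤ C₂) (ha : 0 ≤ a) (hb : 0 ≤ b) :
    (productMoment (centered u) (standardizedScores u d) 4 + 1) / n ≤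
      (C₁ * C₂ / (c₁ * c₂) ^ 2 + 1) * (n : ℝ) ^ (-1 + a + b) := by
  have hn₀ : (0 : ℝ) < n := by positivity
  have hup₁ := hu.sum_pow_four_le
  have hup₂ := hd.sum_pow_four_le
  rw [Fintype.card_fin] at hup₁ hup₂
  have hpow : ((n : ℝ) ^ (1 + a)) * (n : ℝ) ^ (1 + b) = (n : ℝ) ^ 2 * (n : ℝ) ^ (a + b) := by
    rw [← Real.rpow_add hn₀, ← Real.rpow_natCast, ← Real.rpow_add hn₀]
    congr 1
    push_cast
    ring
  have hfour : productMoment (centered u) (standardizedScores u d) 4 ≤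
      C₁ * C₂ / (c₁ * c₂) ^ 2 * (n : ℝ) ^ (a + b) := by
    rw [productMoment_standardizedScores, productMoment,
      show sdev (vecMulVec u d) ^ 4 = (sdev (vecMulVec u d) ^ 2) ^ 2 by ring]
    calc _ ≤ C₁ * (n : ℝ) ^ (1 + a) * (C₂ * (n : ℝ) ^ (1 + b)) / (c₁ * c₂ * n) ^ 2 := by
          gcongr
          exact mul_le_sq_sdev_vecMulVec hn hu hd hc₁.le hc₂.le
      _ = C₁ * C₂ * ((n : ℝ) ^ (1 + a) * (n : ℝ) ^ (1 + b)) / (c₁ * c₂ * n) ^ 2 := by ring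
      _ = C₁ * C₂ / (c₁ * c₂) ^ 2 * (n : ℝ) ^ (a + b) := by rw [hpow]; field_simp
  have hone : 1 ≤ (n : ℝ) ^ (a + b) :=
    Real.one_le_rpow (Nat.one_le_cast.2 hn.le) (add_nonneg ha hb)
  rw [add_assoc, Real.rpow_add hn₀, Real.rpow_neg_one, div_le_iff₀' hn₀]
  calc productMoment (centered u) (standardizedScores u d) 4 + 1
      ≤ C₁ * C₂ / (c₁ * c₂) ^ 2 * (n : ℝ) ^ (a + b) + (n : ℝ) ^ (a + b) := add_le_add hfour hone
    _ = n * ((C₁ * C₂ / (c₁ * c₂) ^ 2 + 1) * ((n : ℝ)⁻¹ * (n : ℝ) ^ (a + b))) := by field_simp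

end MomentGrowth

/-! ### The expansion -/

section Expansion

open Filter Matrix

lemma exists_eventually_abs_Fstd_sub_edge1_le {J : ℝ → ℝ} {t₁ t₂ c₀ c₁ C₁ a c₂ C₂ b : ℝ}
    (hJ : ContDiffOn ℝ 1 J (Set.Ioo 0 1)) (ht₁ : t₁ ∈ Set.Ioo (0 : ℝ) 1)
    (ht₂ : t₂ ∈ Set.Ioo (0 : ℝ) 1) (hne : J t₁ ≠ J t₂) (hc₀ : 0 < c₀) (hc₁ : 0 < c₁) (hC₁ : 0 < C₁)
    (hc₂ : 0 < c₂) (hC₂ : 0 < C₂) (ha : 0 ≤ a) (hb : 0 ≤ b)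
    (hscores : ∀ᶠ n in atTop, HasMomentGrowth (centered (approxScore J n)) c₂ C₂ b) :
    ∃ C : ℝ, 0 < C ∧ ∀ᶠ n : ℕ in atTop, ∀ u : Fin n → ℝ, c₀ * n ≤ ∑ i, |centered u i| →
      HasMomentGrowth (centered u) c₁ C₁ a → ∀ z,
        |Fstd (vecMulVec u (approxScore J n)) z - edge1 (vecMulVec u (approxScore J n)) z| ≤
          C * Real.log n ^ 2 * (n : ℝ) ^ (-1 + a + b) := by
  obtain ⟨γ, hγ, N, hdecay⟩ := exists_norm_twistedExpect_one_le_exp hJ ht₁ ht₂ hne hc₀ hC₁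
    (sl := c₁ * c₂) (su := 2 * (C₁ * C₂)) (by positivity) (by positivity)
  obtain ⟨C, hC, hexpansion⟩ := exists_abs_cdf_linearRank_sub_edgeworthCDF_le hγ
  refine ⟨C * (C₁ * C₂ / (c₁ * c₂) ^ 2 + 1), by positivity, ?_⟩
  filter_upwards [hscores, hexpansion, eventually_ge_atTop N, eventually_gt_atTop 1]
    with n hd hexpansion hN hn u habs hu z
  set d := approxScore J n
  have hσ_low := mul_le_sq_sdev_vecMulVec hn hu hd hc₁.le hc₂.le
  have hσ : 0 < sdev (vecMulVec u d) := by
    have : 0 < sdev (vecMulVec u d) ^ 2 := lt_of_lt_of_le (by positivity) hσ_low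
    exact (Real.sqrt_nonneg _).lt_of_ne' (pow_ne_zero_iff two_ne_zero |>.1 this.ne')
  have hsq := hu.sum_sq_le
  rw [Fintype.card_fin] at hsq
  rw [Fstd_sub_edge1_vecMulVec]
  calc _ ≤ C * Real.log n ^ 2 *
          ((productMoment (centered u) (standardizedScores u d) 4 + 1) / n) :=
        hexpansion _ _ (isStandardizedPair_centered_standardizedScores hn hσ)
          (hdecay n hN _ (sum_centered_eq_zero u) habs hsq _ hσ hσ_low
            (sq_sdev_vecMulVec_le hn hu hd hC₁.le hC₂.le) _) z
    _ ≤ C * Real.log n ^ 2 * ((C₁ * C₂ / (c₁ * c₂) ^ 2 + 1) * (n : ℝ) ^ (-1 + a + b)) := by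
        gcongr
        exact productMoment_four_add_one_div_le hn hu hd hc₁ hc₂ hC₁.le hC₂.le ha hb
    _ = C * (C₁ * C₂ / (c₁ * c₂) ^ 2 + 1) * Real.log n ^ 2 * (n : ℝ) ^ (-1 + a + b) := by ring

lemma abs_Fstd_sub_edge1_vecMulVec_le {n : ℕ} (hn : 1 < n) (u d : Fin n → ℝ) (z : ℝ) :
    |Fstd (vecMulVec u d) z - edge1 (vecMulVec u d) z| ≤ 1 + n := by
  rw [Fstd_sub_edge1_vecMulVec, ← lam1_vecMulVec]
  exact (abs_cdf_sub_edgeworthCDF_le_one_add _ _ z).trans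
    (add_le_add_right (abs_lam1_vecMulVec_le hn) 1)

lemma exists_abs_Fstd_sub_edge1_vecMulVec_le_of_lt (N : ℕ) {a b : ℝ} (ha : 0 ≤ a) (hb : 0 ≤ b) :
    ∃ C : ℝ, 0 < C ∧ ∀ n : ℕ, 1 < n → n < N → ∀ (u d : Fin n → ℝ) (z : ℝ),
      |Fstd (vecMulVec u d) z - edge1 (vecMulVec u d) z| ≤
        C * Real.log n ^ 2 * (n : ℝ) ^ (-1 + a + b) := by
  have : 0 < Real.log 2 := Real.log_pos one_lt_two
  refine ⟨(1 + N) ^ 2 / Real.log 2 ^ 2, by positivity, fun n hn hnN u d z => ?_⟩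
  have hn₁ : (1 : ℝ) ≤ n := Nat.one_le_cast.2 hn.le
  have hn₂ : (2 : ℝ) ≤ n := Nat.ofNat_le_cast.2 hn
  have hnN' : (n : ℝ) ≤ N := Nat.cast_le.2 hnN.le
  have hpow : ((1 : ℝ) + N)⁻¹ ≤ (n : ℝ) ^ (-1 + a + b) :=
    calc ((1 : ℝ) + N)⁻¹ ≤ (n : ℝ)⁻¹ := by gcongr; linarith
      _ = (n : ℝ) ^ (-1 : ℝ) := (Real.rpow_neg_one _).symm
      _ ≤ (n : ℝ) ^ (-1 + a + b) := Real.rpow_le_rpow_of_exponent_le hn₁ (by linarith)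
  calc _ ≤ 1 + (n : ℝ) := abs_Fstd_sub_edge1_vecMulVec_le hn u d z
    _ ≤ 1 + N := by gcongr
    _ = (1 + N) ^ 2 / Real.log 2 ^ 2 * Real.log 2 ^ 2 * (1 + N : ℝ)⁻¹ := by field_simp
    _ ≤ (1 + N) ^ 2 / Real.log 2 ^ 2 * Real.log n ^ 2 * (n : ℝ) ^ (-1 + a + b) := by gcongr

end Expansion

theorem approximating_scores_first_order_edgeworth_general
    (J : ℝ → ℝ) (α s : ℝ) (hs : 2 ≤ s) (hα : 0 < α) (hαs : α < 1 / s)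
    (hJnc : ∃ t₁ ∈ Set.Ioo (0 : ℝ) 1, ∃ t₂ ∈ Set.Ioo (0 : ℝ) 1, J t₁ ≠ J t₂)
    (hJcd : ContDiffOn ℝ 1 J (Set.Ioo (0 : ℝ) 1))
    (hV : condV J α)
    (e E r k : ℝ) (he : 0 < e) (hE : 0 < E) (hk : 2 ≤ k) (hr : 0 < r) (hrk : r < k) :
    ∃ E5 : ℝ, 0 < E5 ∧
      ∀ n : ℕ, nOne J < n → ∀ ev : Fin n → ℝ,
        e * (n : ℝ) ≤ (∑ i, |ev i - (∑ i', ev i') / (n : ℝ)| ^ r) →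
        (∑ i, |ev i - (∑ i', ev i') / (n : ℝ)| ^ k) ≤ E * (n : ℝ) →
        ∀ A : Matrix (Fin n) (Fin n) ℝ,
          (∀ i j : Fin n, A i j = ev i * J (((j : ℕ) + 1 : ℝ) / ((n : ℝ) + 1))) →
          ∀ z : ℝ, |Fstd A z - edge1 A z| ≤
            E5 * Real.log n ^ 2 *
              (n : ℝ) ^ (-1 + max (4 / k - 1) 0 + max (4 / s - 1) 0) := by
  obtain ⟨t₁, ht₁, t₂, ht₂, hne⟩ := hJnc
  obtain ⟨c₁, C₁, hc₁, hC₁, hcoeffs⟩ := exists_hasMomentGrowth he hE hr hrk hk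
  obtain ⟨c₂, C₂, hc₂, hC₂, hscores⟩ :=
    exists_hasMomentGrowth_centered_approxScore hV hα hs hαs hJcd ht₁ ht₂ hne
  obtain ⟨C, hC, hlarge⟩ := exists_eventually_abs_Fstd_sub_edge1_le hJcd ht₁ ht₂ hne hc₁
    (pow_pos hc₁ 2) hC₁ hc₂ hC₂ (le_max_right (4 / k - 1) 0) (le_max_right (4 / s - 1) 0) hscores
  obtain ⟨N, hN⟩ := Filter.eventually_atTop.1 hlarge
  obtain ⟨C', -, hsmall⟩ := exists_abs_Fstd_sub_edge1_vecMulVec_le_of_lt N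
    (le_max_right (4 / k - 1) 0) (le_max_right (4 / s - 1) 0)
  refine ⟨max C C', lt_max_of_lt_left hC, fun n hn ev hlow hup A hA z => ?_⟩
  obtain rfl : A = Matrix.vecMulVec ev (approxScore J n) := Matrix.ext hA
  have hn₁ : 1 < n := (one_le_nOne hJcd ht₁ ht₂ hne).trans_lt hn
  rw [mul_assoc]
  rcases lt_or_ge n N with hnN | hnN
  · refine (hsmall n hn₁ hnN ev _ z).trans ?_
    rw [mul_assoc]
    gcongr
    exact le_max_right C C'
  · have hcard : Fintype.card (Fin n) = n := Fintype.card_fin n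
    have hev := hcoeffs (y := centered ev) (by simpa only [centered, hcard])
      (by simpa only [centered, hcard])
    rw [hcard] at hev
    refine (hN n hnN ev hev.1 hev.2 z).trans ?_
    rw [mul_assoc]
    gcongr
    exact le_max_left C C'

/-- first-order Edgeworth expansion for simple linear rank statistics with
approximating scores `d_j = J(j/(n+1))`, under condition `V_α` on `J`. -/
theorem approximating_scores_first_order_edgeworth
    (J : ℝ → ℝ) (α : ℝ) (s : ℕ) (hs : 3 ≤ s) (hα : 0 < α) (hαs : α < 1 / (s : ℝ))
    (hJnc : ∃ t₁ ∈ Set.Ioo (0 : ℝ) 1, ∃ t₂ ∈ Set.Ioo (0 : ℝ) 1, J t₁ ≠ J t₂)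
    (hJcd : ContDiffOn ℝ 1 J (Set.Ioo (0 : ℝ) 1))
    (hV : condV J α)
    (e E r k : ℝ) (he : 0 < e) (hE : 0 < E) (hk : 2 < k) (hr : 0 < r) (hrk : r < k) :
    ∃ E5 : ℝ, 0 < E5 ∧
      ∀ n : ℕ, nOne J < n → ∀ ev : Fin n → ℝ,
        e * (n : ℝ) ≤ (∑ i, |ev i - (∑ i', ev i') / (n : ℝ)| ^ r) →
        (∑ i, |ev i - (∑ i', ev i') / (n : ℝ)| ^ k) ≤ E * (n : ℝ) →
        ∀ A : Matrix (Fin n) (Fin n) ℝ,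
          (∀ i j : Fin n, A i j = ev i * J (((j : ℕ) + 1 : ℝ) / ((n : ℝ) + 1))) →
          ∀ z : ℝ, |Fstd A z - edge1 A z| ≤
            E5 * Real.log n ^ 2 *
              (n : ℝ) ^ (-1 + max (4 / k - 1) 0 + max (4 / (s : ℝ) - 1) 0) := by
  exact approximating_scores_first_order_edgeworth_general J α s (by norm_cast; lia) hα hαs hJnc
    hJcd hV e E r k he hE hk.le hr hrk
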